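/- arXiv:0811.2806 — 2 statements merged into one kernel-verified Lean document; each statement's English description precedes it below -/
import Mathlib

section
/- (Logarithm law for unipotent flows) Let n ≥ 2, let {u_t} be a one-parameter unipotent subgroup of SL(n,ℝ), and let α₁(Λ) = sup_{0≠v∈Λ} 1/‖v‖. Then for Haar-almost every unimodular lattice Λ ∈ X_n, limsup_{t→∞} log α₁(u_t Λ) / log t = 1/n. -/
open MeasureTheory Filter Matrix Real ENNReal

noncomputable section

/-- `SL(n, ℝ)`. -/
abbrev SLR (n : ℕ) := Matrix.SpecialLinearGroup (Fin n) ℝ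

instance (n : ℕ) : TopologicalSpace (SLR n) :=
  TopologicalSpace.induced (fun g => (g : Matrix (Fin n) (Fin n) ℝ)) inferInstance

/-- The image of `SL(n, ℤ)` in `SL(n, ℝ)`. -/
def latticeGamma (n : ℕ) : Subgroup (SLR n) :=
  (Matrix.SpecialLinearGroup.map (n := Fin n) (Int.castRingHom ℝ)).range

/-- The space of unimodular lattices `X_n = SL(n,ℝ)/SL(n,ℤ)`. -/
abbrev LatticeSpace (n : ℕ) := SLR n ⧸ latticeGamma n

instance (n : ℕ) : MeasurableSpace (LatticeSpace n) := borel _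

/-- The real vector `g · m` of the lattice `g ℤⁿ` coming from the integer vector `m`. -/
def vecOf (n : ℕ) (g : SLR n) (m : Fin n → ℤ) : Fin n → ℝ :=
  (g : Matrix (Fin n) (Fin n) ℝ).mulVec (fun i => (m i : ℝ))

/-- Euclidean norm on `Fin n → ℝ`. -/
def eNorm {n : ℕ} (v : Fin n → ℝ) : ℝ := ‖(WithLp.equiv 2 (Fin n → ℝ)).symm v‖

/-- The lattice `Λ` contains a nonzero vector lying in `A`. -/
def Intersects (n : ℕ) (Λ : LatticeSpace n) (A : Set (Fin n → ℝ)) : Prop :=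
  ∀ g : SLR n, (QuotientGroup.mk g : LatticeSpace n) = Λ →
    ∃ m : Fin n → ℤ, m ≠ 0 ∧ vecOf n g m ∈ A

/-- `α₁(Λ) = sup_{0 ≠ v ∈ Λ} 1/‖v‖` (Euclidean norm). -/
def alpha1 (n : ℕ) (Λ : LatticeSpace n) : ℝ :=
  sSup {r : ℝ | ∃ g : SLR n, (QuotientGroup.mk g : LatticeSpace n) = Λ ∧
    ∃ m : Fin n → ℤ, m ≠ 0 ∧ r = 1 / eNorm (vecOf n g m)}

/-! A *frame* `A` of `ℝⁿ` spans the lattice of the vectors `∑ j, m j • A j`, `m ∈ ℤⁿ`. For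
`p = u t₀ ≠ 1`, consider the condition that for infinitely many `k` this lattice has a nonzero
vector which `p ^ k` brings to norm `O(k ^ s)`.

For `s < -1/n`, the preimage under `p ^ k` of a ball of radius of order `k ^ s` has volume
`O(k ^ (n s))`, which is summable, and by a union bound and Borel-Cantelli almost no frame has the
property. For `s > -1/n`, fix a suitable set `W` of positive volume and consider the union of the
sets `p ^ (-k) (k ^ s W)` over `T ≤ k < 2T`. Polynomial growth of the unipotent orbits makes them
disjoint, and the volume of the union is of order `T ^ (1 + n s)`, a positive power of `T`. The
second moment of the number of points of a random lattice in such a region is controlled as in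
Rogers' formula, for frames near the identity: independent pairs of integer vectors contribute the
square of the volume, and collinear pairs at most a power of `log T`. Hence the region is hit with
probability bounded below, and the property holds on a set of frames of positive measure. As it is
invariant under the dense group `GL(n, ℚ)`, a Steinhaus argument shows that this set has full
measure.

Both facts carry over to almost every lattice `Λ` by Fubini, averaging over the translates `g Λ`
with `g` the normalization of a random frame, since the translations preserve the null sets of
`X_n`. -/

section StripCount

theorem abs_intCast_le_iff_mem_Icc {k : ℤ} {R : ℝ} :
    |(k : ℝ)| ≤ R ↔ k ∈ Finset.Icc (-⌊R⌋) ⌊R⌋ := by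
  rw [Finset.mem_Icc, ← abs_le, Int.le_floor]
  push_cast
  rfl

theorem card_Icc_neg_floor_le {R : ℝ} (hR : 1 ≤ R) :
    ((Finset.Icc (-⌊R⌋) ⌊R⌋).card : ℝ) ≤ 3 * R := by
  have hfloor : 0 ≤ ⌊R⌋ := Int.floor_nonneg.2 (by linarith)
  have hcard : ((Finset.Icc (-⌊R⌋) ⌊R⌋).card : ℤ) = 2 * ⌊R⌋ + 1 := by
    rw [Int.card_Icc, Int.toNat_of_nonneg (by linarith)]
    ring
  have hcard' : ((Finset.Icc (-⌊R⌋) ⌊R⌋).card : ℝ) = 2 * (⌊R⌋ : ℝ) + 1 := by exact_mod_cast hcard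
  linarith [Int.floor_le R]

theorem exists_card_sub_one_le_sub {s : Finset ℤ} (hs : s.Nonempty) :
    ∃ x ∈ s, ∃ y ∈ s, (s.card : ℤ) - 1 ≤ y - x := by
  refine ⟨s.min' hs, s.min'_mem hs, s.max' hs, s.max'_mem hs, ?_⟩
  have hsub : s ⊆ Finset.Icc (s.min' hs) (s.max' hs) := fun x hx =>
    Finset.mem_Icc.2 ⟨s.min'_le x hx, s.le_max' x hx⟩
  have hcard := Finset.card_le_card hsub
  rw [Int.card_Icc] at hcard
  have hle := s.min'_le _ (s.max'_mem hs)
  omega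

/-- The integer points `p` of the strip `|p.1| ≤ R`, `|p.2 - slope * p.1| ≤ ρ` about the line of
the given slope through the origin. -/
def InStrip (R ρ slope : ℝ) (p : ℤ × ℤ) : Prop :=
  |(p.1 : ℝ)| ≤ R ∧ |(p.2 : ℝ) - slope * p.1| ≤ ρ

variable {R ρ slope : ℝ} {p q w : ℤ × ℤ}

theorem exists_isCoprime_eq_zsmul (hp : p ≠ 0) :
    ∃ w : ℤ × ℤ, ∃ g : ℤ, g ≠ 0 ∧ IsCoprime w.1 w.2 ∧ p = g • w := by
  have hg : 0 < Int.gcd p.1 p.2 := by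
    rw [Int.gcd_pos_iff]
    by_contra! h
    exact hp (Prod.ext h.1 h.2)
  obtain ⟨a, b, hcop, ha, hb⟩ := Int.exists_gcd_one hg
  exact ⟨(a, b), Int.gcd p.1 p.2, by exact_mod_cast hg.ne', Int.isCoprime_iff_gcd_eq_one.2 hcop,
    Prod.ext (ha.trans (mul_comm _ _)) (hb.trans (mul_comm _ _))⟩

theorem InStrip.of_zsmul {g : ℤ} (hg : g ≠ 0) (h : InStrip R ρ slope (g • w)) :
    InStrip R ρ slope w := by
  have hg1 : (1 : ℝ) ≤ |(g : ℝ)| := by exact_mod_cast Int.one_le_abs hg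
  obtain ⟨h1, h2⟩ := h
  have e : ((g * w.2 : ℤ) : ℝ) - slope * (g * w.1 : ℤ) = g * (w.2 - slope * w.1) := by
    push_cast
    ring
  simp only [Prod.smul_fst, Prod.smul_snd, smul_eq_mul] at h1 h2
  rw [Int.cast_mul, abs_mul] at h1
  rw [e, abs_mul] at h2
  exact ⟨(le_mul_of_one_le_left (abs_nonneg _) hg1).trans h1,
    (le_mul_of_one_le_left (abs_nonneg _) hg1).trans h2⟩

theorem InStrip.abs_det_le (v : ℤ × ℤ) (hw : InStrip R ρ slope w) :
    |((v.1 * w.2 - v.2 * w.1 : ℤ) : ℝ)| ≤ |(v.1 : ℝ)| * ρ + R * |(v.2 : ℝ) - slope * v.1| := by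
  have e : ((v.1 * w.2 - v.2 * w.1 : ℤ) : ℝ) =
      v.1 * (w.2 - slope * w.1) - w.1 * (v.2 - slope * v.1) := by
    push_cast
    ring
  rw [e]
  refine (abs_sub _ _).trans ?_
  rw [abs_mul, abs_mul]
  gcongr
  · exact hw.2
  · exact hw.1

theorem exists_eq_add_zsmul_of_det_eq (hw : IsCoprime w.1 w.2)
    (h : w.1 * p.2 - w.2 * p.1 = w.1 * q.2 - w.2 * q.1) : ∃ c : ℤ, p = q + c • w := by
  obtain ⟨x, y, hxy⟩ := hw
  refine ⟨x * (p.1 - q.1) + y * (p.2 - q.2), Prod.ext ?_ ?_⟩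
  · simp only [Prod.fst_add, Prod.smul_fst, smul_eq_mul]
    linear_combination (-(p.1 - q.1)) * hxy - y * h
  · simp only [Prod.snd_add, Prod.smul_snd, smul_eq_mul]
    linear_combination (-(p.2 - q.2)) * hxy + x * h

/-- The points counted lie on one line `q + ℤ w`, so two of them differ by `c • w` with `c` at least
their number minus one; both widths of the strip bound `c`. -/
theorem card_mul_le_of_inStrip_of_det_eq {F : Finset (ℤ × ℤ)} {d : ℤ}
    (hF : ∀ p ∈ F, InStrip R ρ slope p) (hw : InStrip R ρ slope w) (hcop : IsCoprime w.1 w.2)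
    (hdet : ∀ p ∈ F, w.1 * p.2 - w.2 * p.1 = d) :
    (F.card : ℝ) * (|(w.1 : ℝ)| * ρ + R * |(w.2 : ℝ) - slope * w.1|) ≤ 6 * (R * ρ) := by
  have hR : 0 ≤ R := (abs_nonneg _).trans hw.1
  have hρ : 0 ≤ ρ := (abs_nonneg _).trans hw.2
  obtain rfl | ⟨p₀, hp₀⟩ := F.eq_empty_or_nonempty
  · simpa using mul_nonneg hR hρ
  have hline : ∀ p ∈ F, ∃ c : ℤ, p = p₀ + c • w := fun p hp =>
    exists_eq_add_zsmul_of_det_eq hcop ((hdet p hp).trans (hdet p₀ hp₀).symm)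
  choose! c hc using hline
  have hinj : Set.InjOn c F := fun p hp q hq h => by rw [hc p hp, hc q hq, h]
  obtain ⟨x, hx, y, hy, hxy⟩ :=
    exists_card_sub_one_le_sub (Finset.Nonempty.image ⟨p₀, hp₀⟩ c)
  rw [Finset.card_image_of_injOn hinj] at hxy
  obtain ⟨p, hp, rfl⟩ := Finset.mem_image.1 hx
  obtain ⟨q, hq, rfl⟩ := Finset.mem_image.1 hy
  have hfst : ∀ p ∈ F, (p.1 : ℝ) = p₀.1 + c p * w.1 := fun p hp =>
    mod_cast congrArg Prod.fst (hc p hp)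
  have hsnd : ∀ p ∈ F, (p.2 : ℝ) = p₀.2 + c p * w.2 := fun p hp =>
    mod_cast congrArg Prod.snd (hc p hp)
  have hcard : (F.card : ℝ) - 1 ≤ |(c q : ℝ) - c p| :=
    le_trans (by exact_mod_cast hxy) (le_abs_self _)
  have hwidth₁ : |(c q : ℝ) - c p| * |(w.1 : ℝ)| ≤ 2 * R := by
    have e : (q.1 : ℝ) - p.1 = (c q - c p) * w.1 := by
      linear_combination hfst q hq - hfst p hp
    rw [← abs_mul, ← e]
    exact (abs_sub _ _).trans (by linarith [(hF p hp).1, (hF q hq).1])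
  have hwidth₂ : |(c q : ℝ) - c p| * |(w.2 : ℝ) - slope * w.1| ≤ 2 * ρ := by
    have e : ((q.2 : ℝ) - slope * q.1) - (p.2 - slope * p.1) =
        (c q - c p) * (w.2 - slope * w.1) := by
      linear_combination hsnd q hq - hsnd p hp - slope * (hfst q hq - hfst p hp)
    rw [← abs_mul, ← e]
    exact (abs_sub _ _).trans (by linarith [(hF p hp).2, (hF q hq).2])
  have hbound₁ : (F.card : ℝ) * |(w.1 : ℝ)| ≤ 3 * R := by nlinarith [hw.1, abs_nonneg (w.1 : ℝ)]
  have hbound₂ : (F.card : ℝ) * |(w.2 : ℝ) - slope * w.1| ≤ 3 * ρ := by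
    nlinarith [hw.2, abs_nonneg ((w.2 : ℝ) - slope * w.1)]
  calc _ = (F.card * |(w.1 : ℝ)|) * ρ + R * (F.card * |(w.2 : ℝ) - slope * w.1|) := by ring
    _ ≤ (3 * R) * ρ + R * (3 * ρ) := by gcongr
    _ = 6 * (R * ρ) := by ring

/-- Two independent points force the strip to be so wide that the trivial bound `1 + O(R * ρ)`
loses its constant term: the determinant against a primitive point `w` of the strip takes
`O(J)` values with `1 ≤ J`, each on `O(R * ρ / J)` points. -/
theorem card_le_of_inStrip {P : Finset (ℤ × ℤ)} (hP : ∀ p ∈ P, InStrip R ρ slope p)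
    (hp : InStrip R ρ slope p) (hq : InStrip R ρ slope q) (hpq : p.1 * q.2 - p.2 * q.1 ≠ 0) :
    (P.card : ℝ) ≤ 18 * (R * ρ) := by
  obtain ⟨w, g, hg, hcop, rfl⟩ := exists_isCoprime_eq_zsmul (p := p) (by rintro rfl; simp at hpq)
  have hw := hp.of_zsmul hg
  set J := |(w.1 : ℝ)| * ρ + R * |(w.2 : ℝ) - slope * w.1|
  have hJ : 1 ≤ J := by
    refine le_trans ?_ (hq.abs_det_le w)
    have : w.1 * q.2 - w.2 * q.1 ≠ 0 := by
      contrapose! hpq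
      simp only [Prod.smul_fst, Prod.smul_snd, smul_eq_mul]
      linear_combination g * hpq
    exact_mod_cast Int.one_le_abs this
  let det : ℤ × ℤ → ℤ := fun p => w.1 * p.2 - w.2 * p.1
  have himage : ((P.image det).card : ℝ) ≤ 3 * J := by
    refine le_trans ?_ (card_Icc_neg_floor_le hJ)
    refine mod_cast Finset.card_le_card (Finset.image_subset_iff.2 fun p hp => ?_)
    exact abs_intCast_le_iff_mem_Icc.1 ((hP p hp).abs_det_le w)
  have hfiber : ∀ d ∈ P.image det, ((P.filter fun p => det p = d).card : ℝ) ≤ 6 * (R * ρ) / J :=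
    fun d _ => (le_div_iff₀ (by linarith)).2 <| card_mul_le_of_inStrip_of_det_eq
      (fun p hp => hP p (Finset.mem_filter.1 hp).1) hw hcop fun p hp => (Finset.mem_filter.1 hp).2
  have hRρ : 0 ≤ R * ρ := mul_nonneg ((abs_nonneg _).trans hw.1) ((abs_nonneg _).trans hw.2)
  calc (P.card : ℝ) = ∑ d ∈ P.image det, ((P.filter fun p => det p = d).card : ℝ) := by
        exact_mod_cast Finset.card_eq_sum_card_image det P
    _ ≤ (P.image det).card * (6 * (R * ρ) / J) := by
        rw [← nsmul_eq_mul]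
        exact Finset.sum_le_card_nsmul _ _ _ hfiber
    _ ≤ (3 * J) * (6 * (R * ρ) / J) := by gcongr
    _ = 18 * (R * ρ) := by field_simp; ring

end StripCount

section ChangeOfVariables

variable {E : Type*} [NormedAddCommGroup E] [NormedSpace ℝ E] [MeasurableSpace E] [BorelSpace E]
  [FiniteDimensional ℝ E] (μ : Measure E) [μ.IsAddHaarMeasure]

theorem lintegral_comp_smul_add {φ : E → ℝ≥0∞} (hφ : Measurable φ) {α : ℝ} (hα : α ≠ 0) (c : E) :
    ∫⁻ x, φ (α • x + c) ∂μ =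
      (ENNReal.ofReal (|α| ^ Module.finrank ℝ E))⁻¹ * ∫⁻ x, φ x ∂μ := by
  calc ∫⁻ x, φ (α • x + c) ∂μ = ∫⁻ y, φ (y + c) ∂(μ.map (α • ·)) := by
        rw [lintegral_map (f := fun y => φ (y + c)) (by fun_prop) (by fun_prop)]
    _ = ENNReal.ofReal |(α ^ Module.finrank ℝ E)⁻¹| * ∫⁻ x, φ x ∂μ := by
        rw [Measure.map_addHaar_smul _ hα, lintegral_smul_measure, lintegral_add_right_eq_self,
          smul_eq_mul]
    _ = _ := by rw [abs_inv, abs_pow, ENNReal.ofReal_inv_of_pos (by positivity)]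

variable {φ : E → E → ℝ≥0∞} {p q p' q' : ℝ}

theorem lintegral_lintegral_comp_pair_of_ne_zero (hφ : Measurable (Function.uncurry φ))
    (hp : p ≠ 0) (hΔ : p * q' - q * p' ≠ 0) (c c' : E) :
    ∫⁻ b, ∫⁻ a, φ (p • a + (q • b + c)) (p' • a + (q' • b + c')) ∂μ ∂μ =
      (ENNReal.ofReal (|p * q' - q * p'| ^ Module.finrank ℝ E))⁻¹ * ∫⁻ x, ∫⁻ y, φ x y ∂μ ∂μ := by
  set r := (p * q' - q * p') / p with hr
  have hr0 : r ≠ 0 := div_ne_zero hΔ hp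
  let c'' : E → E := fun x => (p' / p) • x - (p' / p) • c + c'
  have hinner (b : E) : ∫⁻ a, φ (p • a + (q • b + c)) (p' • a + (q' • b + c')) ∂μ =
      (ENNReal.ofReal (|p| ^ Module.finrank ℝ E))⁻¹ * ∫⁻ x, φ x (r • b + c'' x) ∂μ := by
    rw [← lintegral_comp_smul_add μ (φ := fun x => φ x (r • b + c'' x)) (by fun_prop) hp
      (q • b + c)]
    refine lintegral_congr fun a => congrArg _ ?_
    simp only [c'', hr]
    match_scalars <;> field_simp <;> ring
  have houter (x : E) : ∫⁻ b, φ x (r • b + c'' x) ∂μ =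
      (ENNReal.ofReal (|r| ^ Module.finrank ℝ E))⁻¹ * ∫⁻ y, φ x y ∂μ :=
    lintegral_comp_smul_add μ (by fun_prop) hr0 _
  simp only [hinner]
  rw [lintegral_const_mul _ (by fun_prop), lintegral_lintegral_swap (by fun_prop)]
  simp only [houter]
  rw [lintegral_const_mul _ (by fun_prop), ← mul_assoc,
    ← ENNReal.mul_inv (by simp [hp]) (by simp), ← ENNReal.ofReal_mul (by positivity),
    ← mul_pow, ← abs_mul, hr, mul_div_cancel₀ _ hp]

theorem lintegral_lintegral_comp_pair (hφ : Measurable (Function.uncurry φ))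
    (hΔ : p * q' - q * p' ≠ 0) (c c' : E) :
    ∫⁻ b, ∫⁻ a, φ (p • a + (q • b + c)) (p' • a + (q' • b + c')) ∂μ ∂μ =
      (ENNReal.ofReal (|p * q' - q * p'| ^ Module.finrank ℝ E))⁻¹ * ∫⁻ x, ∫⁻ y, φ x y ∂μ ∂μ := by
  by_cases hp : p = 0
  · have hp' : p' ≠ 0 := by
      rintro rfl
      simp [hp] at hΔ
    have hneg : p' * q - q' * p = -(p * q' - q * p') := by ring
    have hswap := lintegral_lintegral_comp_pair_of_ne_zero μ (φ := fun y x => φ x y)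
      (hφ.comp measurable_swap) hp' (hneg ▸ neg_ne_zero.2 hΔ) c' c
    rw [hswap, hneg, abs_neg, lintegral_lintegral_swap (by fun_prop)]
  · exact lintegral_lintegral_comp_pair_of_ne_zero μ hφ hp hΔ c c'

end ChangeOfVariables

theorem setLIntegral_pi_compl {ι : Type*} [Fintype ι] [DecidableEq ι] {X : ι → Type*}
    [∀ i, Nonempty (X i)] [∀ i, MeasurableSpace (X i)] {μ : ∀ i, Measure (X i)}
    [∀ i, SigmaFinite (μ i)] (C : ∀ i, Set (X i)) (s : Finset ι) {G : (∀ i, X i) → ℝ≥0∞}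
    (hG : Measurable G) {K : ℝ≥0∞} (hK : ∀ x, (∫⋯∫⁻_s, G ∂μ) x = K) :
    ∫⁻ x in Set.pi (sᶜ : Finset ι) C, G x ∂(Measure.pi μ) = (∏ i ∈ sᶜ, μ i (C i)) * K := by
  let ν : ∀ i, Measure (X i) := fun i =>
    (μ i).restrict (if i ∈ ((sᶜ : Finset ι) : Set ι) then C i else Set.univ)
  have hν : (Measure.pi μ).restrict (Set.pi (sᶜ : Finset ι) C) = Measure.pi ν := by
    rw [← Set.univ_pi_ite, Measure.restrict_pi_pi]
  have hs : ∫⋯∫⁻_s, G ∂ν = fun _ => K := by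
    funext x
    have : (fun i : s => ν i) = fun i : s => μ i := by
      funext i
      simp [ν]
    rw [← hK x, lmarginal, lmarginal, this]
  rw [hν, lintegral_eq_lmarginal_univ fun i => Classical.arbitrary (X i),
    ← Finset.union_compl s, Finset.union_comm, lmarginal_union _ _ hG disjoint_compl_left, hs,
    lmarginal, lintegral_const, mul_comm, Measure.pi_univ,
    Finset.prod_coe_sort sᶜ (fun i => ν i Set.univ)]
  congr 1
  refine Finset.prod_congr rfl fun i hi => ?_
  simp [ν, Finset.mem_compl.1 hi]

section Frames

variable {n : ℕ}

/-- A neighbourhood of the standard basis in the space of frames `A : Fin n → Fin n → ℝ` of `ℝⁿ`.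
A frame is read as the matrix with rows `A j`, so that `v ᵥ* of A = ∑ j, v j • A j`; the function
type is used because it carries the product Lebesgue measure. -/
def frameBox (n : ℕ) : Set (Fin n → Fin n → ℝ) :=
  Set.univ.pi fun j => Metric.closedBall (Pi.single j 1) (1 / (2 * n))

theorem measurableSet_frameBox (n : ℕ) : MeasurableSet (frameBox n) :=
  MeasurableSet.univ_pi fun _ => Metric.isClosed_closedBall.measurableSet

theorem volume_closedBall_le_one (j : Fin n) (x : Fin n → ℝ) :
    volume (Metric.closedBall x (1 / (2 * n))) ≤ 1 := by
  have hn : (1 : ℝ) ≤ n := by exact_mod_cast Fin.pos j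
  rw [Real.volume_pi_closedBall _ (by positivity), ENNReal.ofReal_le_one]
  refine pow_le_one₀ (by positivity) ?_
  rw [show 2 * (1 / (2 * (n : ℝ))) = 1 / n by field_simp]
  exact div_le_one_of_le₀ hn (by linarith)

@[fun_prop]
theorem measurable_vecMul_of (v : Fin n → ℝ) :
    Measurable fun A : Fin n → Fin n → ℝ => v ᵥ* of A :=
  Continuous.measurable (by fun_prop)

theorem vecMul_of_update (v : Fin n → ℝ) (A : Fin n → Fin n → ℝ) (j : Fin n) (a : Fin n → ℝ) :
    v ᵥ* of (Function.update A j a) = v j • a + v ᵥ* of (Function.update A j 0) := by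
  ext i
  simp only [vecMul, dotProduct, of_apply, Pi.add_apply, Pi.smul_apply, smul_eq_mul]
  rw [← Finset.add_sum_erase _ _ (Finset.mem_univ j),
    ← Finset.add_sum_erase _ (fun k => v k * Function.update A j 0 k i) (Finset.mem_univ j)]
  simp only [Function.update_self, Pi.zero_apply, mul_zero, zero_add]
  congr 1
  refine Finset.sum_congr rfl fun k hk => ?_
  rw [Function.update_of_ne (Finset.ne_of_mem_erase hk),
    Function.update_of_ne (Finset.ne_of_mem_erase hk)]

theorem setLIntegral_comp_vecMul (C : Fin n → Set (Fin n → ℝ)) {φ : (Fin n → ℝ) → ℝ≥0∞}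
    (hφ : Measurable φ) {v : Fin n → ℝ} {j : Fin n} (hj : v j ≠ 0) :
    ∫⁻ A in Set.pi ({j}ᶜ : Finset (Fin n)) C, φ (v ᵥ* of A) =
      (∏ k ∈ {j}ᶜ, volume (C k)) * ((ENNReal.ofReal (|v j| ^ n))⁻¹ * ∫⁻ x, φ x) := by
  refine setLIntegral_pi_compl C {j} (by fun_prop) fun A => ?_
  rw [lmarginal_singleton]
  beta_reduce
  rw [lintegral_congr fun a => congrArg φ (vecMul_of_update v A j a),
    lintegral_comp_smul_add _ hφ hj, Module.finrank_fin_fun]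

theorem setLIntegral_comp_vecMul_vecMul (C : Fin n → Set (Fin n → ℝ))
    {φ : (Fin n → ℝ) → (Fin n → ℝ) → ℝ≥0∞}
    (hφ : Measurable (Function.uncurry φ)) {v w : Fin n → ℝ} {i j : Fin n}
    (hΔ : v i * w j - v j * w i ≠ 0) :
    ∫⁻ A in Set.pi ({j, i}ᶜ : Finset (Fin n)) C, φ (v ᵥ* of A) (w ᵥ* of A) =
      (∏ k ∈ {j, i}ᶜ, volume (C k)) *
        ((ENNReal.ofReal (|v i * w j - v j * w i| ^ n))⁻¹ * ∫⁻ x, ∫⁻ y, φ x y) := by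
  have hij : i ≠ j := by
    rintro rfl
    simp at hΔ
  have hG : Measurable fun A : Fin n → Fin n → ℝ => φ (v ᵥ* of A) (w ᵥ* of A) := by fun_prop
  refine setLIntegral_pi_compl C {j, i} hG fun A => ?_
  rw [lmarginal_insert _ hG (by simpa using hij.symm)]
  simp only [lmarginal_singleton]
  have hupdate (u a b : Fin n → ℝ) :
      u ᵥ* of (Function.update (Function.update A j b) i a) =
        u i • a + (u j • b + u ᵥ* of (Function.update (Function.update A i 0) j 0)) := by
    rw [vecMul_of_update, Function.update_comm hij.symm, vecMul_of_update]
  simp only [hupdate]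
  rw [lintegral_lintegral_comp_pair _ hφ hΔ, Module.finrank_fin_fun]

theorem volume_frameBox_inter_vecMul_mem_le {v : Fin n → ℝ} {j : Fin n} (hj : v j ≠ 0)
    {E : Set (Fin n → ℝ)} (hE : MeasurableSet E) :
    volume (frameBox n ∩ {A | v ᵥ* of A ∈ E}) ≤ (ENNReal.ofReal (|v j| ^ n))⁻¹ * volume E := by
  let C : Fin n → Set (Fin n → ℝ) := fun k => Metric.closedBall (Pi.single k 1) (1 / (2 * n))
  have hEv : MeasurableSet {A : Fin n → Fin n → ℝ | v ᵥ* of A ∈ E} := by measurability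
  calc volume (frameBox n ∩ {A | v ᵥ* of A ∈ E})
      ≤ volume ({A | v ᵥ* of A ∈ E} ∩ Set.pi ({j}ᶜ : Finset (Fin n)) C) :=
        measure_mono fun A hA => ⟨hA.2, fun k _ => hA.1 k trivial⟩
    _ = ∫⁻ A in Set.pi ({j}ᶜ : Finset (Fin n)) C, E.indicator 1 (v ᵥ* of A) := by
        rw [← Measure.restrict_apply hEv, ← lintegral_indicator_one hEv]
        rfl
    _ ≤ _ := by
        rw [setLIntegral_comp_vecMul C (measurable_one.indicator hE) hj, lintegral_indicator_one hE]
        exact mul_le_of_le_one_left' (Finset.prod_le_one' fun k _ => volume_closedBall_le_one k _)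

theorem setLIntegral_frameBox_comp_vecMul_vecMul_le {φ : (Fin n → ℝ) → (Fin n → ℝ) → ℝ≥0∞}
    (hφ : Measurable (Function.uncurry φ)) {v w : Fin n → ℝ} {i j : Fin n}
    (hΔ : v i * w j - v j * w i ≠ 0) :
    ∫⁻ A in frameBox n, φ (v ᵥ* of A) (w ᵥ* of A) ≤
      (ENNReal.ofReal (|v i * w j - v j * w i| ^ n))⁻¹ * ∫⁻ x, ∫⁻ y, φ x y := by
  let C : Fin n → Set (Fin n → ℝ) := fun k => Metric.closedBall (Pi.single k 1) (1 / (2 * n))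
  calc ∫⁻ A in frameBox n, φ (v ᵥ* of A) (w ᵥ* of A)
      ≤ ∫⁻ A in Set.pi ({j, i}ᶜ : Finset (Fin n)) C, φ (v ᵥ* of A) (w ᵥ* of A) :=
        lintegral_mono_set fun A hA k _ => hA k trivial
    _ ≤ _ := by
        rw [setLIntegral_comp_vecMul_vecMul C hφ hΔ]
        exact mul_le_of_le_one_left' (Finset.prod_le_one' fun k _ => volume_closedBall_le_one k _)

theorem norm_sum_smul_le_card_mul {ι E : Type*} [Fintype ι] [SeminormedAddCommGroup E]
    [NormedSpace ℝ E] (s : Finset ι) (v : ι → ℝ) {x : ι → E} {r : ℝ} (hr : 0 ≤ r)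
    (hx : ∀ k ∈ s, ‖x k‖ ≤ r) : ‖∑ k ∈ s, v k • x k‖ ≤ Fintype.card ι * (‖v‖ * r) :=
  calc ‖∑ k ∈ s, v k • x k‖ ≤ ∑ _k ∈ s, ‖v‖ * r := by
        refine norm_sum_le_of_le _ fun k hk => ?_
        rw [norm_smul]
        exact mul_le_mul (norm_le_pi_norm v k) (hx k hk) (norm_nonneg _) (norm_nonneg _)
    _ ≤ ∑ _k, ‖v‖ * r :=
        Finset.sum_le_sum_of_subset_of_nonneg s.subset_univ fun _ _ _ => by positivity
    _ = Fintype.card ι * (‖v‖ * r) := by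
        rw [Finset.sum_const, Finset.card_univ, nsmul_eq_mul]

theorem vecMul_of_sub_self (A : Fin n → Fin n → ℝ) (v : Fin n → ℝ) :
    v ᵥ* of A - v = ∑ j, v j • (A j - Pi.single j 1) := by
  ext i
  simp [vecMul, dotProduct, mul_sub, Finset.sum_sub_distrib, Pi.single_apply]

theorem mul_norm_sub_single_le {A : Fin n → Fin n → ℝ} {v : Fin n → ℝ} {j : Fin n} {r : ℝ}
    (hr : 0 ≤ r) (hA : ∀ k ≠ j, ‖A k - Pi.single k 1‖ ≤ r) :
    |v j| * ‖A j - Pi.single j 1‖ ≤ ‖v ᵥ* of A - v‖ + n * (‖v‖ * r) := by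
  have hj : v j • (A j - Pi.single j 1) =
      (v ᵥ* of A - v) - ∑ k ∈ Finset.univ.erase j, v k • (A k - Pi.single k 1) := by
    rw [vecMul_of_sub_self, ← Finset.add_sum_erase _ _ (Finset.mem_univ j), add_sub_cancel_right]
  rw [← Real.norm_eq_abs, ← norm_smul, hj]
  refine (norm_sub_le _ _).trans (add_le_add_right ?_ _)
  simpa using norm_sum_smul_le_card_mul (Finset.univ.erase j) v hr
    fun k hk => hA k (Finset.ne_of_mem_erase hk)

theorem exists_abs_eq_norm {ι : Type*} [Fintype ι] [Nonempty ι] (v : ι → ℝ) : ∃ j, |v j| = ‖v‖ := by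
  obtain ⟨j, hj⟩ := Finite.exists_max fun j => |v j|
  exact ⟨j, le_antisymm (norm_le_pi_norm v j) ((pi_norm_le_iff_of_nonneg (abs_nonneg _)).2 hj)⟩

theorem mem_frameBox_of_norm_vecMul_sub_le {A : Fin n → Fin n → ℝ} {v : Fin n → ℝ} {j : Fin n}
    (hv : v ≠ 0) (hj : |v j| = ‖v‖) (hA : ∀ k ≠ j, ‖A k - Pi.single k 1‖ ≤ 1 / (4 * n ^ 2))
    (hvA : ‖v ᵥ* of A - v‖ ≤ ‖v‖ / (4 * n)) : A ∈ frameBox n := by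
  have hn : (1 : ℝ) ≤ n := by exact_mod_cast Fin.pos j
  refine fun k _ => mem_closedBall_iff_norm.2 ?_
  obtain rfl | hk := eq_or_ne k j
  · refine le_of_mul_le_mul_left ?_ (norm_pos_iff.2 hv)
    calc ‖v‖ * ‖A k - Pi.single k 1‖ = |v k| * ‖A k - Pi.single k 1‖ := by rw [hj]
      _ ≤ ‖v ᵥ* of A - v‖ + n * (‖v‖ * (1 / (4 * n ^ 2))) :=
          mul_norm_sub_single_le (by positivity) hA
      _ ≤ ‖v‖ / (4 * n) + n * (‖v‖ * (1 / (4 * n ^ 2))) := by gcongr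
      _ = ‖v‖ * (1 / (2 * n)) := by
          field_simp
          norm_num
  · exact (hA k hk).trans (one_div_le_one_div_of_le (by positivity) (by nlinarith))

/-- Where `‖v‖ = |v j|`, the rows other than the `j`-th are free in a small box, and prescribing
`v ᵥ* of A` near `v` then keeps the `j`-th row in its box. -/
theorem le_volume_frameBox_inter_vecMul_mem {v : Fin n → ℝ} (hv : v ≠ 0) {E : Set (Fin n → ℝ)}
    (hE : MeasurableSet E) (hEv : E ⊆ Metric.closedBall v (‖v‖ / (4 * n))) :
    ENNReal.ofReal (((1 / (2 * (n : ℝ) ^ 2)) ^ n) ^ (n - 1)) *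
      ((ENNReal.ofReal (‖v‖ ^ n))⁻¹ * volume E) ≤ volume (frameBox n ∩ {A | v ᵥ* of A ∈ E}) := by
  obtain ⟨i, -⟩ := Function.ne_iff.1 hv
  have : Nonempty (Fin n) := ⟨i⟩
  obtain ⟨j, hj⟩ := exists_abs_eq_norm v
  have hvj : v j ≠ 0 := abs_pos.1 (hj ▸ norm_pos_iff.2 hv)
  let C : Fin n → Set (Fin n → ℝ) := fun k => Metric.closedBall (Pi.single k 1) (1 / (4 * n ^ 2))
  have hC : ∏ k ∈ {j}ᶜ, volume (C k) =
      ENNReal.ofReal (((1 / (2 * (n : ℝ) ^ 2)) ^ n) ^ (n - 1)) := by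
    have hCk (k : Fin n) : volume (C k) = ENNReal.ofReal ((1 / (2 * (n : ℝ) ^ 2)) ^ n) := by
      rw [Real.volume_pi_closedBall _ (by positivity), Fintype.card_fin]
      congr 2
      field_simp
      norm_num
    rw [Finset.prod_congr rfl fun k _ => hCk k, Finset.prod_const, Finset.card_compl,
      Finset.card_singleton, Fintype.card_fin, ← ENNReal.ofReal_pow (by positivity)]
  have hEv' : MeasurableSet {A : Fin n → Fin n → ℝ | v ᵥ* of A ∈ E} := by measurability
  calc _ = ∫⁻ A in Set.pi ({j}ᶜ : Finset (Fin n)) C, E.indicator 1 (v ᵥ* of A) := by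
        rw [setLIntegral_comp_vecMul C (measurable_one.indicator hE) hvj,
          lintegral_indicator_one hE, hC, hj]
    _ = volume ({A | v ᵥ* of A ∈ E} ∩ Set.pi ({j}ᶜ : Finset (Fin n)) C) := by
        rw [← Measure.restrict_apply hEv', ← lintegral_indicator_one hEv']
        rfl
    _ ≤ _ := by
        refine measure_mono fun A hA => ⟨mem_frameBox_of_norm_vecMul_sub_le hv hj
          (fun k hk => ?_) (mem_closedBall_iff_norm.1 (hEv hA.1)), hA.1⟩
        exact mem_closedBall_iff_norm.1 (hA.2 k (by simpa using hk))

variable {A : Fin n → Fin n → ℝ}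

theorem norm_sub_single_le_of_mem_frameBox (hA : A ∈ frameBox n) (j : Fin n) :
    ‖A j - Pi.single j 1‖ ≤ 1 / (2 * n) :=
  mem_closedBall_iff_norm.1 (hA j trivial)

theorem norm_vecMul_sub_le (hA : A ∈ frameBox n) (v : Fin n → ℝ) :
    ‖v ᵥ* of A - v‖ ≤ ‖v‖ / 2 := by
  rw [vecMul_of_sub_self]
  refine (norm_sum_smul_le_card_mul Finset.univ v (r := 1 / (2 * n)) (by positivity)
    fun k _ => norm_sub_single_le_of_mem_frameBox hA k).trans ?_
  obtain rfl | hn := Nat.eq_zero_or_pos n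
  · simp only [Fintype.card_fin, Nat.cast_zero, zero_mul]
    positivity
  · rw [Fintype.card_fin]
    field_simp
    norm_num

theorem norm_le_two_mul_norm_vecMul (hA : A ∈ frameBox n) (v : Fin n → ℝ) :
    ‖v‖ ≤ 2 * ‖v ᵥ* of A‖ := by
  have h := norm_sub_norm_le v (v ᵥ* of A)
  rw [norm_sub_rev] at h
  linarith [norm_vecMul_sub_le hA v]

theorem norm_vecMul_le (hA : A ∈ frameBox n) (v : Fin n → ℝ) : ‖v ᵥ* of A‖ ≤ 2 * ‖v‖ := by
  linarith [norm_sub_norm_le (v ᵥ* of A) v, norm_vecMul_sub_le hA v, norm_nonneg v]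

end Frames

section IntegerVectors

variable {n : ℕ}

/-- An integer vector viewed as a real vector. -/
def realVec {ι : Type*} (m : ι → ℤ) : ι → ℝ := fun i => m i

theorem norm_realVec {ι : Type*} [Fintype ι] (m : ι → ℤ) : ‖realVec m‖ = ‖m‖ := by
  have h (i : ι) : ‖(m i : ℝ)‖₊ = ‖m i‖₊ := NNReal.eq (Int.norm_cast_real (m i))
  simp only [realVec, Pi.norm_def, h]

theorem realVec_ne_zero {m : Fin n → ℤ} (hm : m ≠ 0) : realVec m ≠ 0 := by
  rwa [← norm_ne_zero_iff, norm_realVec, norm_ne_zero_iff]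

theorem one_le_norm_of_ne_zero {m : Fin n → ℤ} (hm : m ≠ 0) : 1 ≤ ‖m‖ := by
  obtain ⟨i, hi⟩ := Function.ne_iff.1 hm
  refine le_trans ?_ (norm_le_pi_norm m i)
  rw [Int.norm_eq_abs]
  exact_mod_cast Int.one_le_abs hi

/-- The nonzero integer vectors of sup norm at most `R`. -/
def puncturedIntBall (n : ℕ) (R : ℝ) : Finset (Fin n → ℤ) :=
  (Fintype.piFinset fun _ => Finset.Icc (-⌊R⌋) ⌊R⌋).erase 0

theorem mem_puncturedIntBall {R : ℝ} (hR : 0 ≤ R) {m : Fin n → ℤ} :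
    m ∈ puncturedIntBall n R ↔ m ≠ 0 ∧ ‖m‖ ≤ R := by
  rw [puncturedIntBall, Finset.mem_erase, Fintype.mem_piFinset, pi_norm_le_iff_of_nonneg hR]
  simp only [Int.norm_eq_abs, abs_intCast_le_iff_mem_Icc]

theorem pow_le_card_of_forall_norm_sub_le {x : Fin n → ℝ} {ρ : ℝ} (hρ : 1 ≤ ρ)
    {s : Finset (Fin n → ℤ)} (hs : ∀ m, ‖x - realVec m‖ ≤ ρ → m ∈ s) : ρ ^ n ≤ s.card := by
  have hsub : (Fintype.piFinset fun i => Finset.Icc ⌈x i - ρ⌉ ⌊x i + ρ⌋) ⊆ s := by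
    intro m hm
    refine hs m ((pi_norm_le_iff_of_nonneg (by linarith)).2 fun i => ?_)
    have hi := Finset.mem_Icc.1 (Fintype.mem_piFinset.1 hm i)
    rw [Int.ceil_le, Int.le_floor] at hi
    rw [Pi.sub_apply, realVec, Real.norm_eq_abs, abs_le]
    constructor <;> linarith
  calc ρ ^ n = ∏ _i : Fin n, ρ := by simp
    _ ≤ ∏ i : Fin n, ((Finset.Icc ⌈x i - ρ⌉ ⌊x i + ρ⌋).card : ℝ) := by
        refine Finset.prod_le_prod (fun _ _ => by linarith) fun i _ => ?_
        have hcard : ((⌊x i + ρ⌋ + 1 - ⌈x i - ρ⌉ : ℤ) : ℝ) ≤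
            (Finset.Icc ⌈x i - ρ⌉ ⌊x i + ρ⌋).card := by
          rw [Int.card_Icc]
          exact_mod_cast Int.self_le_toNat _
        push_cast at hcard
        linarith [Int.ceil_lt_add_one (x i - ρ), Int.lt_floor_add_one (x i + ρ)]
    _ ≤ s.card := by
        have hcard := Finset.card_le_card hsub
        rw [Fintype.card_piFinset] at hcard
        exact_mod_cast hcard

theorem sum_Icc_neg_natAbs {M : Type*} [AddCommMonoid M] (f : ℕ → M) (K : ℕ) :
    ∑ k ∈ Finset.Icc (-(K : ℤ)) K, f k.natAbs = f 0 + 2 • ∑ i ∈ Finset.range K, f (i + 1) := by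
  induction K with
  | zero => simp
  | succ K ih =>
    have h : Finset.Icc (-((K + 1 : ℕ) : ℤ)) ((K + 1 : ℕ) : ℤ) =
        insert (-((K + 1 : ℕ) : ℤ)) (insert ((K + 1 : ℕ) : ℤ) (Finset.Icc (-(K : ℤ)) K)) := by
      ext k
      simp only [Finset.mem_insert, Finset.mem_Icc]
      omega
    rw [h, Finset.sum_insert (by simp only [Finset.mem_insert, Finset.mem_Icc]; omega),
      Finset.sum_insert (by simp), ih, Finset.sum_range_succ, Int.natAbs_neg, Int.natAbs_natCast,
      nsmul_add, two_nsmul (f (K + 1))]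
    abel

theorem sum_Icc_inv_max_one_abs_le {R : ℝ} (hR : 1 ≤ R) :
    ∑ k ∈ Finset.Icc (-⌊R⌋) ⌊R⌋, (max 1 |(k : ℝ)|)⁻¹ ≤ 3 + 2 * Real.log R := by
  rw [← Int.natCast_floor_eq_floor (by linarith : 0 ≤ R)]
  calc _ = ∑ k ∈ Finset.Icc (-(⌊R⌋₊ : ℤ)) ⌊R⌋₊, (max 1 (k.natAbs : ℝ))⁻¹ := by
        simp only [Nat.cast_natAbs, Int.cast_abs]
    _ = 1 + 2 * (harmonic ⌊R⌋₊ : ℝ) := by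
        rw [sum_Icc_neg_natAbs (fun i => (max 1 (i : ℝ))⁻¹), harmonic]
        simp [Nat.cast_nonneg]
    _ ≤ _ := by linarith [harmonic_floor_le_one_add_log R hR]

theorem sum_inv_norm_pow_le {R : ℝ} (hR : 1 ≤ R) :
    ∑ m ∈ puncturedIntBall n R, (‖m‖ ^ n)⁻¹ ≤ (3 + 2 * Real.log R) ^ n :=
  calc _ ≤ ∑ m ∈ puncturedIntBall n R, ∏ i, (max 1 |(m i : ℝ)|)⁻¹ := by
        refine Finset.sum_le_sum fun m hm => ?_
        rw [Finset.prod_inv_distrib]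
        refine inv_anti₀ (Finset.prod_pos fun i _ => by positivity) ?_
        calc ∏ i, max 1 |(m i : ℝ)| ≤ ∏ _i : Fin n, ‖m‖ :=
              Finset.prod_le_prod (fun _ _ => by positivity) fun i _ =>
                max_le (one_le_norm_of_ne_zero (Finset.ne_of_mem_erase hm)) (norm_le_pi_norm m i)
          _ = ‖m‖ ^ n := by simp
    _ ≤ ∑ m ∈ Fintype.piFinset fun _ : Fin n => Finset.Icc (-⌊R⌋) ⌊R⌋,
          ∏ i, (max 1 |(m i : ℝ)|)⁻¹ :=
        Finset.sum_le_sum_of_subset_of_nonneg (Finset.erase_subset _ _)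
          fun _ _ _ => Finset.prod_nonneg fun _ _ => by positivity
    _ = (∑ k ∈ Finset.Icc (-⌊R⌋) ⌊R⌋, (max 1 |(k : ℝ)|)⁻¹) ^ n := by
        rw [Finset.sum_prod_piFinset _ fun _ k => (max 1 |((k : ℤ) : ℝ)|)⁻¹]
        simp
    _ ≤ _ := pow_le_pow_left₀ (Finset.sum_nonneg fun _ _ => by positivity)
        (sum_Icc_inv_max_one_abs_le hR) n

/-- The sup norm of the vector of `2 × 2` minors of the pair `(v, w)`; it vanishes exactly on
collinear pairs. -/
def minorNorm {R : Type*} [NormedCommRing R] (v w : Fin n → R) : ℝ :=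
  ‖fun p : Fin n × Fin n => v p.1 * w p.2 - v p.2 * w p.1‖

theorem minorNorm_realVec (m m' : Fin n → ℤ) :
    minorNorm (realVec m) (realVec m') = minorNorm m m' := by
  rw [minorNorm, minorNorm, ← norm_realVec]
  congr
  ext p
  simp [realVec]

theorem mul_eq_mul_of_minorNorm_eq_zero {R : Type*} [NormedCommRing R] {v w : Fin n → R}
    (h : minorNorm v w = 0) (i j : Fin n) : v i * w j = v j * w i :=
  sub_eq_zero.1 (congrFun (norm_eq_zero.1 h) (i, j))

theorem exists_eq_smul_and_eq_smul {ι R : Type*} [Finite ι] [CommRing R] [IsDomain R]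
    [IsPrincipalIdealRing R] {m m' : ι → R} (hm : m ≠ 0) (h : ∀ i j, m i * m' j = m j * m' i) :
    ∃ (k : ι → R) (g g' : R), m = g • k ∧ m' = g' • k := by
  have := Fintype.ofFinite ι
  obtain ⟨g, hg⟩ := IsPrincipalIdealRing.principal (Ideal.span (Set.range m))
  rw [Ideal.submodule_span_eq] at hg
  have hdvd (i : ι) : g ∣ m i := by
    rw [← Ideal.mem_span_singleton, ← hg]
    exact Ideal.subset_span ⟨i, rfl⟩
  choose k hk using hdvd
  have hg0 : g ≠ 0 := by
    rintro rfl
    exact hm (funext fun i => by simp [hk i])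
  have hgm : g ∈ Ideal.span (Set.range m) := hg ▸ Ideal.mem_span_singleton_self g
  obtain ⟨b, hb⟩ := (Submodule.mem_span_range_iff_exists_fun R).1 hgm
  refine ⟨k, g, ∑ j, b j * m' j, funext hk, funext fun i => mul_left_cancel₀ hg0 ?_⟩
  calc g * m' i = ∑ j, b j * (m j * m' i) := by
        conv_lhs => rw [← hb, Finset.sum_mul]
        simp [mul_assoc]
    _ = ∑ j, b j * (m' j * m i) :=
        Finset.sum_congr rfl fun j _ => by rw [h j i, mul_comm (m i)]
    _ = g * ((∑ j, b j * m' j) * k i) := by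
        simp only [← mul_assoc, ← Finset.sum_mul]
        rw [hk i]
        ring

theorem exists_mem_puncturedIntBall_smul_eq {R : ℝ} (hR : 0 ≤ R) {m m' : Fin n → ℤ}
    (hm : m ∈ puncturedIntBall n R) (hm' : m' ∈ puncturedIntBall n R) (h : minorNorm m m' = 0) :
    ∃ k ∈ puncturedIntBall n R, ∃ g ∈ Finset.Icc (-⌊R / ‖k‖⌋) ⌊R / ‖k‖⌋,
      ∃ g' ∈ Finset.Icc (-⌊R / ‖k‖⌋) ⌊R / ‖k‖⌋, g • k = m ∧ g' • k = m' := by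
  rw [mem_puncturedIntBall hR] at hm hm'
  obtain ⟨k, g, g', rfl, rfl⟩ :=
    exists_eq_smul_and_eq_smul hm.1 (mul_eq_mul_of_minorNorm_eq_zero h)
  have hk : k ≠ 0 := by
    rintro rfl
    simp at hm
  have hg : g ≠ 0 := by
    rintro rfl
    simp at hm
  have hkpos : 0 < ‖k‖ := norm_pos_iff.2 hk
  have hbound {c : ℤ} (hc : ‖c • k‖ ≤ R) : c ∈ Finset.Icc (-⌊R / ‖k‖⌋) ⌊R / ‖k‖⌋ := by
    rw [norm_smul, Int.norm_eq_abs] at hc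
    rwa [← abs_intCast_le_iff_mem_Icc, le_div_iff₀ hkpos]
  refine ⟨k, (mem_puncturedIntBall hR).2 ⟨hk, ?_⟩, g, hbound hm.2, g', hbound hm'.2, rfl, rfl⟩
  have hg1 : (1 : ℝ) ≤ ‖g‖ := by
    rw [Int.norm_eq_abs]
    exact_mod_cast Int.one_le_abs hg
  have hgk := hm.2
  rw [norm_smul] at hgk
  nlinarith

theorem card_collinear_le (hn : 2 ≤ n) {R : ℝ} (hR : 1 ≤ R) :
    (((puncturedIntBall n R ×ˢ puncturedIntBall n R).filter
      fun p => minorNorm p.1 p.2 = 0).card : ℝ) ≤ (3 * R) ^ n * (3 + 2 * Real.log R) ^ n := by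
  have hR0 : 0 ≤ R := by linarith
  let J (k : Fin n → ℤ) : Finset ℤ := Finset.Icc (-⌊R / ‖k‖⌋) ⌊R / ‖k‖⌋
  have hcard : ((puncturedIntBall n R ×ˢ puncturedIntBall n R).filter
      fun p => minorNorm p.1 p.2 = 0).card ≤ ∑ k ∈ puncturedIntBall n R, (J k).card ^ 2 := by
    calc _ ≤ ((puncturedIntBall n R).biUnion fun k =>
          (J k ×ˢ J k).image fun g => (g.1 • k, g.2 • k)).card := by
          refine Finset.card_le_card ?_
          rintro ⟨m, m'⟩ hp
          simp only [Finset.mem_filter, Finset.mem_product] at hp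
          obtain ⟨k, hk, g, hg, g', hg', rfl, rfl⟩ :=
            exists_mem_puncturedIntBall_smul_eq hR0 hp.1.1 hp.1.2 hp.2
          simp only [Finset.mem_biUnion, Finset.mem_image, Finset.mem_product]
          exact ⟨k, hk, (g, g'), ⟨hg, hg'⟩, rfl⟩
      _ ≤ ∑ k ∈ puncturedIntBall n R, (J k).card ^ 2 := by
          refine Finset.card_biUnion_le.trans (Finset.sum_le_sum fun k _ => ?_)
          exact Finset.card_image_le.trans_eq (by rw [Finset.card_product, sq])
  have hJ {k : Fin n → ℤ} (hk : k ∈ puncturedIntBall n R) :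
      ((J k).card : ℝ) ^ 2 ≤ (3 * R) ^ n * (‖k‖ ^ n)⁻¹ := by
    rw [mem_puncturedIntBall hR0] at hk
    have hq : 1 ≤ R / ‖k‖ := (one_le_div₀ (norm_pos_iff.2 hk.1)).2 hk.2
    calc ((J k).card : ℝ) ^ 2 ≤ (3 * (R / ‖k‖)) ^ 2 :=
          pow_le_pow_left₀ (Nat.cast_nonneg _) (card_Icc_neg_floor_le hq) 2
      _ ≤ (3 * (R / ‖k‖)) ^ n := pow_le_pow_right₀ (by linarith) hn
      _ = (3 * R) ^ n * (‖k‖ ^ n)⁻¹ := by rw [← mul_div_assoc, div_pow, div_eq_mul_inv]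
  calc _ ≤ ∑ k ∈ puncturedIntBall n R, ((J k).card : ℝ) ^ 2 := by exact_mod_cast hcard
    _ ≤ ∑ k ∈ puncturedIntBall n R, (3 * R) ^ n * (‖k‖ ^ n)⁻¹ :=
        Finset.sum_le_sum fun k hk => hJ hk
    _ ≤ _ := by
        rw [← Finset.mul_sum]
        exact mul_le_mul_of_nonneg_left (sum_inv_norm_pow_le hR) (by positivity)

end IntegerVectors

section CountingMoments

variable {Ω ι : Type*} [MeasurableSpace Ω] (μ : Measure Ω) (T : Finset ι) {H : ι → Set Ω}

open Classical in
theorem setLIntegral_sum_filter_mem (hH : ∀ p, MeasurableSet (H p)) (c : ι → ℝ≥0∞) (F : Set Ω) :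
    ∫⁻ ω in F, ∑ p ∈ T with ω ∈ H p, c p ∂μ = ∑ p ∈ T, c p * μ (H p ∩ F) := by
  have hind (p : ι) (ω : Ω) : (if ω ∈ H p then c p else 0) = c p * (H p).indicator 1 ω := by
    rw [Set.indicator_apply, mul_ite, Pi.one_apply, mul_one, mul_zero]
  have hmeas (p : ι) : Measurable ((H p).indicator (1 : Ω → ℝ≥0∞)) :=
    measurable_one.indicator (hH p)
  simp only [Finset.sum_filter, hind]
  rw [lintegral_finsetSum _ fun p _ => (hmeas p).const_mul _]
  refine Finset.sum_congr rfl fun p _ => ?_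
  rw [lintegral_const_mul _ (hmeas p), lintegral_indicator_one (hH p),
    Measure.restrict_apply (hH p)]

/-- Cauchy-Schwarz for the number of the sets `H p` which contain `ω`. -/
theorem sq_sum_measure_le_mul_measure_biUnion (hH : ∀ p, MeasurableSet (H p)) :
    (∑ p ∈ T, μ (H p)) ^ 2 ≤
      (∑ q ∈ T ×ˢ T, μ (H q.1 ∩ H q.2)) * μ (⋃ p ∈ T, H p) := by
  let U : Set Ω := ⋃ p ∈ T, H p
  have hU : MeasurableSet U := Finset.measurableSet_biUnion _ fun p _ => hH p
  let N (ω : Ω) : ℝ≥0∞ := ∑ p ∈ T, (H p).indicator 1 ω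
  have hN : Measurable N := Finset.measurable_fun_sum _ fun p _ => measurable_one.indicator (hH p)
  have hfirst : ∑ p ∈ T, μ (H p) = ∫⁻ ω, (N * U.indicator (1 : Ω → ℝ≥0∞)) ω ∂μ := by
    rw [Finset.sum_congr rfl fun p _ => (lintegral_indicator_one (hH p)).symm,
      ← lintegral_finsetSum _ fun p _ => measurable_one.indicator (hH p)]
    refine lintegral_congr fun ω => ?_
    by_cases hω : ω ∈ U
    · simp [N, hω]
    · have hzero (p : ι) (hp : p ∈ T) : (H p).indicator (1 : Ω → ℝ≥0∞) ω = 0 :=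
        Set.indicator_of_notMem (fun h => hω (Set.mem_biUnion hp h)) _
      simp [hω, Finset.sum_congr rfl hzero]
  have hsecond : ∑ q ∈ T ×ˢ T, μ (H q.1 ∩ H q.2) = ∫⁻ ω, N ω ^ (2 : ℝ) ∂μ := by
    rw [Finset.sum_congr rfl fun q _ => (lintegral_indicator_one ((hH q.1).inter (hH q.2))).symm,
      ← lintegral_finsetSum _ fun q _ => measurable_one.indicator ((hH q.1).inter (hH q.2))]
    refine lintegral_congr fun ω => ?_
    simp only [N, ENNReal.rpow_two, sq, Finset.sum_mul_sum, Finset.sum_product,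
      Set.inter_indicator_one, Pi.mul_apply]
  have hunion : μ U = ∫⁻ ω, U.indicator 1 ω ^ (2 : ℝ) ∂μ := by
    rw [← lintegral_indicator_one hU]
    refine lintegral_congr fun ω => ?_
    by_cases hω : ω ∈ U <;> simp [hω]
  have hhalf (x : ℝ≥0∞) : (x ^ (1 / 2 : ℝ)) ^ 2 = x := by
    rw [← ENNReal.rpow_mul_natCast]
    norm_num
  rw [hfirst, hsecond, hunion, ← hhalf (∫⁻ ω, N ω ^ (2 : ℝ) ∂μ),
    ← hhalf (∫⁻ ω, U.indicator 1 ω ^ (2 : ℝ) ∂μ), ← mul_pow]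
  gcongr
  exact ENNReal.lintegral_mul_le_Lp_mul_Lq μ Real.HolderConjugate.two_two hN.aemeasurable
    (measurable_one.indicator hU).aemeasurable

end CountingMoments

section Moments

variable {n : ℕ}

theorem norm_mul_sub_mul_le_minorNorm {R : Type*} [NormedCommRing R] (v w : Fin n → R)
    (i j : Fin n) : ‖v i * w j - v j * w i‖ ≤ minorNorm v w :=
  norm_le_pi_norm (fun p : Fin n × Fin n => v p.1 * w p.2 - v p.2 * w p.1) (i, j)

theorem minorNorm_nonneg {R : Type*} [NormedCommRing R] (v w : Fin n → R) : 0 ≤ minorNorm v w :=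
  norm_nonneg _

theorem minorNorm_vecMul_le {R : Type*} [NormedCommRing R] {M : Matrix (Fin n) (Fin n) R} {C : ℝ}
    (hM : ∀ i j, ‖M i j‖ ≤ C) (v w : Fin n → R) :
    minorNorm (v ᵥ* M) (w ᵥ* M) ≤ (n * C) ^ 2 * minorNorm v w := by
  refine (pi_norm_le_iff_of_nonneg (by positivity [minorNorm_nonneg v w])).2 fun ⟨a, b⟩ => ?_
  have hexpand : (v ᵥ* M) a * (w ᵥ* M) b - (v ᵥ* M) b * (w ᵥ* M) a =
      ∑ i, ∑ j, M i a * M j b * (v i * w j - v j * w i) := by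
    simp only [vecMul, dotProduct, Finset.sum_mul_sum]
    rw [Finset.sum_comm (f := fun i j => v i * M i b * (w j * M j a)), ← Finset.sum_sub_distrib]
    refine Finset.sum_congr rfl fun i _ => ?_
    rw [← Finset.sum_sub_distrib]
    exact Finset.sum_congr rfl fun j _ => by ring
  have hterm (i j : Fin n) : ‖M i a * M j b * (v i * w j - v j * w i)‖ ≤ C * C * minorNorm v w := by
    have hC : 0 ≤ C := (norm_nonneg _).trans (hM i a)
    calc _ ≤ ‖M i a‖ * ‖M j b‖ * ‖v i * w j - v j * w i‖ :=
          (norm_mul_le _ _).trans (by gcongr; exact norm_mul_le _ _)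
      _ ≤ _ := by
          gcongr
          exacts [hM i a, hM j b, norm_mul_sub_mul_le_minorNorm v w i j]
  simp only [hexpand]
  calc _ ≤ ∑ _i : Fin n, ∑ _j : Fin n, C * C * minorNorm v w :=
        norm_sum_le_of_le _ fun i _ => norm_sum_le_of_le _ fun j _ => hterm i j
    _ = _ := by
        simp only [Finset.sum_const, Finset.card_univ, Fintype.card_fin, nsmul_eq_mul]
        ring

/-- The sup norm distance from `y` to the multiple of `x` with the same `a`-th coordinate. -/
def gap (a : Fin n) (x y : Fin n → ℝ) : ℝ := ‖y - (y a / x a) • x‖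

theorem gap_nonneg (a : Fin n) (x y : Fin n → ℝ) : 0 ≤ gap a x y := norm_nonneg _

@[fun_prop]
theorem measurable_gap (a : Fin n) :
    Measurable fun q : (Fin n → ℝ) × (Fin n → ℝ) => gap a q.1 q.2 := by
  unfold gap
  fun_prop

theorem abs_mul_gap_le_minorNorm {x : Fin n → ℝ} {a : Fin n} (ha : x a ≠ 0) (y : Fin n → ℝ) :
    |x a| * gap a x y ≤ minorNorm x y := by
  rw [gap, ← Real.norm_eq_abs, ← norm_smul]
  refine (pi_norm_le_iff_of_nonneg (minorNorm_nonneg x y)).2 fun b => ?_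
  have hb : (x a • (y - (y a / x a) • x)) b = x a * y b - x b * y a := by
    simp only [Pi.smul_apply, Pi.sub_apply, smul_eq_mul]
    field_simp
  exact hb ▸ norm_mul_sub_mul_le_minorNorm x y a b

theorem abs_le_two_of_mem_frameBox {A : Fin n → Fin n → ℝ} (hA : A ∈ frameBox n) (i b : Fin n) :
    |A i b| ≤ 2 := by
  have hn : (1 : ℝ) ≤ n := by exact_mod_cast Fin.pos i
  have hdist : |A i b - (Pi.single i 1 : Fin n → ℝ) b| ≤ 1 :=
    calc _ ≤ ‖A i - Pi.single i 1‖ := norm_le_pi_norm (A i - Pi.single i 1) b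
      _ ≤ 1 / (2 * n) := norm_sub_single_le_of_mem_frameBox hA i
      _ ≤ 1 := by
          rw [div_le_one (by linarith)]
          linarith
  have hsingle : |(Pi.single i 1 : Fin n → ℝ) b| ≤ 1 := by
    rw [Pi.single_apply]
    split <;> simp
  linarith [abs_sub_abs_le_abs_sub (A i b) ((Pi.single i 1 : Fin n → ℝ) b)]

/-- The vectors of the ball of radius `S` whose `a`-th coordinate is comparable to `S`. -/
def sector (a : Fin n) (κ S : ℝ) : Set (Fin n → ℝ) := {x | ‖x‖ ≤ S ∧ κ * S ≤ |x a|}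

/-- The frames near the identity whose integer combination with coefficients `m` lies in `B`. -/
def hitSet (B : Set (Fin n → ℝ)) (m : Fin n → ℤ) : Set (Fin n → Fin n → ℝ) :=
  frameBox n ∩ {A | realVec m ᵥ* of A ∈ B}

theorem measurableSet_hitSet {B : Set (Fin n → ℝ)} (hB : MeasurableSet B) (m : Fin n → ℤ) :
    MeasurableSet (hitSet B m) :=
  (measurableSet_frameBox n).inter (measurable_vecMul_of _ hB)

theorem volume_hitSet_le {B : Set (Fin n → ℝ)} (hB : MeasurableSet B) {m : Fin n → ℤ}
    (hm : m ≠ 0) : volume (hitSet B m) ≤ (ENNReal.ofReal (‖m‖ ^ n))⁻¹ * volume B := by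
  obtain ⟨i, -⟩ := Function.ne_iff.1 hm
  have : Nonempty (Fin n) := ⟨i⟩
  obtain ⟨j, hj⟩ := exists_abs_eq_norm (realVec m)
  rw [← norm_realVec, ← hj]
  refine volume_frameBox_inter_vecMul_mem_le (abs_pos.1 ?_) hB
  rw [hj]
  exact norm_pos_iff.2 (realVec_ne_zero hm)

variable {B : Set (Fin n → ℝ)} {a : Fin n} {κ S : ℝ}

theorem le_norm_of_hitSet_nonempty (hBS : B ⊆ sector a κ S) {m : Fin n → ℤ}
    (hm : (hitSet B m).Nonempty) : κ * S / 2 ≤ ‖m‖ := by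
  obtain ⟨A, hA, hAB⟩ := hm
  have hcoord : |(realVec m ᵥ* of A) a| ≤ ‖realVec m ᵥ* of A‖ :=
    norm_le_pi_norm (realVec m ᵥ* of A) a
  rw [← norm_realVec]
  linarith [norm_vecMul_le hA (realVec m), (hBS hAB).2]

/-- A pair of points `x`, `y` of `B` can come from the integer vectors `m`, `m'` by a frame near
the identity only if `(x, y)` lies in this set: each `(m i, m' i)` is close to the line of slope
`y a / x a`, within a distance controlled by the minors of `(m, m')`. -/
def pairSet (B : Set (Fin n → ℝ)) (a : Fin n) (κ S : ℝ) (m m' : Fin n → ℤ) :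
    Set ((Fin n → ℝ) × (Fin n → ℝ)) :=
  {q | q ∈ B ×ˢ B ∧ (∀ i, InStrip (2 * S) (2 * gap a q.1 q.2) (q.2 a / q.1 a) (m i, m' i)) ∧
    κ * S * gap a q.1 q.2 ≤ 4 * n ^ 2 * minorNorm m m'}

theorem measurableSet_pairSet (hB : MeasurableSet B) (a : Fin n) (κ S : ℝ) (m m' : Fin n → ℤ) :
    MeasurableSet (pairSet B a κ S m m') := by
  have hdist (i : Fin n) : Measurable fun q : (Fin n → ℝ) × (Fin n → ℝ) =>
      |(m' i : ℝ) - q.2 a / q.1 a * m i| := by fun_prop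
  have hstrip (i : Fin n) : MeasurableSet {q : (Fin n → ℝ) × (Fin n → ℝ) |
      InStrip (2 * S) (2 * gap a q.1 q.2) (q.2 a / q.1 a) (m i, m' i)} :=
    (MeasurableSet.const _).inter (measurableSet_le (hdist i) ((measurable_gap a).const_mul 2))
  refine (hB.prod hB).inter (MeasurableSet.inter ?_ ?_)
  · exact measurableSet_setOfPred.2 <| Measurable.forall fun i =>
      measurableSet_setOfPred.1 (hstrip i)
  · exact measurableSet_le ((measurable_gap a).const_mul _) measurable_const

theorem mem_pairSet_of_mem_hitSet (hκ : 0 < κ) (hS : 0 < S) (hBS : B ⊆ sector a κ S)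
    {m m' : Fin n → ℤ} {A : Fin n → Fin n → ℝ} (hm : A ∈ hitSet B m) (hm' : A ∈ hitSet B m') :
    (realVec m ᵥ* of A, realVec m' ᵥ* of A) ∈ pairSet B a κ S m m' := by
  have hA := hm.1
  have hx := hBS hm.2
  set x := realVec m ᵥ* of A
  set y := realVec m' ᵥ* of A
  refine ⟨⟨hm.2, hm'.2⟩, fun i => ⟨?_, ?_⟩, ?_⟩
  · calc |(m i : ℝ)| ≤ ‖realVec m‖ := norm_le_pi_norm (realVec m) i
      _ ≤ 2 * ‖x‖ := norm_le_two_mul_norm_vecMul hA _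
      _ ≤ 2 * S := by linarith [hx.1]
  · calc |(m' i : ℝ) - y a / x a * m i| ≤ ‖realVec m' - (y a / x a) • realVec m‖ :=
          norm_le_pi_norm (realVec m' - (y a / x a) • realVec m) i
      _ ≤ 2 * ‖(realVec m' - (y a / x a) • realVec m) ᵥ* of A‖ :=
          norm_le_two_mul_norm_vecMul hA _
      _ = 2 * gap a x y := by rw [sub_vecMul, smul_vecMul, gap]
  · have hxa : 0 < |x a| := lt_of_lt_of_le (by positivity) hx.2
    calc κ * S * gap a x y ≤ |x a| * gap a x y :=
          mul_le_mul_of_nonneg_right hx.2 (gap_nonneg a x y)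
      _ ≤ minorNorm x y := abs_mul_gap_le_minorNorm (abs_pos.1 hxa) y
      _ ≤ (n * 2) ^ 2 * minorNorm (realVec m) (realVec m') :=
          minorNorm_vecMul_le (abs_le_two_of_mem_frameBox hA) _ _
      _ = 4 * n ^ 2 * minorNorm m m' := by
          rw [minorNorm_realVec]
          ring

theorem card_le_pow_of_inStrip {R ρ slope : ℝ} {T : Finset ((Fin n → ℤ) × (Fin n → ℤ))}
    (hT : ∀ p ∈ T, ∀ i, InStrip R ρ slope (p.1 i, p.2 i)) {p : (Fin n → ℤ) × (Fin n → ℤ)}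
    (hp : p ∈ T) (hminor : minorNorm p.1 p.2 ≠ 0) : (T.card : ℝ) ≤ (18 * (R * ρ)) ^ n := by
  obtain ⟨i, j, hij⟩ : ∃ i j, p.1 i * p.2 j - p.1 j * p.2 i ≠ 0 := by
    by_contra! h
    exact hminor (norm_eq_zero.2 (funext fun q => h q.1 q.2))
  let P : Finset (ℤ × ℤ) := (T ×ˢ Finset.univ).image fun q => (q.1.1 q.2, q.1.2 q.2)
  have hPcard : (P.card : ℝ) ≤ 18 * (R * ρ) := by
    refine card_le_of_inStrip (fun q hq => ?_) (hT p hp i) (hT p hp j) (by grind)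
    obtain ⟨r, hr, rfl⟩ := Finset.mem_image.1 hq
    exact hT _ (Finset.mem_product.1 hr).1 _
  have hTcard : T.card ≤ (Fintype.piFinset fun _ : Fin n => P).card := by
    refine Finset.card_le_card_of_injOn (fun p i => (p.1 i, p.2 i)) (fun p hp => ?_) ?_
    · exact Finset.mem_coe.2 (Fintype.mem_piFinset.2 fun i => Finset.mem_image.2
        ⟨(p, i), Finset.mem_product.2 ⟨hp, Finset.mem_univ i⟩, rfl⟩)
    · exact fun p _ q _ hpq => Prod.ext (funext fun i => congrArg Prod.fst (congrFun hpq i))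
        (funext fun i => congrArg Prod.snd (congrFun hpq i))
  rw [Fintype.card_piFinset, Finset.prod_const, Finset.card_univ, Fintype.card_fin] at hTcard
  calc (T.card : ℝ) ≤ (P.card : ℝ) ^ n := by exact_mod_cast hTcard
    _ ≤ _ := pow_le_pow_left₀ (Nat.cast_nonneg _) hPcard n

theorem sum_inv_minorNorm_le (hκ : 0 < κ) (hS : 0 < S) (x y : Fin n → ℝ)
    {T : Finset ((Fin n → ℤ) × (Fin n → ℤ))}
    (hT : ∀ p ∈ T, minorNorm p.1 p.2 ≠ 0 ∧ (x, y) ∈ pairSet B a κ S p.1 p.2) :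
    ∑ p ∈ T, (minorNorm p.1 p.2 ^ n)⁻¹ ≤ (288 * n ^ 2 / κ) ^ n := by
  obtain rfl | ⟨p, hp⟩ := T.eq_empty_or_nonempty
  · rw [Finset.sum_empty]
    positivity
  have hn : 0 < n := Fin.pos a
  set e := gap a x y
  have hcard : (T.card : ℝ) ≤ (18 * (2 * S * (2 * e))) ^ n :=
    card_le_pow_of_inStrip (fun q hq => (hT q hq).2.2.1) hp (hT p hp).1
  have he : 0 < e := by
    refine (gap_nonneg a x y).lt_of_ne fun he => ?_
    have hone : (1 : ℝ) ≤ T.card := by exact_mod_cast Finset.card_pos.2 ⟨p, hp⟩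
    rw [show e = 0 from he.symm, mul_zero, mul_zero, mul_zero, zero_pow hn.ne'] at hcard
    linarith
  calc ∑ p ∈ T, (minorNorm p.1 p.2 ^ n)⁻¹
      ≤ ∑ _p ∈ T, ((κ * S * e / (4 * n ^ 2)) ^ n)⁻¹ := by
        refine Finset.sum_le_sum fun q hq => ?_
        refine inv_anti₀ (by positivity) (pow_le_pow_left₀ (by positivity) ?_ n)
        rw [div_le_iff₀ (by positivity), mul_comm (minorNorm _ _)]
        exact (hT q hq).2.2.2
    _ ≤ (18 * (2 * S * (2 * e))) ^ n * ((κ * S * e / (4 * n ^ 2)) ^ n)⁻¹ := by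
        rw [Finset.sum_const, nsmul_eq_mul]
        exact mul_le_mul_of_nonneg_right hcard (by positivity)
    _ = (288 * n ^ 2 / κ) ^ n := by
        rw [← div_eq_mul_inv, ← div_pow]
        congr 1
        field_simp
        norm_num

theorem volume_frameBox_inter_vecMul_vecMul_mem_le {v w : Fin n → ℝ} (h : minorNorm v w ≠ 0)
    {E : Set ((Fin n → ℝ) × (Fin n → ℝ))} (hE : MeasurableSet E) :
    volume (frameBox n ∩ {A | (v ᵥ* of A, w ᵥ* of A) ∈ E}) ≤
      (ENNReal.ofReal (minorNorm v w ^ n))⁻¹ * volume E := by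
  have : Nonempty (Fin n × Fin n) := by
    by_contra hempty
    rw [not_nonempty_iff] at hempty
    exact h (norm_of_subsingleton _)
  obtain ⟨⟨i, j⟩, hij⟩ := exists_abs_eq_norm fun q : Fin n × Fin n => v q.1 * w q.2 - v q.2 * w q.1
  have hind : Measurable (E.indicator (1 : (Fin n → ℝ) × (Fin n → ℝ) → ℝ≥0∞)) :=
    measurable_one.indicator hE
  have hEA : MeasurableSet {A : Fin n → Fin n → ℝ | (v ᵥ* of A, w ᵥ* of A) ∈ E} :=
    measurable_vecMul_of v |>.prodMk (measurable_vecMul_of w) hE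
  calc volume (frameBox n ∩ {A | (v ᵥ* of A, w ᵥ* of A) ∈ E})
      = ∫⁻ A in frameBox n, E.indicator 1 (v ᵥ* of A, w ᵥ* of A) := by
        rw [Set.inter_comm, ← Measure.restrict_apply hEA, ← lintegral_indicator_one hEA]
        rfl
    _ ≤ (ENNReal.ofReal (|v i * w j - v j * w i| ^ n))⁻¹ * ∫⁻ x, ∫⁻ y, E.indicator 1 (x, y) :=
        setLIntegral_frameBox_comp_vecMul_vecMul_le (φ := fun x y => E.indicator 1 (x, y)) hind
          (abs_ne_zero.1 (hij.trans_ne h))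
    _ = _ := by
        rw [hij, ← lintegral_prod _ hind.aemeasurable, ← Measure.volume_eq_prod,
          lintegral_indicator_one hE]
        rfl

theorem sum_volume_hitSet_inter_le_of_minorNorm_ne_zero (hB : MeasurableSet B) (hκ : 0 < κ)
    (hS : 0 < S) (hBS : B ⊆ sector a κ S) {T : Finset ((Fin n → ℤ) × (Fin n → ℤ))}
    (hT : ∀ p ∈ T, minorNorm p.1 p.2 ≠ 0) :
    ∑ p ∈ T, volume (hitSet B p.1 ∩ hitSet B p.2) ≤
      ENNReal.ofReal ((288 * n ^ 2 / κ) ^ n) * volume B ^ 2 := by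
  classical
  have hpair (p : (Fin n → ℤ) × (Fin n → ℤ)) (hp : p ∈ T) :
      volume (hitSet B p.1 ∩ hitSet B p.2) ≤
        ENNReal.ofReal ((minorNorm p.1 p.2 ^ n)⁻¹) *
          volume (pairSet B a κ S p.1 p.2 ∩ B ×ˢ B) := by
    have hpos : 0 < minorNorm p.1 p.2 := (minorNorm_nonneg _ _).lt_of_ne (hT p hp).symm
    have hpairB : pairSet B a κ S p.1 p.2 ⊆ B ×ˢ B := fun q hq => hq.1
    rw [Set.inter_eq_left.2 hpairB, ENNReal.ofReal_inv_of_pos (by positivity),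
      ← minorNorm_realVec]
    refine le_trans (measure_mono fun A hA => ?_) (volume_frameBox_inter_vecMul_vecMul_mem_le
      (minorNorm_realVec p.1 p.2 ▸ hT p hp) (measurableSet_pairSet hB a κ S p.1 p.2))
    exact ⟨hA.1.1, mem_pairSet_of_mem_hitSet hκ hS hBS hA.1 hA.2⟩
  calc ∑ p ∈ T, volume (hitSet B p.1 ∩ hitSet B p.2)
      ≤ ∑ p ∈ T, ENNReal.ofReal ((minorNorm p.1 p.2 ^ n)⁻¹) *
          volume (pairSet B a κ S p.1 p.2 ∩ B ×ˢ B) := Finset.sum_le_sum hpair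
    _ = ∫⁻ q in B ×ˢ B, ∑ p ∈ T with q ∈ pairSet B a κ S p.1 p.2,
          ENNReal.ofReal ((minorNorm p.1 p.2 ^ n)⁻¹) :=
        (setLIntegral_sum_filter_mem volume T
          (fun p => measurableSet_pairSet hB a κ S p.1 p.2) _ _).symm
    _ ≤ ∫⁻ _ in B ×ˢ B, ENNReal.ofReal ((288 * n ^ 2 / κ) ^ n) := by
        refine lintegral_mono fun q => ?_
        rw [← ENNReal.ofReal_sum_of_nonneg fun p _ =>
          inv_nonneg.2 (pow_nonneg (minorNorm_nonneg _ _) n)]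
        refine ENNReal.ofReal_le_ofReal (sum_inv_minorNorm_le (B := B) (a := a) hκ hS q.1 q.2
          fun p hp => ?_)
        exact ⟨hT p (Finset.mem_filter.1 hp).1, (Finset.mem_filter.1 hp).2⟩
    _ = _ := by
        rw [setLIntegral_const, Measure.volume_eq_prod, Measure.prod_prod, sq (volume B)]

theorem sum_volume_hitSet_inter_le_of_minorNorm_eq_zero (hn : 2 ≤ n) (hB : MeasurableSet B)
    (hκ : 0 < κ) (hS : 1 ≤ S) (hBS : B ⊆ sector a κ S) :
    ∑ p ∈ puncturedIntBall n (2 * S) ×ˢ puncturedIntBall n (2 * S) with minorNorm p.1 p.2 = 0,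
        volume (hitSet B p.1 ∩ hitSet B p.2) ≤
      ENNReal.ofReal ((12 / κ) ^ n) * ENNReal.ofReal ((3 + 2 * Real.log (2 * S)) ^ n) *
        volume B := by
  have hpair {p : (Fin n → ℤ) × (Fin n → ℤ)}
      (hp : p.1 ∈ puncturedIntBall n (2 * S)) : volume (hitSet B p.1 ∩ hitSet B p.2) ≤
        (ENNReal.ofReal ((κ * S / 2) ^ n))⁻¹ * volume B := by
    obtain h | h := (hitSet B p.1).eq_empty_or_nonempty
    · simp [h]
    · calc volume (hitSet B p.1 ∩ hitSet B p.2) ≤ volume (hitSet B p.1) :=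
            measure_mono Set.inter_subset_left
        _ ≤ (ENNReal.ofReal (‖p.1‖ ^ n))⁻¹ * volume B :=
            volume_hitSet_le hB (Finset.ne_of_mem_erase hp)
        _ ≤ _ := by
            gcongr
            exact le_norm_of_hitSet_nonempty hBS h
  refine (Finset.sum_le_sum fun p hp =>
    hpair (Finset.mem_product.1 (Finset.mem_filter.1 hp).1).1).trans ?_
  rw [Finset.sum_const, nsmul_eq_mul, ← mul_assoc]
  refine mul_le_mul_left ?_ _
  rw [← ENNReal.ofReal_natCast, ← ENNReal.ofReal_inv_of_pos (by positivity),
    ← ENNReal.ofReal_mul (by positivity), ← ENNReal.ofReal_mul (by positivity)]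
  refine ENNReal.ofReal_le_ofReal ?_
  calc _ ≤ (3 * (2 * S)) ^ n * (3 + 2 * Real.log (2 * S)) ^ n * ((κ * S / 2) ^ n)⁻¹ :=
        mul_le_mul_of_nonneg_right (card_collinear_le hn (by linarith)) (by positivity)
    _ = _ := by
        rw [mul_right_comm, ← inv_pow, ← mul_pow]
        congr 2
        field_simp
        norm_num

theorem ofReal_mul_volume_le_sum_volume_inter_closedBall (hB : MeasurableSet B) {R r ρ : ℝ}
    (hρ : 1 ≤ ρ) (hlarge : ∀ x ∈ B, ρ < ‖x‖) (hsmall : ∀ x ∈ B, ‖x‖ ≤ r) (hR : r + ρ ≤ R) :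
    ENNReal.ofReal (ρ ^ n) * volume B ≤
      ∑ m ∈ puncturedIntBall n R, volume (Metric.closedBall (realVec m) ρ ∩ B) := by
  classical
  have hsum := setLIntegral_sum_filter_mem volume (puncturedIntBall n R)
    (H := fun m => Metric.closedBall (realVec m) ρ)
    (fun m => Metric.isClosed_closedBall.measurableSet) 1 B
  simp only [Pi.one_apply, one_mul] at hsum
  rw [← hsum, ← setLIntegral_const]
  refine setLIntegral_mono' hB fun x hx => ?_
  rw [Finset.sum_const, nsmul_eq_mul, mul_one, ← ENNReal.ofReal_natCast]
  refine ENNReal.ofReal_le_ofReal (pow_le_card_of_forall_norm_sub_le (x := x) hρ fun m hm => ?_)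
  have hmR : ‖m‖ ≤ R := by
    have htri := norm_sub_norm_le (realVec m) x
    rw [norm_sub_rev, norm_realVec] at htri
    linarith [hsmall x hx]
  have hm0 : m ≠ 0 := by
    rintro rfl
    have hzero : realVec (0 : Fin n → ℤ) = 0 := norm_eq_zero.1 (by rw [norm_realVec, norm_zero])
    rw [hzero, sub_zero] at hm
    linarith [hlarge x hx]
  exact Finset.mem_filter.2 ⟨(mem_puncturedIntBall ((norm_nonneg m).trans hmR)).2 ⟨hm0, hmR⟩,
    mem_closedBall_iff_norm.2 hm⟩

theorem le_volume_hitSet (hB : MeasurableSet B) (hκ : 0 < κ) (hS : 0 < S) (hBS : B ⊆ sector a κ S)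
    {m : Fin n → ℤ} (hm : m ∈ puncturedIntBall n (2 * S)) :
    ENNReal.ofReal (((1 / (2 * (n : ℝ) ^ 2)) ^ n) ^ (n - 1)) *
      ((ENNReal.ofReal ((2 * S) ^ n))⁻¹ *
        volume (Metric.closedBall (realVec m) (κ * S / (8 * n)) ∩ B)) ≤ volume (hitSet B m) := by
  obtain h | ⟨x, hx, hxB⟩ :=
    (Metric.closedBall (realVec m) (κ * S / (8 * n)) ∩ B).eq_empty_or_nonempty
  · simp [h]
  have hn : (1 : ℝ) ≤ n := by exact_mod_cast Fin.pos a
  have hmS := (mem_puncturedIntBall (by linarith)).1 hm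
  have hρ : κ * S / (8 * n) ≤ κ * S / 2 :=
    div_le_div_of_nonneg_left (by positivity) (by norm_num) (by linarith)
  have hmκ : κ * S / 2 ≤ ‖realVec m‖ := by
    have hxa : |x a| ≤ ‖x‖ := norm_le_pi_norm x a
    linarith [norm_sub_norm_le x (realVec m), mem_closedBall_iff_norm.1 hx, (hBS hxB).2]
  refine le_trans ?_ ((le_volume_frameBox_inter_vecMul_mem (realVec_ne_zero hmS.1)
    (E := Metric.closedBall (realVec m) (κ * S / (8 * n)) ∩ B)
    (Metric.isClosed_closedBall.measurableSet.inter hB) ?_).trans (measure_mono ?_))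
  · rw [norm_realVec]
    gcongr
    exact hmS.2
  · refine Set.inter_subset_left.trans (Metric.closedBall_subset_closedBall ?_)
    calc κ * S / (8 * n) = κ * S / 2 / (4 * n) := by
          field_simp
          norm_num
      _ ≤ ‖realVec m‖ / (4 * n) := by gcongr
  · exact Set.inter_subset_inter_right _ fun A hA => hA.2

theorem le_sum_volume_hitSet (hB : MeasurableSet B) (hκ : 0 < κ) (hκ1 : κ ≤ 1)
    (hS : 8 * n / κ ≤ S) (hBS : B ⊆ sector a κ S) :
    ENNReal.ofReal (((1 / (2 * (n : ℝ) ^ 2)) ^ n) ^ (n - 1) * (κ / (16 * n)) ^ n) * volume B ≤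
      ∑ m ∈ puncturedIntBall n (2 * S), volume (hitSet B m) := by
  have hn : (1 : ℝ) ≤ n := by exact_mod_cast Fin.pos a
  have hSpos : 0 < S := lt_of_lt_of_le (by positivity) hS
  set ρ : ℝ := κ * S / (8 * n) with hρ
  have hρ1 : 1 ≤ ρ := by
    rw [div_le_iff₀ hκ] at hS
    rw [hρ, le_div_iff₀ (by positivity)]
    linarith
  have hρS : ρ ≤ κ * S / 8 :=
    div_le_div_of_nonneg_left (by positivity) (by norm_num) (by linarith)
  have hκS : κ * S ≤ S := mul_le_of_le_one_left hSpos.le hκ1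
  have hratio : (ENNReal.ofReal ((2 * S) ^ n))⁻¹ * ENNReal.ofReal (ρ ^ n) =
      ENNReal.ofReal ((κ / (16 * n)) ^ n) := by
    rw [← ENNReal.ofReal_inv_of_pos (by positivity), ← ENNReal.ofReal_mul (by positivity),
      ← inv_pow, ← mul_pow, hρ]
    congr 2
    field_simp
    norm_num
  have hballs := ofReal_mul_volume_le_sum_volume_inter_closedBall hB (R := 2 * S) hρ1
    (fun x hx => by
      have hxa : |x a| ≤ ‖x‖ := norm_le_pi_norm x a
      linarith [(hBS hx).2, mul_pos hκ hSpos])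
    (fun x hx => (hBS hx).1) (by linarith)
  refine le_trans ?_ (Finset.sum_le_sum fun m hm => le_volume_hitSet hB hκ hSpos hBS hm)
  rw [← Finset.mul_sum, ← Finset.mul_sum]
  refine le_trans (le_of_eq ?_) (mul_le_mul_right (mul_le_mul_right hballs _) _)
  rw [ENNReal.ofReal_mul (by positivity), ← hratio, mul_assoc, mul_assoc]

theorem sum_volume_hitSet_inter_le (hn : 2 ≤ n) (hB : MeasurableSet B) (hκ : 0 < κ) (hS : 1 ≤ S)
    (hBS : B ⊆ sector a κ S)
    (hvol : ENNReal.ofReal ((3 + 2 * Real.log (2 * S)) ^ n) ≤ volume B) :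
    ∑ p ∈ puncturedIntBall n (2 * S) ×ˢ puncturedIntBall n (2 * S),
        volume (hitSet B p.1 ∩ hitSet B p.2) ≤
      ENNReal.ofReal ((12 / κ) ^ n + (288 * n ^ 2 / κ) ^ n) * volume B ^ 2 := by
  rw [← Finset.sum_filter_add_sum_filter_not _ fun p => minorNorm p.1 p.2 = 0,
    ENNReal.ofReal_add (by positivity) (by positivity), add_mul]
  refine add_le_add ((sum_volume_hitSet_inter_le_of_minorNorm_eq_zero hn hB hκ hS hBS).trans ?_)
    (sum_volume_hitSet_inter_le_of_minorNorm_ne_zero hB hκ (by linarith) hBS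
      fun p hp => (Finset.mem_filter.1 hp).2)
  rw [sq, ← mul_assoc]
  gcongr

/-- A region `B` of a sector hits the lattice of a frame near the identity with probability bounded
below, as soon as its volume exceeds the logarithmic contribution of the collinear pairs to the
second moment. -/
theorem exists_le_volume_iUnion_hitSet (hn : 2 ≤ n) (hκ : 0 < κ) (hκ1 : κ ≤ 1) :
    ∃ c > (0 : ℝ≥0∞), ∀ (a : Fin n) (S : ℝ) (B : Set (Fin n → ℝ)), MeasurableSet B →
      8 * n / κ ≤ S → B ⊆ sector a κ S →
      ENNReal.ofReal ((3 + 2 * Real.log (2 * S)) ^ n) ≤ volume B →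
      c ≤ volume (⋃ m ≠ 0, hitSet B m) := by
  have hn1 : (1 : ℝ) ≤ n := by exact_mod_cast one_le_two.trans hn
  set c₁ := ENNReal.ofReal (((1 / (2 * (n : ℝ) ^ 2)) ^ n) ^ (n - 1) * (κ / (16 * n)) ^ n) with hc₁
  set c₂ := ENNReal.ofReal ((12 / κ) ^ n + (288 * n ^ 2 / κ) ^ n)
  have hc₁0 : c₁ ≠ 0 := by
    rw [hc₁]
    positivity
  refine ⟨c₁ ^ 2 / c₂, ENNReal.div_pos (pow_ne_zero 2 hc₁0) ofReal_ne_top,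
    fun a S B hB hS hBS hvol => ?_⟩
  have hS1 : 1 ≤ S := by
    refine le_trans ?_ hS
    rw [le_div_iff₀ hκ]
    linarith
  have hvol0 : volume B ≠ 0 := by
    have hlog : 0 ≤ Real.log (2 * S) := Real.log_nonneg (by linarith)
    exact (lt_of_lt_of_le (ENNReal.ofReal_pos.2 (by positivity)) hvol).ne'
  have hvoltop : volume B ≠ ∞ := by
    refine ne_top_of_le_ne_top (measure_closedBall_lt_top (x := (0 : Fin n → ℝ)) (r := S)).ne
      (measure_mono fun x hx => mem_closedBall_zero_iff.2 (hBS hx).1)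
  set U := ⋃ m ∈ puncturedIntBall n (2 * S), hitSet B m
  have hUsub : U ⊆ ⋃ m ≠ 0, hitSet B m :=
    Set.biUnion_mono (fun m hm => Finset.ne_of_mem_erase hm) fun _ _ => le_rfl
  have hmoments : c₁ ^ 2 * volume B ^ 2 ≤ c₂ * volume U * volume B ^ 2 :=
    calc c₁ ^ 2 * volume B ^ 2 = (c₁ * volume B) ^ 2 := (mul_pow _ _ _).symm
      _ ≤ (∑ m ∈ puncturedIntBall n (2 * S), volume (hitSet B m)) ^ 2 := by
          gcongr
          exact le_sum_volume_hitSet hB hκ hκ1 hS hBS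
      _ ≤ _ := sq_sum_measure_le_mul_measure_biUnion volume _ (measurableSet_hitSet hB)
      _ ≤ c₂ * volume B ^ 2 * volume U := by
          gcongr
          exact sum_volume_hitSet_inter_le hn hB hκ hS1 hBS hvol
      _ = c₂ * volume U * volume B ^ 2 := mul_right_comm _ _ _
  refine le_trans (ENNReal.div_le_of_le_mul' ?_) (measure_mono hUsub)
  exact (ENNReal.mul_le_mul_iff_left (pow_ne_zero 2 hvol0) (ENNReal.pow_ne_top hvoltop)).1 hmoments

end Moments

section UnipotentGrowth

theorem one_add_pow_of_pow_eq_zero {R : Type*} [Ring R] {N : R} {d k : ℕ} (hN : N ^ (d + 1) = 0)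
    (hk : d ≤ k) : (1 + N) ^ k = ∑ i ∈ Finset.range (d + 1), k.choose i • N ^ i := by
  have hsub : Finset.range (d + 1) ⊆ Finset.range (k + 1) :=
    Finset.range_subset_range.2 (by omega)
  rw [add_comm, (Commute.one_right N).add_pow, ← Finset.sum_subset hsub]
  · exact Finset.sum_congr rfl fun i _ => by rw [one_pow, mul_one, nsmul_eq_mul, Nat.cast_comm]
  · intro i _ hi
    rw [pow_eq_zero_of_le (by simpa using hi) hN, zero_mul, zero_mul]

theorem tendsto_choose_div_pow_self (d : ℕ) :
    Tendsto (fun k : ℕ => (k.choose d : ℝ) / k ^ d) atTop (nhds (d.factorial : ℝ)⁻¹) := by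
  refine (((isEquivalent_choose d).div
    (Asymptotics.IsEquivalent.refl (u := fun k : ℕ => (k : ℝ) ^ d))).symm.tendsto_nhds ?_)
  refine tendsto_const_nhds.congr' ?_
  filter_upwards [eventually_gt_atTop 0] with k hk
  simp only [Pi.div_apply]
  field_simp

theorem tendsto_choose_div_pow_of_lt {i d : ℕ} (hid : i < d) :
    Tendsto (fun k : ℕ => (k.choose i : ℝ) / k ^ d) atTop (nhds 0) :=
  ((isTheta_choose i).isBigO.trans_isLittleO ((Asymptotics.isLittleO_pow_pow_atTop_of_lt
    hid).comp_tendsto tendsto_natCast_atTop_atTop)).tendsto_div_nhds_zero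

theorem tendsto_inv_pow_smul_one_add_pow {R : Type*} [Ring R] [TopologicalSpace R]
    [ContinuousAdd R] [Module ℝ R] [ContinuousSMul ℝ R] {N : R} {d : ℕ} (hN : N ^ (d + 1) = 0) :
    Tendsto (fun k : ℕ => ((k : ℝ) ^ d)⁻¹ • (1 + N) ^ k) atTop
      (nhds ((d.factorial : ℝ)⁻¹ • N ^ d)) := by
  have hterm : ∀ i ∈ Finset.range d, Tendsto (fun k : ℕ => ((k.choose i : ℝ) / k ^ d) • N ^ i) atTop
      (nhds 0) := fun i hi => by
    simpa using (tendsto_choose_div_pow_of_lt (Finset.mem_range.1 hi)).smul_const (N ^ i)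
  have hsum := (tendsto_finsetSum _ hterm).add
    ((tendsto_choose_div_pow_self d).smul_const (N ^ d))
  rw [Finset.sum_const_zero, zero_add] at hsum
  refine hsum.congr' ?_
  filter_upwards [eventually_ge_atTop d] with k hk
  rw [← Finset.sum_range_succ (fun i => ((k.choose i : ℝ) / k ^ d) • N ^ i),
    one_add_pow_of_pow_eq_zero hN hk, Finset.smul_sum]
  refine Finset.sum_congr rfl fun i _ => ?_
  rw [← Nat.cast_smul_eq_nsmul ℝ, smul_smul, div_eq_inv_mul]

variable {n d : ℕ} {N : Matrix (Fin n) (Fin n) ℝ} {a : Fin n} {W : Set (Fin n → ℝ)}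

theorem eventually_one_add_pow_mulVec_growth (hN : N ^ (d + 1) = 0) (hW : IsCompact W)
    (hlead : ∀ w ∈ W, 1 / 2 ≤ (N ^ d *ᵥ w) a) :
    ∃ c > (0 : ℝ), ∃ C > (0 : ℝ), ∀ᶠ k : ℕ in atTop, ∀ w ∈ W,
      c * (k : ℝ) ^ d ≤ |((1 + N) ^ k *ᵥ w) a| ∧ ‖(1 + N) ^ k *ᵥ w‖ ≤ C * (k : ℝ) ^ d := by
  set L := (d.factorial : ℝ)⁻¹ • N ^ d
  obtain ⟨C, hC⟩ := hW.exists_bound_of_continuousOn (f := fun w => L *ᵥ w) (by fun_prop)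
  have hlimit (w : Fin n → ℝ) (hw : w ∈ W) : 1 / (4 * d.factorial) < |(L *ᵥ w) a| := by
    refine lt_of_lt_of_le ?_ (le_abs_self _)
    rw [smul_mulVec, Pi.smul_apply, smul_eq_mul, div_lt_iff₀ (by positivity)]
    field_simp
    linarith [hlead w hw]
  have hnear : ∀ᶠ M in nhds L, ∀ w ∈ W,
      1 / (4 * d.factorial) < |(M *ᵥ w) a| ∧ ‖M *ᵥ w‖ < |C| + 1 := by
    refine hW.eventually_forall_of_forall_eventually fun w hw => ?_
    have hcont : Continuous fun z : Matrix (Fin n) (Fin n) ℝ × (Fin n → ℝ) => z.1 *ᵥ z.2 :=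
      continuous_fst.matrix_mulVec continuous_snd
    exact ((((continuous_apply a).comp hcont).abs.tendsto (L, w)).eventually_const_lt
      (hlimit w hw)).and ((hcont.norm.tendsto (L, w)).eventually_lt_const
        (by linarith [hC w hw, le_abs_self C]))
  refine ⟨1 / (4 * d.factorial), by positivity, |C| + 1, by positivity, ?_⟩
  filter_upwards [(tendsto_inv_pow_smul_one_add_pow hN).eventually hnear,
    eventually_gt_atTop 0] with k hk hk0 w hw
  have hkd : (0 : ℝ) < (k : ℝ) ^ d := by positivity
  have hlow := (hk w hw).1
  have hup := (hk w hw).2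
  rw [smul_mulVec, Pi.smul_apply, smul_eq_mul, abs_mul, abs_of_pos (inv_pos.2 hkd),
    lt_inv_mul_iff₀' hkd] at hlow
  rw [smul_mulVec, norm_smul, Real.norm_of_nonneg (inv_pos.2 hkd).le, inv_mul_lt_iff₀' hkd] at hup
  exact ⟨hlow.le, hup.le⟩

end UnipotentGrowth

section ReturnRegions

variable {n d : ℕ} {N : Matrix (Fin n) (Fin n) ℝ} {a : Fin n} {W : Set (Fin n → ℝ)}

/-- The points `r Q ^ k w` with `w ∈ W` and `T ≤ k < 2T`. -/
def orbitRegion (Q : Matrix (Fin n) (Fin n) ℝ) (W : Set (Fin n → ℝ)) (r : ℝ) (T : ℕ) :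
    Set (Fin n → ℝ) :=
  ⋃ k ∈ Finset.Ico T (2 * T), (fun w => (r • Q ^ k) *ᵥ w) '' W

theorem measurableSet_orbitRegion (hW : IsCompact W) (Q : Matrix (Fin n) (Fin n) ℝ) (r : ℝ)
    (T : ℕ) : MeasurableSet (orbitRegion Q W r T) :=
  Finset.measurableSet_biUnion _ fun _ _ => (hW.image (by fun_prop)).measurableSet

theorem pow_mul_one_add_pow {R : Type*} [Ring R] {N : R} (hN : N ^ (d + 2) = 0) (j : ℕ) :
    N ^ d * (1 + N) ^ j = N ^ d + j • N ^ (d + 1) := by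
  induction j with
  | zero => rw [pow_zero, mul_one, zero_smul, add_zero]
  | succ j ih =>
    rw [pow_succ, ← mul_assoc, ih, add_mul, mul_add, mul_one, ← pow_succ, smul_mul_assoc, mul_add,
      ← pow_succ, hN, mul_one, add_zero, add_smul, one_smul]
    abel

/-- A set of positive volume where the `a`-th coordinates of the two leading coefficients of
`k ↦ (1 + N) ^ k w` are under control: the last one is bounded below, the previous one oscillates
too little to make up for a step in `k`. -/
structure IsWindow (N : Matrix (Fin n) (Fin n) ℝ) (d : ℕ) (a : Fin n) (W : Set (Fin n → ℝ)) :
    Prop where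
  isCompact : IsCompact W
  volume_pos : 0 < volume W
  le_lead : ∀ w ∈ W, 1 / 2 ≤ (N ^ (d + 1) *ᵥ w) a
  sub_lt : ∀ w ∈ W, ∀ w' ∈ W, (N ^ d *ᵥ w) a - (N ^ d *ᵥ w') a < 1 / 2

theorem exists_isWindow (hd : N ^ (d + 1) ≠ 0) : ∃ a W, IsWindow N d a W := by
  obtain ⟨a, b, hab⟩ : ∃ a b, (N ^ (d + 1)) a b ≠ 0 := by
    by_contra! h
    exact hd (Matrix.ext h)
  have hcont (M : Matrix (Fin n) (Fin n) ℝ) : Continuous fun w : Fin n → ℝ => (M *ᵥ w) a := by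
    fun_prop
  set w₀ : Fin n → ℝ := Pi.single b ((N ^ (d + 1)) a b)⁻¹
  have hlead : 1 / 2 < (N ^ (d + 1) *ᵥ w₀) a := by
    have hone : (N ^ (d + 1) *ᵥ w₀) a = 1 := by
      rw [mulVec_single]
      exact mul_inv_cancel₀ hab
    rw [hone]
    norm_num
  obtain ⟨δ, hδ, hball⟩ := Metric.nhds_basis_closedBall.eventually_iff.1
    (((hcont (N ^ (d + 1))).continuousAt.eventually_const_lt hlead).and
      ((hcont (N ^ d)).continuousAt.eventually
        (Metric.ball_mem_nhds _ (by norm_num : (0 : ℝ) < 1 / 4))))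
  refine ⟨a, Metric.closedBall w₀ δ, isCompact_closedBall w₀ δ,
    Metric.measure_closedBall_pos volume w₀ hδ, fun w hw => (hball hw).1.le, fun w hw w' hw' => ?_⟩
  linarith [abs_lt.1 (Real.dist_eq _ _ ▸ (hball hw).2), abs_lt.1 (Real.dist_eq _ _ ▸ (hball hw').2)]

namespace IsWindow

theorem disjoint_image (hW : IsWindow N d a W) (hN : N ^ (d + 2) = 0) (hdet : (1 + N).det ≠ 0)
    {r : ℝ} (hr : r ≠ 0) {k l : ℕ} (hkl : k < l) :
    Disjoint ((fun w => (r • (1 + N) ^ k) *ᵥ w) '' W) ((fun w => (r • (1 + N) ^ l) *ᵥ w) '' W) := by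
  rw [Set.disjoint_left]
  rintro _ ⟨w, hw, rfl⟩ ⟨w', hw', heq⟩
  obtain ⟨j, rfl⟩ := Nat.exists_eq_add_of_lt hkl
  have hunit : IsUnit (r • (1 + N) ^ k) := by
    rw [isUnit_iff_isUnit_det, det_smul, det_pow]
    exact (mul_ne_zero (pow_ne_zero _ hr) (pow_ne_zero _ hdet)).isUnit
  have hflow : w = (1 + N) ^ (j + 1) *ᵥ w' := by
    refine mulVec_injective_of_isUnit hunit ?_
    rw [mulVec_mulVec, smul_mul_assoc, ← pow_add, ← add_assoc]
    exact heq.symm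
  have hstep : (N ^ d *ᵥ w) a - (N ^ d *ᵥ w') a = (j + 1 : ℕ) * (N ^ (d + 1) *ᵥ w') a := by
    rw [hflow, mulVec_mulVec, pow_mul_one_add_pow hN, add_mulVec, smul_mulVec, Pi.add_apply,
      Pi.smul_apply, nsmul_eq_mul, add_sub_cancel_left]
  have hj : (1 : ℝ) ≤ (j + 1 : ℕ) := by exact_mod_cast Nat.le_add_left 1 j
  have hlead := hW.le_lead w' hw'
  linarith [hW.sub_lt w hw w' hw', le_mul_of_one_le_left (by linarith) hj]

theorem volume_orbitRegion (hW : IsWindow N d a W) (hN : N ^ (d + 2) = 0)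
    (hdet : (1 + N).det = 1) {r : ℝ} (hr : 0 < r) (T : ℕ) :
    volume (orbitRegion (1 + N) W r T) = ENNReal.ofReal (T * r ^ n * volume.real W) := by
  have hdisj : Set.PairwiseDisjoint (Finset.Ico T (2 * T) : Set ℕ)
      fun k => (fun w => (r • (1 + N) ^ k) *ᵥ w) '' W := fun k _ l _ hkl =>
    hkl.lt_or_gt.elim (hW.disjoint_image hN (hdet ▸ one_ne_zero) hr.ne')
      fun hlk => (hW.disjoint_image hN (hdet ▸ one_ne_zero) hr.ne' hlk).symm
  have himage (k : ℕ) : volume ((fun w => (r • (1 + N) ^ k) *ᵥ w) '' W) =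
      ENNReal.ofReal (r ^ n) * volume W := by
    have h := Measure.addHaar_image_linearMap volume (toLin' (r • (1 + N) ^ k)) W
    rwa [LinearMap.det_toLin', det_smul, det_pow, hdet, one_pow, mul_one, Fintype.card_fin,
      abs_of_pos (pow_pos hr n)] at h
  rw [orbitRegion, measure_biUnion_finset hdisj fun k _ =>
      (hW.isCompact.image (by fun_prop)).measurableSet,
    Finset.sum_congr rfl fun k _ => himage k, Finset.sum_const, Nat.card_Ico, nsmul_eq_mul,
    two_mul, Nat.add_sub_cancel, ENNReal.ofReal_mul (by positivity),
    ENNReal.ofReal_mul (by positivity), ofReal_natCast, mul_assoc,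
    ofReal_measureReal hW.isCompact.measure_lt_top.ne]

theorem eventually_orbitRegion_subset_sector (hW : IsWindow N d a W) (hN : N ^ (d + 2) = 0) :
    ∃ κ > 0, κ ≤ 1 ∧ ∃ C > 0, ∀ᶠ T : ℕ in atTop, ∀ r ≥ 0,
      orbitRegion (1 + N) W r T ⊆ sector a κ (C * (r * (T : ℝ) ^ (d + 1))) := by
  obtain ⟨c, hc, C, hC, hgrowth⟩ := eventually_one_add_pow_mulVec_growth hN hW.isCompact hW.le_lead
  refine ⟨min 1 (c / (C * 2 ^ (d + 1))), by positivity, min_le_left _ _, C * 2 ^ (d + 1),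
    by positivity, ?_⟩
  filter_upwards [eventually_forall_ge_atTop.2 hgrowth] with T hT r hr x hx
  obtain ⟨k, hk, w, hw, rfl⟩ := Set.mem_iUnion₂.1 hx
  rw [Finset.mem_Ico] at hk
  obtain ⟨hlow, hup⟩ := hT k hk.1 w hw
  have hTk : (T : ℝ) ≤ k := by exact_mod_cast hk.1
  have hkT : (k : ℝ) ≤ 2 * T := by exact_mod_cast hk.2.le
  constructor
  · calc ‖(r • (1 + N) ^ k) *ᵥ w‖ = r * ‖(1 + N) ^ k *ᵥ w‖ := by
          rw [smul_mulVec, norm_smul, Real.norm_of_nonneg hr]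
      _ ≤ r * (C * (2 * T) ^ (d + 1)) := by
          gcongr
          exact hup.trans (by gcongr)
      _ = C * 2 ^ (d + 1) * (r * T ^ (d + 1)) := by ring
  · calc min 1 (c / (C * 2 ^ (d + 1))) * (C * 2 ^ (d + 1) * (r * T ^ (d + 1)))
        ≤ c / (C * 2 ^ (d + 1)) * (C * 2 ^ (d + 1) * (r * T ^ (d + 1))) := by
          gcongr
          exact min_le_right _ _
      _ = r * (c * T ^ (d + 1)) := by field_simp
      _ ≤ r * |((1 + N) ^ k *ᵥ w) a| := by
          gcongr
          exact le_trans (by gcongr) hlow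
      _ = |((r • (1 + N) ^ k) *ᵥ w) a| := by
          rw [smul_mulVec, Pi.smul_apply, smul_eq_mul, abs_mul, abs_of_nonneg hr]

end IsWindow

end ReturnRegions

section ReturnSet

theorem isLittleO_add_mul_log_pow_rpow (a b : ℝ) {ε : ℝ} (hε : 0 < ε) {n : ℕ} (hn : n ≠ 0) :
    (fun x : ℝ => (a + b * Real.log x) ^ n) =o[atTop] fun x => x ^ ε := by
  have hn' : (0 : ℝ) < n := by exact_mod_cast Nat.pos_of_ne_zero hn
  have hlog : (fun x : ℝ => a + b * Real.log x) =o[atTop] fun x => x ^ (ε / n) :=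
    (Asymptotics.isLittleO_const_left.2 (Or.inr (tendsto_norm_atTop_atTop.comp
      (tendsto_rpow_atTop (by positivity))))).add
      ((isLittleO_log_rpow_atTop (by positivity)).const_mul_left b)
  refine (hlog.pow (Nat.pos_of_ne_zero hn)).congr' .rfl ?_
  filter_upwards [eventually_ge_atTop 0] with x hx
  rw [← Real.rpow_mul_natCast hx, div_mul_cancel₀ _ hn'.ne']

theorem le_measure_setOf_frequently_mem {α : Type*} [MeasurableSpace α] {μ : Measure α}
    {X : Set α} (hX : μ X ≠ ∞) {s : ℕ → Set α} (hs : ∀ k, MeasurableSet (s k))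
    (hsX : ∀ k, s k ⊆ X) {c : ℝ≥0∞} (hc : ∀ᶠ k in atTop, c ≤ μ (s k)) :
    c ≤ μ {x | ∃ᶠ k in atTop, x ∈ s k} := by
  have hlimsup : {x | ∃ᶠ k in atTop, x ∈ s k} = ⋂ k, ⋃ i ≥ k, s i := by
    ext x
    simp only [frequently_atTop, Set.mem_ofPred_eq, Set.mem_iInter, Set.mem_iUnion, exists_prop]
  rw [hlimsup]
  refine ge_of_tendsto (tendsto_measure_iInter_atTop
    (fun k => (MeasurableSet.biUnion (Set.to_countable _) fun i _ => hs i).nullMeasurableSet)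
    (fun k l hkl => Set.biUnion_subset_biUnion_left fun i hi => le_trans hkl hi)
    ⟨0, ne_top_of_le_ne_top hX (measure_mono (Set.iUnion₂_subset fun i _ => hsX i))⟩) ?_
  filter_upwards [hc] with k hk
  exact hk.trans (measure_mono (Set.subset_biUnion_of_mem (u := s) (le_refl k)))

variable {n d : ℕ} {N : Matrix (Fin n) (Fin n) ℝ} {a : Fin n} {W : Set (Fin n → ℝ)} {s : ℝ}

/-- For infinitely many `k`, the lattice spanned by the rows of `A` has a nonzero vector which
`P ^ k` brings to norm `O(k ^ s)`; the implied constant is taken in `ℕ` to keep the quantifier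
countable. -/
def HasShortVectors (P : Matrix (Fin n) (Fin n) ℝ) (s : ℝ) (A : Fin n → Fin n → ℝ) : Prop :=
  ∃ C : ℕ, ∃ᶠ k : ℕ in atTop, ∃ m : Fin n → ℤ, m ≠ 0 ∧
    ‖P ^ k *ᵥ (realVec m ᵥ* of A)‖ < C * (k : ℝ) ^ s

theorem IsWindow.exists_le_volume_hitSet_orbitRegion (hW : IsWindow N d a W) (hn : 2 ≤ n)
    (hN : N ^ (d + 2) = 0) (hdet : (1 + N).det = 1) (hs : -1 / (n : ℝ) < s) :
    ∃ c > 0, ∀ᶠ T : ℕ in atTop,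
      c ≤ volume (⋃ m ≠ 0, hitSet (orbitRegion (1 + N) W ((T : ℝ) ^ s) T) m) := by
  have hn' : (2 : ℝ) ≤ n := by exact_mod_cast hn
  have hvolexp : 0 < 1 + n * s := by
    rw [div_lt_iff₀ (by linarith)] at hs
    linarith
  have hradexp : 0 < (d : ℝ) + 1 + s := by
    nlinarith [d.cast_nonneg (α := ℝ)]
  obtain ⟨κ, hκ, hκ1, C, hC, hsector⟩ := hW.eventually_orbitRegion_subset_sector hN
  obtain ⟨c, hc, hhit⟩ := exists_le_volume_iUnion_hitSet hn hκ hκ1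
  refine ⟨c, hc, ?_⟩
  have hvol : 0 < volume.real W :=
    ENNReal.toReal_pos hW.volume_pos.ne' hW.isCompact.measure_lt_top.ne
  have hrad : Tendsto (fun T : ℕ => C * (T : ℝ) ^ ((d : ℝ) + 1 + s)) atTop atTop :=
    ((tendsto_rpow_atTop hradexp).comp tendsto_natCast_atTop_atTop).const_mul_atTop hC
  have hlog := (hrad.const_mul_atTop two_pos).eventually
    ((isLittleO_add_mul_log_pow_rpow 3 2 (div_pos hvolexp hradexp) (by omega : n ≠ 0)).def
      (c := volume.real W / (2 * C) ^ ((1 + n * s) / (d + 1 + s))) (by positivity))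
  filter_upwards [hsector, hrad.eventually_ge_atTop (8 * n / κ), hlog, eventually_gt_atTop 0]
    with T hT hTrad hTlog hT0
  have hTpos : (0 : ℝ) < T := by exact_mod_cast hT0
  have hradius : (T : ℝ) ^ s * (T : ℝ) ^ (d + 1) = (T : ℝ) ^ ((d : ℝ) + 1 + s) := by
    rw [add_comm _ s, Real.rpow_add hTpos, ← Nat.cast_add_one, Real.rpow_natCast]
  refine hhit a _ _ (measurableSet_orbitRegion hW.isCompact _ _ _) hTrad
    (hradius ▸ hT _ (by positivity)) ?_
  rw [hW.volume_orbitRegion hN hdet (by positivity)]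
  refine ENNReal.ofReal_le_ofReal ((le_abs_self _).trans (hTlog.trans_eq ?_))
  rw [Real.norm_of_nonneg (by positivity), ← mul_assoc 2,
    Real.mul_rpow (x := 2 * C) (y := (T : ℝ) ^ ((d : ℝ) + 1 + s)) (by positivity) (by positivity),
    ← Real.rpow_mul hTpos.le, mul_div_cancel₀ _ hradexp.ne', Real.rpow_add hTpos, Real.rpow_one,
    mul_comm (n : ℝ) s, Real.rpow_mul_natCast hTpos.le]
  field_simp

theorem hasShortVectors_of_frequently_mem_hitSet {P Q : Matrix (Fin n) (Fin n) ℝ} (hPQ : P * Q = 1)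
    (hW : IsCompact W) (hs : s ≤ 0) {A : Fin n → Fin n → ℝ}
    (hA : ∃ᶠ T : ℕ in atTop, A ∈ ⋃ m ≠ 0, hitSet (orbitRegion Q W ((T : ℝ) ^ s) T) m) :
    HasShortVectors P s A := by
  obtain ⟨K, hK⟩ := hW.exists_bound_of_continuousOn continuousOn_id
  refine ⟨⌈|K| * 2 ^ (-s)⌉₊ + 1, frequently_atTop.2 fun k₀ => ?_⟩
  obtain ⟨T, hT, hmem⟩ := frequently_atTop.1 hA (k₀ + 1)
  obtain ⟨m, hm, -, hhit⟩ := Set.mem_iUnion₂.1 hmem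
  obtain ⟨k, hk, w, hw, heq⟩ := Set.mem_iUnion₂.1 hhit
  rw [Finset.mem_Ico] at hk
  have hT0 : (0 : ℝ) < T := by exact_mod_cast (by omega : 0 < T)
  have hk0 : (0 : ℝ) < k := by exact_mod_cast (by omega : 0 < k)
  have hkT : (k : ℝ) ≤ 2 * T := by exact_mod_cast hk.2.le
  have hinv : P ^ k * Q ^ k = 1 := by
    rw [← (show Commute P Q from hPQ.trans (mul_eq_one_comm.1 hPQ).symm).mul_pow, hPQ, one_pow]
  have hrate : (T : ℝ) ^ s ≤ 2 ^ (-s) * (k : ℝ) ^ s :=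
    calc (T : ℝ) ^ s ≤ (k / 2) ^ s :=
          Real.rpow_le_rpow_of_nonpos (by positivity) (by linarith) hs
      _ = _ := by
          rw [Real.div_rpow hk0.le two_pos.le, Real.rpow_neg two_pos.le, div_eq_inv_mul]
  refine ⟨k, by omega, m, hm, ?_⟩
  calc ‖P ^ k *ᵥ (realVec m ᵥ* of A)‖ = (T : ℝ) ^ s * ‖w‖ := by
        rw [← heq, mulVec_mulVec, mul_smul_comm, hinv, smul_mulVec, one_mulVec, norm_smul,
          Real.norm_of_nonneg (by positivity)]
    _ ≤ 2 ^ (-s) * (k : ℝ) ^ s * |K| := by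
        gcongr
        exact (hK w hw).trans (le_abs_self K)
    _ = |K| * 2 ^ (-s) * (k : ℝ) ^ s := by ring
    _ < _ := by
        gcongr
        push_cast
        exact (Nat.le_ceil _).trans_lt (lt_add_one _)

theorem exists_pow_ne_zero_pow_succ_eq_zero {R : Type*} [Ring R] {x : R} (hx : IsNilpotent x)
    (hx0 : x ≠ 0) : ∃ d, x ^ (d + 1) ≠ 0 ∧ x ^ (d + 2) = 0 := by
  have : Nontrivial R := ⟨x, 0, hx0⟩
  have hclass : 1 < nilpotencyClass x := by
    have hone := (nilpotencyClass_eq_one (x := x)).not.2 hx0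
    have hpos := pos_nilpotencyClass_iff.2 hx
    omega
  obtain ⟨d, hd⟩ := Nat.exists_eq_add_of_le' hclass
  exact ⟨d, pow_pred_nilpotencyClass hx |> fun h => by rwa [hd] at h,
    hd ▸ pow_nilpotencyClass hx⟩

theorem volume_hasShortVectors_pos (hn : 2 ≤ n) {P : Matrix (Fin n) (Fin n) ℝ}
    (hPN : P * (1 + N) = 1) (hdet : (1 + N).det = 1) (hnil : IsNilpotent N) (hN0 : N ≠ 0)
    (hs : -1 / (n : ℝ) < s) (hs0 : s ≤ 0) :
    0 < volume (frameBox n ∩ {A | HasShortVectors P s A}) := by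
  obtain ⟨d, hd, hN⟩ := exists_pow_ne_zero_pow_succ_eq_zero hnil hN0
  obtain ⟨a, W, hW⟩ := exists_isWindow hd
  obtain ⟨c, hc, hhit⟩ := hW.exists_le_volume_hitSet_orbitRegion hn hN hdet hs
  have hbox : volume (frameBox n) ≠ ∞ :=
    (isCompact_univ_pi fun j => isCompact_closedBall _ _).measure_lt_top.ne
  refine hc.trans_le ((le_measure_setOf_frequently_mem hbox (fun T => ?_) (fun T => ?_) hhit).trans
    (measure_mono fun A hA =>
      ⟨?_, hasShortVectors_of_frequently_mem_hitSet hPN hW.isCompact hs0 hA⟩))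
  · exact MeasurableSet.biUnion (Set.to_countable _) fun m _ =>
      measurableSet_hitSet (measurableSet_orbitRegion hW.isCompact _ _ _) m
  · exact Set.iUnion₂_subset fun m _ => Set.inter_subset_left
  · exact Set.iUnion₂_subset (fun m _ => Set.inter_subset_left) hA.exists.choose_spec

end ReturnSet

section BorelCantelli

theorem measure_frequently_mem_eq_zero {α : Type*} [MeasurableSpace α] {μ : Measure α}
    {t : ℕ → Set α} {b : ℕ → ℝ} (hb : Summable b)
    (ht : ∀ᶠ k in atTop, μ (t k) ≤ ENNReal.ofReal (b k)) :
    μ {x | ∃ᶠ k in atTop, x ∈ t k} = 0 := by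
  obtain ⟨k₀, hk₀⟩ := eventually_atTop.1 ht
  have hsum : ∑' k, μ (t (k + k₀)) ≠ ∞ :=
    ne_top_of_le_ne_top ((summable_nat_add_iff k₀).2 hb).tsum_ofReal_ne_top
      (ENNReal.tsum_le_tsum fun k => hk₀ _ (Nat.le_add_left _ _))
  refine measure_mono_null (fun x hx => ?_) (measure_setOfPred_frequently_eq_zero hsum)
  rwa [Set.mem_ofPred_eq, ← map_add_atTop_eq_nat k₀, frequently_map] at hx

theorem exists_continuous_norm_mulVec_le (m n : ℕ) : ∃ f : Matrix (Fin m) (Fin n) ℝ → ℝ,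
    Continuous f ∧ ∀ M v, ‖M *ᵥ v‖ ≤ f M * ‖v‖ := by
  let F : Matrix (Fin m) (Fin n) ℝ →ₗ[ℝ] (Fin n → ℝ) →L[ℝ] (Fin m → ℝ) :=
    LinearMap.toContinuousLinearMap.toLinearMap ∘ₗ (toLin' (R := ℝ)).toLinearMap
  exact ⟨fun M => ‖F M‖, F.continuous_of_finiteDimensional.norm, fun M v => (F M).le_opNorm v⟩

variable {n : ℕ} {P N : Matrix (Fin n) (Fin n) ℝ} {s : ℝ}

theorem exists_eventually_norm_one_add_pow_mulVec_le (hN : IsNilpotent N) :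
    ∃ d : ℕ, ∃ D > (0 : ℝ), ∀ᶠ k : ℕ in atTop, ∀ w : Fin n → ℝ,
      ‖(1 + N) ^ k *ᵥ w‖ ≤ D * (k : ℝ) ^ d * ‖w‖ := by
  obtain ⟨d, hd⟩ := hN
  obtain ⟨f, hf, hfle⟩ := exists_continuous_norm_mulVec_le n n
  have hlim := (hf.tendsto _).comp
    (tendsto_inv_pow_smul_one_add_pow (pow_eq_zero_of_le d.le_succ hd))
  refine ⟨d, |f ((d.factorial : ℝ)⁻¹ • N ^ d)| + 1, by positivity, ?_⟩
  filter_upwards [hlim.eventually_le_const ((le_abs_self _).trans_lt (lt_add_one _)),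
    eventually_gt_atTop 0] with k hk hk0 w
  have hkd : (0 : ℝ) < (k : ℝ) ^ d := by positivity
  have hle := (hfle (((k : ℝ) ^ d)⁻¹ • (1 + N) ^ k) w).trans
    (mul_le_mul_of_nonneg_right hk (norm_nonneg w))
  rw [smul_mulVec, norm_smul, Real.norm_of_nonneg (inv_pos.2 hkd).le, inv_mul_le_iff₀ hkd] at hle
  exact hle.trans_eq (by ring)

theorem volume_norm_mulVec_lt_le (hP : P.det = 1) {r : ℝ} (hr : 0 ≤ r) :
    volume {w : Fin n → ℝ | ‖P *ᵥ w‖ < r} ≤ ENNReal.ofReal ((2 * r) ^ n) := by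
  obtain rfl | hr := hr.eq_or_lt
  · simp [(norm_nonneg _).not_gt]
  have hpre : {w : Fin n → ℝ | ‖P *ᵥ w‖ < r} = toLin' P ⁻¹' Metric.ball 0 r := by
    ext w
    rw [Set.mem_preimage, mem_ball_zero_iff, toLin'_apply, Set.mem_ofPred_eq]
  rw [hpre, Measure.addHaar_preimage_linearMap volume (by rw [LinearMap.det_toLin', hP]; norm_num),
    LinearMap.det_toLin', hP, inv_one, abs_one, ENNReal.ofReal_one, one_mul,
    Real.volume_pi_ball _ hr, Fintype.card_fin]

theorem volume_iUnion_hitSet_le {B : Set (Fin n → ℝ)} (hB : MeasurableSet B) {R : ℝ} (hR : 1 ≤ R)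
    (hBR : ∀ w ∈ B, 2 * ‖w‖ ≤ R) :
    volume (⋃ m ≠ 0, hitSet B m) ≤ ENNReal.ofReal ((3 + 2 * Real.log R) ^ n) * volume B := by
  have hsub : ⋃ m ≠ 0, hitSet B m ⊆ ⋃ m ∈ puncturedIntBall n R, hitSet B m := by
    refine Set.iUnion₂_subset fun m hm A hA => Set.mem_iUnion₂.2 ⟨m, ?_, hA⟩
    rw [mem_puncturedIntBall (by linarith), ← norm_realVec]
    exact ⟨hm, (norm_le_two_mul_norm_vecMul hA.1 _).trans (hBR _ hA.2)⟩
  calc volume (⋃ m ≠ 0, hitSet B m)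
      ≤ ∑ m ∈ puncturedIntBall n R, volume (hitSet B m) :=
        (measure_mono hsub).trans (measure_biUnion_finset_le _ _)
    _ ≤ ∑ m ∈ puncturedIntBall n R, ENNReal.ofReal ((‖m‖ ^ n)⁻¹) * volume B := by
        refine Finset.sum_le_sum fun m hm => ?_
        have hm0 := ((mem_puncturedIntBall (by linarith)).1 hm).1
        rw [ENNReal.ofReal_inv_of_pos (pow_pos (norm_pos_iff.2 hm0) n)]
        exact volume_hitSet_le hB hm0
    _ ≤ ENNReal.ofReal ((3 + 2 * Real.log R) ^ n) * volume B := by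
        rw [← Finset.sum_mul, ← ENNReal.ofReal_sum_of_nonneg fun m _ => by positivity]
        gcongr
        exact sum_inv_norm_pow_le hR

theorem two_mul_norm_le_of_norm_pow_mulVec_lt (hPN : P * (1 + N) = 1) {k : ℕ} {G c : ℝ}
    (hG : 0 ≤ G) (hgrow : ∀ w : Fin n → ℝ, ‖(1 + N) ^ k *ᵥ w‖ ≤ G * ‖w‖) {w : Fin n → ℝ}
    (hw : ‖P ^ k *ᵥ w‖ < c) : 2 * ‖w‖ ≤ 2 * (G * c) := by
  have hinv : (1 + N) ^ k * P ^ k = 1 := by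
    have hcomm : Commute (1 + N) P := (mul_eq_one_comm.1 hPN).trans hPN.symm
    rw [← hcomm.mul_pow, hcomm.eq, hPN, one_pow]
  have h := hgrow (P ^ k *ᵥ w)
  rw [mulVec_mulVec, hinv, one_mulVec] at h
  gcongr
  exact h.trans (by gcongr)

theorem eventually_volume_iUnion_hitSet_le (hn : n ≠ 0) (hPN : P * (1 + N) = 1) (hdet : P.det = 1)
    (hnil : IsNilpotent N) (hs : s ≤ 0) {C ε : ℝ} (hC : 0 ≤ C) (hε : 0 < ε) :
    ∀ᶠ k : ℕ in atTop, volume (⋃ m ≠ 0, hitSet {w | ‖P ^ k *ᵥ w‖ < C * (k : ℝ) ^ s} m) ≤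
      ENNReal.ofReal ((2 * C) ^ n * (k : ℝ) ^ (n * s + ε)) := by
  obtain ⟨d, D, hD, hgrow⟩ := exists_eventually_norm_one_add_pow_mulVec_le hnil
  set L : ℝ := max 1 (2 * (D * C))
  have hL : 1 ≤ L := le_max_left _ _
  have hlog := tendsto_natCast_atTop_atTop.eventually
    ((isLittleO_add_mul_log_pow_rpow (3 + 2 * Real.log L) (2 * d) hε hn).bound one_pos)
  filter_upwards [hgrow, hlog, eventually_ge_atTop 1] with k hk hklog hk1
  have hk1' : (1 : ℝ) ≤ k := by exact_mod_cast hk1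
  have hk0 : (0 : ℝ) < k := by linarith
  have hball (w : Fin n → ℝ) (hw : ‖P ^ k *ᵥ w‖ < C * (k : ℝ) ^ s) : 2 * ‖w‖ ≤ L * (k : ℝ) ^ d :=
    calc 2 * ‖w‖ ≤ 2 * (D * (k : ℝ) ^ d * C) :=
          two_mul_norm_le_of_norm_pow_mulVec_lt hPN (by positivity) hk
            (hw.trans_le (mul_le_of_le_one_right hC (Real.rpow_le_one_of_one_le_of_nonpos hk1' hs)))
      _ = 2 * (D * C) * (k : ℝ) ^ d := by ring
      _ ≤ L * (k : ℝ) ^ d := by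
          gcongr
          exact le_max_right _ _
  have hmeas : MeasurableSet {w : Fin n → ℝ | ‖P ^ k *ᵥ w‖ < C * (k : ℝ) ^ s} :=
    (isOpen_lt (by fun_prop) continuous_const).measurableSet
  calc _ ≤ ENNReal.ofReal ((3 + 2 * Real.log (L * (k : ℝ) ^ d)) ^ n) *
        ENNReal.ofReal ((2 * (C * (k : ℝ) ^ s)) ^ n) :=
        (volume_iUnion_hitSet_le hmeas (one_le_mul_of_one_le_of_one_le hL (one_le_pow₀ hk1'))
          hball).trans (by
            gcongr
            exact volume_norm_mulVec_lt_le (by rw [det_pow, hdet, one_pow]) (by positivity))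
    _ ≤ ENNReal.ofReal ((k : ℝ) ^ ε) * ENNReal.ofReal ((2 * C) ^ n * (k : ℝ) ^ (n * s)) := by
        gcongr
        · rw [one_mul, Real.norm_of_nonneg (Real.rpow_nonneg hk0.le _)] at hklog
          rw [Real.log_mul (by positivity) (by positivity), Real.log_pow]
          exact (le_abs_self _).trans (le_of_eq_of_le (by
            rw [Real.norm_eq_abs]
            ring_nf) hklog)
        · rw [mul_comm (n : ℝ) s, Real.rpow_mul_natCast hk0.le, ← mul_pow, mul_assoc]
    _ = ENNReal.ofReal ((2 * C) ^ n * (k : ℝ) ^ (n * s + ε)) := by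
        rw [← ENNReal.ofReal_mul (by positivity), Real.rpow_add hk0]
        ring_nf

theorem volume_frameBox_inter_hasShortVectors_eq_zero (hn : n ≠ 0) (hPN : P * (1 + N) = 1)
    (hdet : P.det = 1) (hnil : IsNilpotent N) (hs : s < -1 / (n : ℝ)) :
    volume (frameBox n ∩ {A | HasShortVectors P s A}) = 0 := by
  have hn' : (0 : ℝ) < n := by positivity
  have hs0 : s ≤ 0 := (hs.trans (div_neg_of_neg_of_pos neg_one_lt_zero hn')).le
  rw [lt_div_iff₀ hn'] at hs
  refine measure_mono_null (t := ⋃ C : ℕ, {A | ∃ᶠ k : ℕ in atTop,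
      A ∈ ⋃ m ≠ 0, hitSet {w | ‖P ^ k *ᵥ w‖ < C * (k : ℝ) ^ s} m})
    (fun A ⟨hA, C, hC⟩ => Set.mem_iUnion.2 ⟨C, hC.mono fun k ⟨m, hm, hlt⟩ =>
      Set.mem_iUnion₂.2 ⟨m, hm, hA, hlt⟩⟩) (measure_iUnion_null fun C => ?_)
  refine measure_frequently_mem_eq_zero ?_ (eventually_volume_iUnion_hitSet_le hn hPN hdet hnil
    hs0 C.cast_nonneg (show 0 < (-1 - n * s) / 2 by linarith))
  exact (Real.summable_nat_rpow.2 (by linarith)).mul_left _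

end BorelCantelli

section Steinhaus

open scoped Topology

variable {E : Type*} [NormedAddCommGroup E] [NormedSpace ℝ E] [FiniteDimensional ℝ E]
  [MeasurableSpace E] [BorelSpace E] {μ : Measure E} [μ.IsAddHaarMeasure]

theorem eventually_exists_mem_and_apply_mem {D : Set E} (hD : MeasurableSet D) (hD0 : μ D ≠ 0) :
    ∀ᶠ L in 𝓝 (ContinuousLinearMap.id ℝ E), ∃ x ∈ D, L x ∈ D := by
  obtain ⟨K, hKD, hK, hK0⟩ := hD.exists_lt_isCompact (pos_iff_ne_zero.2 hD0)
  obtain ⟨U, hKU, hU, hUK⟩ := K.exists_isOpen_lt_add (μ := μ) hK.measure_lt_top.ne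
    (ENNReal.div_ne_zero.2 ⟨hK0.ne', ENNReal.ofNat_ne_top⟩ : μ K / 2 ≠ 0)
  have hmaps : ∀ᶠ L in 𝓝 (ContinuousLinearMap.id ℝ E), ∀ x ∈ K, L x ∈ U :=
    hK.eventually_forall_of_forall_eventually fun x hx =>
      isBoundedBilinearMap_apply.continuous.continuousAt.eventually_mem (hU.mem_nhds (hKU hx))
  have hdet : ∀ᶠ L in 𝓝 (ContinuousLinearMap.id ℝ E), 1 / 2 < |L.det| :=
    (ContinuousLinearMap.continuous_det.abs.tendsto _).eventually_const_lt (by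
      rw [ContinuousLinearMap.det, ContinuousLinearMap.coe_id, LinearMap.det_id]
      norm_num)
  filter_upwards [hmaps, hdet] with L hLU hLdet
  by_contra! hno
  have hdisj : Disjoint (L '' K) K :=
    Set.disjoint_left.2 (Set.forall_mem_image.2 fun x hx hx' => hno x (hKD hx) (hKD hx'))
  have hhalf : μ K / 2 ≤ μ (L '' K) := by
    rw [Measure.addHaar_image_continuousLinearMap, ENNReal.div_eq_inv_mul, ← ENNReal.ofReal_ofNat,
      ← ENNReal.ofReal_inv_of_pos two_pos, ← one_div]
    gcongr
  refine absurd hUK (not_lt.2 ?_)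
  calc μ K + μ K / 2 ≤ μ K + μ (L '' K) := by gcongr
    _ = μ (L '' K ∪ K) := by rw [measure_union hdisj hK.measurableSet, add_comm]
    _ ≤ μ U := measure_mono (Set.union_subset (Set.image_subset_iff.2 hLU) hKU)

end Steinhaus

section ZeroOneLaw

open scoped Topology

variable {R : Type*} [NormedRing R] [NormedAlgebra ℝ R] [FiniteDimensional ℝ R]
  [MeasurableSpace R] [BorelSpace R] (μ : Measure R) [μ.IsAddHaarMeasure]

theorem quasiMeasurePreserving_mul_left_of_isUnit {u : R} (hu : IsUnit u) :
    Measure.QuasiMeasurePreserving (u * ·) μ μ :=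
  Measure.LinearMap.quasiMeasurePreserving μ (LinearMap.mulLeft ℝ u)
    (LinearMap.isUnit_det _ (hu.map (Algebra.lmul ℝ R))).ne_zero

theorem quasiMeasurePreserving_mul_right_of_isUnit {u : R} (hu : IsUnit u) :
    Measure.QuasiMeasurePreserving (· * u) μ μ := by
  refine Measure.LinearMap.quasiMeasurePreserving μ (LinearMap.mulRight ℝ u) ?_
  rw [Ne, LinearMap.det_eq_zero_iff_ker_ne_bot, not_not, LinearMap.ker_eq_bot]
  exact hu.mul_left_injective

variable {μ}

theorem exists_measure_inter_mul_mem_ne_zero {E F : Set R} (hE : MeasurableSet E)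
    (hF : MeasurableSet F) (hE0 : μ E ≠ 0) (hF0 : μ F ≠ 0) (hFunit : ∀ x ∈ F, IsUnit x) :
    ∃ h, μ (F ∩ {x | h * x ∈ E}) ≠ 0 := by
  by_contra! hnull
  have hmeas : MeasurableSet {p : R × R | ¬(p.2 ∈ F ∧ p.1 * p.2 ∈ E)} :=
    ((measurable_snd hF).inter ((by fun_prop : Measurable fun p : R × R => p.1 * p.2) hE)).compl
  have hae := (Measure.ae_ae_comm (μ := μ) (ν := μ) hmeas).1
    (ae_of_all _ fun h => measure_eq_zero_iff_ae_notMem.1 (hnull h))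
  obtain ⟨x, hxF, hx⟩ := Frequently.and_eventually (frequently_ae_mem_iff.2 hF0) hae |>.exists
  obtain ⟨u, rfl⟩ := hFunit x hxF
  have hnullE := (quasiMeasurePreserving_mul_right_of_isUnit μ u⁻¹.isUnit).ae hx
  refine hE0 (measure_eq_zero_iff_ae_notMem.2 (hnullE.mono fun y hy hyE => hy ⟨hxF, ?_⟩))
  simpa using hyE

theorem exists_mem_mul_mem_of_dense {S : Set R} (hS : Dense S) {E F : Set R}
    (hE : MeasurableSet E) (hF : MeasurableSet F) (hE0 : μ E ≠ 0) (hF0 : μ F ≠ 0)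
    (hEunit : ∀ x ∈ E, IsUnit x) (hFunit : ∀ x ∈ F, IsUnit x) : ∃ q ∈ S, ∃ x ∈ F, q * x ∈ E := by
  obtain ⟨h, hD0⟩ := exists_measure_inter_mul_mem_ne_zero hE hF hE0 hF0 hFunit
  obtain ⟨y, hyF, hyE⟩ := nonempty_of_measure_ne_zero hD0
  obtain ⟨u, rfl⟩ : IsUnit h := by
    obtain ⟨v, rfl⟩ := hFunit y hyF
    exact (Units.isUnit_mul_units h v).1 (hEunit _ hyE)
  have hD : MeasurableSet (F ∩ {x | ↑u * x ∈ E}) :=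
    hF.inter ((by fun_prop : Measurable fun x : R => ↑u * x) hE)
  have hc : Tendsto (fun q => ContinuousLinearMap.mul ℝ R (↑u⁻¹ * q)) (𝓝 (u : R))
      (𝓝 (ContinuousLinearMap.id ℝ R)) := by
    have hcont : Continuous fun q : R => ContinuousLinearMap.mul ℝ R (↑u⁻¹ * q) := by fun_prop
    convert hcont.tendsto (u : R)
    ext
    simp
  obtain ⟨O, hO, hOo, huO⟩ :=
    eventually_nhds_iff.1 (hc.eventually (eventually_exists_mem_and_apply_mem hD hD0))
  obtain ⟨q, hqS, hqO⟩ := hS.exists_mem_open hOo ⟨u, huO⟩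
  obtain ⟨x, hx, -, hqx⟩ := hO q hqO
  exact ⟨q, hqS, x, hx.1, by simpa [mul_assoc] using hqx⟩

end ZeroOneLaw

section RationalInvariance

open scoped Matrix.Norms.Operator

variable {n : ℕ} {P : Matrix (Fin n) (Fin n) ℝ} {s : ℝ}

instance : MeasureSpace (Matrix (Fin n) (Fin n) ℝ) :=
  inferInstanceAs (MeasureSpace (Fin n → Fin n → ℝ))

-- In the next two instances the topology has to be the one coming from the operator norm:
-- instance search does not see through its (definitional) equality with the product topology.
instance : @BorelSpace (Matrix (Fin n) (Fin n) ℝ)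
    PseudoMetricSpace.toUniformSpace.toTopologicalSpace _ :=
  inferInstanceAs (BorelSpace (Fin n → Fin n → ℝ))

instance : @Measure.IsAddHaarMeasure (Matrix (Fin n) (Fin n) ℝ) _
    PseudoMetricSpace.toUniformSpace.toTopologicalSpace _ volume :=
  Measure.pi.isAddHaarMeasure fun _ : Fin n => (volume : Measure (Fin n → ℝ))

theorem quasiMeasurePreserving_matrix_mul {M : Matrix (Fin n) (Fin n) ℝ} (hM : IsUnit M) :
    Measure.QuasiMeasurePreserving (fun A : Fin n → Fin n → ℝ => of.symm (M * of A)) :=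
  quasiMeasurePreserving_mul_left_of_isUnit (volume : Measure (Matrix (Fin n) (Fin n) ℝ)) hM

theorem denseRange_matrix_map_ratCast :
    DenseRange fun q : Matrix (Fin n) (Fin n) ℚ => q.map ((↑) : ℚ → ℝ) :=
  DenseRange.piMap fun _ => DenseRange.piMap fun _ => Rat.denseRange_cast

theorem exists_ratMatrix_mul_mem {E F : Set (Fin n → Fin n → ℝ)} (hE : MeasurableSet E)
    (hF : MeasurableSet F) (hE0 : volume E ≠ 0) (hF0 : volume F ≠ 0)
    (hEunit : ∀ A ∈ E, IsUnit (of A)) (hFunit : ∀ A ∈ F, IsUnit (of A)) :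
    ∃ q : Matrix (Fin n) (Fin n) ℚ, ∃ A ∈ F, of.symm (q.map (↑) * of A) ∈ E := by
  obtain ⟨-, ⟨q, rfl⟩, h⟩ := exists_mem_mul_mem_of_dense
    (μ := (volume : Measure (Matrix (Fin n) (Fin n) ℝ)))
    denseRange_matrix_map_ratCast hE hF hE0 hF0 hEunit hFunit
  exact ⟨q, h⟩

theorem measurableSet_hasShortVectors (P : Matrix (Fin n) (Fin n) ℝ) (s : ℝ) :
    MeasurableSet {A | HasShortVectors P s A} := by
  have hk (C k : ℕ) : MeasurableSet {A : Fin n → Fin n → ℝ |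
      ∃ m : Fin n → ℤ, m ≠ 0 ∧ ‖P ^ k *ᵥ (realVec m ᵥ* of A)‖ < C * (k : ℝ) ^ s} := by
    simp only [← exists_prop, Set.ofPred_exists]
    exact .iUnion fun m => .iUnion fun _ => measurableSet_lt (by fun_prop) measurable_const
  convert MeasurableSet.iUnion fun C => MeasurableSet.measurableSet_limsup (hk C) using 1
  ext A
  simp [HasShortVectors, mem_limsup_iff_frequently_mem]

theorem isUnit_ratCast_matrix_iff {q : Matrix (Fin n) (Fin n) ℚ} :
    IsUnit (q.map ((↑) : ℚ → ℝ)) ↔ IsUnit q := by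
  rw [isUnit_iff_isUnit_det, isUnit_iff_isUnit_det, isUnit_iff_ne_zero, isUnit_iff_ne_zero]
  exact (show (q.map ((↑) : ℚ → ℝ)).det = (q.det : ℝ) from
    ((Rat.castHom ℝ).map_det q).symm) ▸ Rat.cast_ne_zero

/-- Clearing the denominators of `q` turns `m ᵥ* q` into an integer vector. -/
theorem HasShortVectors.of_ratMatrix_mul {q : Matrix (Fin n) (Fin n) ℚ} (hq : IsUnit q)
    {A : Fin n → Fin n → ℝ} (h : HasShortVectors P s (of.symm (q.map (↑) * of A))) :
    HasShortVectors P s A := by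
  obtain ⟨C, hC⟩ := h
  have hden : (0 : ℝ) < q.den := Nat.cast_pos.2 (Nat.pos_of_ne_zero q.den_ne_zero)
  have hnum (m : Fin n → ℤ) :
      realVec (m ᵥ* q.num) = (q.den : ℝ) • (realVec m ᵥ* q.map ((↑) : ℚ → ℝ)) := by
    ext j
    simp only [realVec, vecMul, dotProduct, Pi.smul_apply, smul_eq_mul, Finset.mul_sum, map_apply,
      ← q.num_div_den]
    push_cast
    exact Finset.sum_congr rfl fun i _ => by field_simp
  refine ⟨q.den * C, hC.mono fun k ⟨m, hm, hlt⟩ => ⟨m ᵥ* q.num, fun h0 => ?_, ?_⟩⟩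
  · refine smul_ne_zero hden.ne' (fun hz => realVec_ne_zero hm ?_) ((hnum m).symm.trans ?_)
    · exact vecMul_injective_of_isUnit (isUnit_ratCast_matrix_iff.2 hq)
        (hz.trans (zero_vecMul _).symm)
    · rw [h0]
      ext
      simp [realVec]
  · rw [hnum, smul_vecMul, vecMul_vecMul, mulVec_smul, norm_smul, Real.norm_of_nonneg hden.le,
      Nat.cast_mul, mul_assoc]
    gcongr
    exact hlt

theorem hasShortVectors_ratMatrix_mul_iff {q : Matrix (Fin n) (Fin n) ℚ} (hq : IsUnit q)
    {A : Fin n → Fin n → ℝ} :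
    HasShortVectors P s (of.symm (q.map (↑) * of A)) ↔ HasShortVectors P s A := by
  refine ⟨.of_ratMatrix_mul hq, fun h => .of_ratMatrix_mul (q := q⁻¹) ?_ ?_⟩
  · exact isUnit_nonsing_inv_iff.2 hq
  · have hinv : q⁻¹.map ((↑) : ℚ → ℝ) * q.map (↑) = 1 := by
      rw [← map_mul_ratCast, nonsing_inv_mul _ ((isUnit_iff_isUnit_det q).1 hq)]
      simp
    simpa [← mul_assoc, hinv] using h

theorem ae_of_ratMatrix_invariant {p : (Fin n → Fin n → ℝ) → Prop} (hp : MeasurableSet {A | p A})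
    (hinv : ∀ q : Matrix (Fin n) (Fin n) ℚ, IsUnit q → ∀ A, p (of.symm (q.map (↑) * of A)) → p A)
    (hpos : volume ({A | IsUnit (of A)} ∩ {A | p A}) ≠ 0) :
    ∀ᵐ A : Fin n → Fin n → ℝ, IsUnit (of A) → p A := by
  have hunit : MeasurableSet {A : Fin n → Fin n → ℝ | IsUnit (of A)} := by
    simp only [isUnit_iff_isUnit_det, isUnit_iff_ne_zero]
    exact (show Continuous fun A : Fin n → Fin n → ℝ => (of A).det from
      continuous_id.matrix_det).measurable (measurableSet_singleton 0).compl
  suffices h : volume ({A | IsUnit (of A)} ∩ {A | p A}ᶜ) = 0 from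
    (measure_eq_zero_iff_ae_notMem.1 h).mono fun A hA hu => not_not.1 fun hpA => hA ⟨hu, hpA⟩
  by_contra hneg
  obtain ⟨q, A, ⟨-, hpA⟩, hqA, hpqA⟩ := exists_ratMatrix_mul_mem (hunit.inter hp)
    (hunit.inter hp.compl) hpos hneg (fun A hA => hA.1) fun A hA => hA.1
  exact hpA (hinv q (isUnit_ratCast_matrix_iff.1 (isUnit_of_mul_isUnit_left hqA)) A hpqA)

theorem frameBox_subset_setOf_isUnit : frameBox n ⊆ {A | IsUnit (of A)} := fun A hA => by
  refine vecMul_injective_iff_isUnit.1 ((injective_iff_map_eq_zero (vecMulLinear (of A))).2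
    fun v hv => norm_le_zero_iff.1 ?_)
  have hv' : v ᵥ* of A = 0 := hv
  simpa [hv'] using norm_le_two_mul_norm_vecMul hA v

theorem volume_frameBox_ne_zero : volume (frameBox n) ≠ 0 := by
  rw [frameBox, volume_pi_pi, Finset.prod_ne_zero_iff]
  intro j _
  have : 0 < n := Fin.pos j
  exact (Metric.measure_closedBall_pos _ _ (by positivity)).ne'

theorem ae_hasShortVectors (hn : 2 ≤ n) {N : Matrix (Fin n) (Fin n) ℝ} (hPN : P * (1 + N) = 1)
    (hdet : (1 + N).det = 1) (hnil : IsNilpotent N) (hN0 : N ≠ 0) (hs : -1 / (n : ℝ) < s)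
    (hs0 : s ≤ 0) : ∀ᵐ A : Fin n → Fin n → ℝ, IsUnit (of A) → HasShortVectors P s A :=
  ae_of_ratMatrix_invariant (measurableSet_hasShortVectors P s) (fun _ hq _ => .of_ratMatrix_mul hq)
    ((volume_hasShortVectors_pos hn hPN hdet hnil hN0 hs hs0).trans_le
      (measure_mono (Set.inter_subset_inter_left _ frameBox_subset_setOf_isUnit))).ne'

theorem ae_not_hasShortVectors (hn : n ≠ 0) {N : Matrix (Fin n) (Fin n) ℝ}
    (hPN : P * (1 + N) = 1) (hdet : P.det = 1) (hnil : IsNilpotent N) (hs : s < -1 / (n : ℝ)) :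
    ∀ᵐ A : Fin n → Fin n → ℝ, IsUnit (of A) → ¬HasShortVectors P s A := by
  refine ae_of_ratMatrix_invariant (measurableSet_hasShortVectors P s).compl
    (fun _ hq _ => mt (hasShortVectors_ratMatrix_mul_iff hq).2) fun h0 => ?_
  refine volume_frameBox_ne_zero (n := n) (measure_mono_null (fun A hA => ?_) (measure_union_null
    (volume_frameBox_inter_hasShortVectors_eq_zero hn hPN hdet hnil hs) h0))
  by_cases h : HasShortVectors P s A
  · exact .inl ⟨hA, h⟩
  · exact .inr ⟨frameBox_subset_setOf_isUnit hA, h⟩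

end RationalInvariance

section Transfer

theorem ae_mem_of_forall_ae_smul_mem {Ω G X : Type*} [MeasurableSpace Ω] [MeasurableSpace X]
    [Group G] [MulAction G X] {ν : Measure Ω} [SFinite ν] [NeZero ν] {μ : Measure X} [SFinite μ]
    (hμ : ∀ g : G, Measure.QuasiMeasurePreserving (g • ·) μ μ) {h : Ω → G}
    (hh : Measurable fun p : Ω × X => h p.1 • p.2) {S : Set X} (hS : MeasurableSet S)
    (hae : ∀ x, ∀ᵐ ω ∂ν, h ω • x ∈ S) : ∀ᵐ x ∂μ, x ∈ S := by
  obtain ⟨ω, hω⟩ := ((Measure.ae_ae_comm (μ := ν) (ν := μ) (p := fun ω x => h ω • x ∈ S)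
    (hh hS)).2 (ae_of_all _ hae)).exists
  filter_upwards [(hμ (h ω)⁻¹).ae hω] with x hx
  rwa [smul_inv_smul] at hx

variable {n : ℕ} {P : Matrix (Fin n) (Fin n) ℝ} {p : SLR n} {s : ℝ}

instance : BorelSpace (LatticeSpace n) := ⟨rfl⟩

theorem continuous_coe_SLR : Continuous fun g : SLR n => (g : Matrix (Fin n) (Fin n) ℝ) :=
  continuous_induced_dom

instance : ContinuousMul (SLR n) :=
  ⟨continuous_induced_rng.2 <|
    (continuous_coe_SLR.comp continuous_fst).matrix_mul (continuous_coe_SLR.comp continuous_snd)⟩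

theorem exists_vecOf_eq {g g' : SLR n} (h : (g : LatticeSpace n) = g') {m : Fin n → ℤ}
    (hm : m ≠ 0) : ∃ m' : Fin n → ℤ, m' ≠ 0 ∧ vecOf n g m = vecOf n g' m' := by
  obtain ⟨γ, hγ⟩ := QuotientGroup.eq.1 h.symm
  refine ⟨(γ : Matrix (Fin n) (Fin n) ℤ) *ᵥ m, fun h0 => hm ?_, ?_⟩
  · exact mulVec_injective_of_isUnit ((isUnit_iff_isUnit_det _).2 (by simp))
      (h0.trans (mulVec_zero _).symm)
  · have hg : g = g' * SpecialLinearGroup.map (Int.castRingHom ℝ) γ := by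
      rw [hγ, mul_inv_cancel_left]
    rw [hg, vecOf, vecOf, Matrix.SpecialLinearGroup.coe_mul, ← mulVec_mulVec]
    congr 1
    ext i
    simp [mulVec, dotProduct]

theorem exists_mk_eq_vecOf_iff (p : (Fin n → ℝ) → Prop) {g : SLR n} :
    (∃ g' : SLR n, (g' : LatticeSpace n) = g ∧ ∃ m : Fin n → ℤ, m ≠ 0 ∧ p (vecOf n g' m)) ↔
      ∃ m : Fin n → ℤ, m ≠ 0 ∧ p (vecOf n g m) := by
  refine ⟨fun ⟨g', hg', m, hm, hp⟩ => ?_, fun h => ⟨g, rfl, h⟩⟩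
  obtain ⟨m', hm', heq⟩ := exists_vecOf_eq hg' hm
  exact ⟨m', hm', heq ▸ hp⟩

theorem vecOf_mul (h g : SLR n) (m : Fin n → ℤ) :
    vecOf n (h * g) m = (h : Matrix (Fin n) (Fin n) ℝ) *ᵥ vecOf n g m := by
  rw [vecOf, vecOf, mulVec_mulVec, Matrix.SpecialLinearGroup.coe_mul]

/-- The cusp neighbourhood of unimodular lattices with a nonzero vector of sup norm less than
`r`. -/
def cuspNhd (n : ℕ) (r : ℝ) : Set (LatticeSpace n) :=
  {Λ | ∃ g : SLR n, (g : LatticeSpace n) = Λ ∧ ∃ m : Fin n → ℤ, m ≠ 0 ∧ ‖vecOf n g m‖ < r}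

theorem mk_mem_cuspNhd {g : SLR n} {r : ℝ} :
    (g : LatticeSpace n) ∈ cuspNhd n r ↔ ∃ m : Fin n → ℤ, m ≠ 0 ∧ ‖vecOf n g m‖ < r :=
  exists_mk_eq_vecOf_iff (‖·‖ < r)

theorem isOpen_cuspNhd (r : ℝ) : IsOpen (cuspNhd n r) := by
  have hopen : IsOpen {g : SLR n | ∃ m : Fin n → ℤ, m ≠ 0 ∧ ‖vecOf n g m‖ < r} := by
    simp only [← exists_prop, Set.ofPred_exists]
    refine isOpen_iUnion fun m => isOpen_iUnion fun _ => isOpen_lt ?_ continuous_const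
    exact ((continuous_coe_SLR (n := n)).matrix_mulVec continuous_const).norm
  convert QuotientGroup.isOpenMap_coe (N := latticeGamma n) _ hopen using 1
  ext Λ
  simp only [cuspNhd, Set.mem_image, Set.mem_ofPred_eq, and_comm]

/-- For infinitely many `k`, the lattice `p ^ k Λ` has a nonzero vector of norm `O(k ^ s)`. This is
`HasShortVectors` for lattices, see `hasShortLatticeVectors_mk`. -/
def HasShortLatticeVectors (p : SLR n) (s : ℝ) (Λ : LatticeSpace n) : Prop :=
  ∃ C : ℕ, ∃ᶠ k : ℕ in atTop, p ^ k • Λ ∈ cuspNhd n (C * (k : ℝ) ^ s)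

theorem hasShortLatticeVectors_mk {g : SLR n} :
    HasShortLatticeVectors p s g ↔
      HasShortVectors (p : Matrix (Fin n) (Fin n) ℝ) s
        (of.symm (g : Matrix (Fin n) (Fin n) ℝ)ᵀ) := by
  refine exists_congr fun C => frequently_congr (.of_forall fun k => ?_)
  refine (mk_mem_cuspNhd (g := p ^ k * g)).trans ?_
  simp only [vecOf_mul, Matrix.SpecialLinearGroup.coe_pow, Equiv.apply_symm_apply, vecMul_transpose]
  rfl

theorem measurableSet_hasShortLatticeVectors (p : SLR n) (s : ℝ) :
    MeasurableSet {Λ | HasShortLatticeVectors p s Λ} := by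
  have hk (C k : ℕ) : MeasurableSet ((p ^ k • ·) ⁻¹' cuspNhd n (C * (k : ℝ) ^ s)) :=
    ((isOpen_cuspNhd _).preimage (continuous_const_smul _)).measurableSet
  convert MeasurableSet.iUnion fun C => MeasurableSet.measurableSet_limsup (hk C) using 1
  ext Λ
  simp [HasShortLatticeVectors, mem_limsup_iff_frequently_mem]

theorem HasShortVectors.smul {A : Fin n → Fin n → ℝ} (h : HasShortVectors P s A) {c : ℝ}
    (hc : c ≠ 0) : HasShortVectors P s (c • A) := by
  obtain ⟨C, hC⟩ := h
  refine ⟨⌈‖c‖⌉₊ * C, hC.mono fun k ⟨m, hm, hlt⟩ => ⟨m, hm, ?_⟩⟩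
  rw [← smul_of, Matrix.vecMul_smul, mulVec_smul, norm_smul, Nat.cast_mul, mul_assoc]
  calc ‖c‖ * ‖P ^ k *ᵥ (realVec m ᵥ* of A)‖
      ≤ ⌈‖c‖⌉₊ * ‖P ^ k *ᵥ (realVec m ᵥ* of A)‖ := by gcongr; exact Nat.le_ceil _
    _ < ⌈‖c‖⌉₊ * (C * (k : ℝ) ^ s) := by gcongr

theorem hasShortVectors_smul_iff {A : Fin n → Fin n → ℝ} {c : ℝ} (hc : c ≠ 0) :
    HasShortVectors P s (c • A) ↔ HasShortVectors P s A :=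
  ⟨fun h => by simpa [hc] using h.smul (inv_ne_zero hc), fun h => h.smul hc⟩

/-- The space of positively oriented frames of `ℝⁿ`. -/
abbrev PosFrame (n : ℕ) := {A : Fin n → Fin n → ℝ // 0 < (of A).det}

/-- The matrix with columns `A j`, rescaled to have determinant one. -/
def PosFrame.normalize (hn : n ≠ 0) (A : PosFrame n) : SLR n :=
  ⟨(of A.1).det ^ (-(1 / n : ℝ)) • (of A.1)ᵀ, by
    rw [det_smul, det_transpose, Fintype.card_fin, ← Real.rpow_mul_natCast A.2.le, neg_mul,
      one_div_mul_cancel (Nat.cast_ne_zero.2 hn), Real.rpow_neg_one, inv_mul_cancel₀ A.2.ne']⟩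

theorem PosFrame.continuous_normalize (hn : n ≠ 0) : Continuous (PosFrame.normalize hn) := by
  have hdet : Continuous fun A : PosFrame n => (of A.1).det :=
    (continuous_subtype_val : Continuous fun A : PosFrame n => A.1).matrix_det
  refine continuous_induced_rng.2 ((hdet.rpow_const fun A => .inl A.2.ne').smul ?_)
  exact (continuous_subtype_val : Continuous fun A : PosFrame n => A.1).matrix_transpose

theorem PosFrame.transpose_normalize_mul (hn : n ≠ 0) (A : PosFrame n) (g : SLR n) :
    ((A.normalize hn * g : SLR n) : Matrix (Fin n) (Fin n) ℝ)ᵀ =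
      (of A.1).det ^ (-(1 / n : ℝ)) • ((g : Matrix (Fin n) (Fin n) ℝ)ᵀ * of A.1) := by
  rw [Matrix.SpecialLinearGroup.coe_mul, Matrix.transpose_mul, normalize, transpose_smul,
    transpose_transpose, mul_smul_comm]

theorem isOpen_setOf_det_pos : IsOpen {A : Fin n → Fin n → ℝ | 0 < (of A).det} :=
  isOpen_lt continuous_const continuous_id.matrix_det

/-- A finite measure on the space of positively oriented frames with the same null sets as
Lebesgue measure. -/
def PosFrame.measure (n : ℕ) : Measure (PosFrame n) := volume.toFinite.comap Subtype.val

instance : IsFiniteMeasure (PosFrame.measure n) := by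
  unfold PosFrame.measure
  infer_instance

theorem PosFrame.ae_measure_iff {p : (Fin n → Fin n → ℝ) → Prop} :
    (∀ᵐ A ∂PosFrame.measure n, p A.1) ↔ ∀ᵐ A : Fin n → Fin n → ℝ, 0 < (of A).det → p A := by
  refine (ae_restrict_iff_subtype isOpen_setOf_det_pos.measurableSet).symm.trans ?_
  rw [ae_restrict_iff' isOpen_setOf_det_pos.measurableSet, ae_toFinite]
  rfl

instance : NeZero (PosFrame.measure n) := by
  refine ⟨fun h0 => (isOpen_setOf_det_pos (n := n)).measure_ne_zero volume
    ⟨of.symm 1, by simp⟩ ?_⟩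
  exact measure_eq_zero_iff_ae_notMem.2 (PosFrame.ae_measure_iff.1 (by simp [h0]))

theorem ae_mem_latticeSpace_of_ae_frame (hn : n ≠ 0) {μ : Measure (LatticeSpace n)} [SFinite μ]
    (hμ : ∀ g : SLR n, Measure.QuasiMeasurePreserving (g • ·) μ μ) {S : Set (LatticeSpace n)}
    (hS : MeasurableSet S) {p : (Fin n → Fin n → ℝ) → Prop}
    (hpc : ∀ c : ℝ, c ≠ 0 → ∀ A, p A → p (c • A))
    (hpS : ∀ g : SLR n, p (of.symm (g : Matrix (Fin n) (Fin n) ℝ)ᵀ) → (g : LatticeSpace n) ∈ S)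
    (hp : ∀ᵐ A : Fin n → Fin n → ℝ, IsUnit (of A) → p A) : ∀ᵐ Λ ∂μ, Λ ∈ S := by
  refine ae_mem_of_forall_ae_smul_mem (ν := PosFrame.measure n) hμ
    (h := PosFrame.normalize hn) ?_ hS fun Λ => ?_
  · exact (((PosFrame.continuous_normalize hn).comp continuous_fst).smul continuous_snd).measurable
  obtain ⟨g, rfl⟩ := QuotientGroup.mk_surjective Λ
  have hg : IsUnit (g : Matrix (Fin n) (Fin n) ℝ)ᵀ := (isUnit_iff_isUnit_det _).2 (by simp)
  have hgp : ∀ᵐ A : Fin n → Fin n → ℝ, 0 < (of A).det → p (of.symm (gᵀ * of A)) := by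
    filter_upwards [(quasiMeasurePreserving_matrix_mul hg).ae hp] with A hA hdet
    exact hA (hg.mul ((isUnit_iff_isUnit_det _).2 hdet.ne'.isUnit))
  filter_upwards [PosFrame.ae_measure_iff.2 hgp] with A hA
  refine hpS (A.normalize hn * g) ?_
  rw [PosFrame.transpose_normalize_mul]
  exact hpc _ (Real.rpow_pos_of_pos A.2 _).ne' _ hA

theorem isNilpotent_coe_inv_sub_one (hp : IsNilpotent ((p : Matrix (Fin n) (Fin n) ℝ) - 1)) :
    IsNilpotent (((p⁻¹ : SLR n) : Matrix (Fin n) (Fin n) ℝ) - 1) := by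
  have hpp : ((p⁻¹ : SLR n) : Matrix (Fin n) (Fin n) ℝ) * p = 1 := by
    rw [← Matrix.SpecialLinearGroup.coe_mul, inv_mul_cancel, Matrix.SpecialLinearGroup.coe_one]
  have hcomm : Commute ((p⁻¹ : SLR n) : Matrix (Fin n) (Fin n) ℝ) (1 - p) :=
    (Commute.one_right _).sub_right (hpp.trans (mul_eq_one_comm.1 hpp).symm)
  have heq : ((p⁻¹ : SLR n) : Matrix (Fin n) (Fin n) ℝ) - 1 = (p⁻¹ : SLR n) * (1 - p) := by
    rw [mul_sub, mul_one, hpp]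
  rw [heq]
  exact hcomm.isNilpotent_mul_left (by rwa [← neg_sub, isNilpotent_neg_iff])

theorem coe_mul_one_add_coe_inv_sub_one (p : SLR n) :
    (p : Matrix (Fin n) (Fin n) ℝ) * (1 + (((p⁻¹ : SLR n) : Matrix (Fin n) (Fin n) ℝ) - 1)) =
      1 := by
  rw [add_sub_cancel, ← Matrix.SpecialLinearGroup.coe_mul, mul_inv_cancel,
    Matrix.SpecialLinearGroup.coe_one]

variable {μ : Measure (LatticeSpace n)} [SFinite μ]

theorem ae_hasShortLatticeVectors (hn : 2 ≤ n)
    (hμ : ∀ g : SLR n, Measure.QuasiMeasurePreserving (g • ·) μ μ)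
    (hp : IsNilpotent ((p : Matrix (Fin n) (Fin n) ℝ) - 1)) (hp1 : p ≠ 1)
    (hs : -1 / (n : ℝ) < s) (hs0 : s ≤ 0) : ∀ᵐ Λ ∂μ, HasShortLatticeVectors p s Λ := by
  refine ae_mem_latticeSpace_of_ae_frame (p := HasShortVectors p s) (by omega) hμ
    (measurableSet_hasShortLatticeVectors p s) (fun _ hc _ h => h.smul hc)
    (fun _ => hasShortLatticeVectors_mk.2) ?_
  refine ae_hasShortVectors hn (coe_mul_one_add_coe_inv_sub_one p) ?_
    (isNilpotent_coe_inv_sub_one hp) ?_ hs hs0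
  · rw [add_sub_cancel, Matrix.SpecialLinearGroup.det_coe]
  · exact fun h => hp1 (inv_eq_one.1 (Subtype.ext (sub_eq_zero.1 h)))

theorem ae_not_hasShortLatticeVectors (hn : n ≠ 0)
    (hμ : ∀ g : SLR n, Measure.QuasiMeasurePreserving (g • ·) μ μ)
    (hp : IsNilpotent ((p : Matrix (Fin n) (Fin n) ℝ) - 1)) (hs : s < -1 / (n : ℝ)) :
    ∀ᵐ Λ ∂μ, ¬HasShortLatticeVectors p s Λ := by
  refine ae_mem_latticeSpace_of_ae_frame (p := fun A => ¬HasShortVectors p s A) hn hμ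
    (measurableSet_hasShortLatticeVectors p s).compl (fun _ hc _ h => ?_)
    (fun _ h => ?_) ?_
  · exact (hasShortVectors_smul_iff hc).not.2 h
  · exact mt hasShortLatticeVectors_mk.1 h
  · exact ae_not_hasShortVectors hn (coe_mul_one_add_coe_inv_sub_one p) p.det_coe
      (isNilpotent_coe_inv_sub_one hp) hs

end Transfer

section GrowthExponent

theorem limsup_eq_of_eventually_le_of_frequently_ge {α β : Type*}
    [ConditionallyCompleteLinearOrder β] [DenselyOrdered β] [NoMinOrder β] [NoMaxOrder β]
    {l : Filter α} {f : α → β} {L : β} (hle : ∀ b > L, ∀ᶠ t in l, f t ≤ b)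
    (hge : ∀ b < L, ∃ᶠ t in l, b ≤ f t) : limsup f l = L := by
  obtain ⟨a, ha⟩ := exists_lt L
  obtain ⟨b, hb⟩ := exists_gt L
  refine le_antisymm (le_of_forall_gt_imp_ge_of_dense fun c hc => ?_)
    (le_of_forall_lt_imp_le_of_dense fun c hc => ?_)
  · exact limsup_le_of_le (IsCoboundedUnder.of_frequently_ge (hge a ha)) (hle c hc)
  · exact le_limsup_of_frequently_le (hge c hc) ⟨b, hle b hb⟩

variable {f : ℝ → ℝ} {a b c : ℝ}

theorem eventually_mul_rpow_le_rpow (c : ℝ) (hab : a < b) :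
    ∀ᶠ t : ℝ in atTop, c * t ^ a ≤ t ^ b := by
  filter_upwards [(tendsto_rpow_atTop (sub_pos.2 hab)).eventually_ge_atTop c,
    eventually_gt_atTop 0] with t hc ht
  calc c * t ^ a ≤ t ^ (b - a) * t ^ a := by gcongr
    _ = t ^ b := by rw [← Real.rpow_add ht, sub_add_cancel]

theorem eventually_log_div_log_le (hpos : ∀ᶠ t in atTop, 0 < f t)
    (h : ∀ᶠ t in atTop, f t ≤ c * t ^ a) (hab : a < b) :
    ∀ᶠ t in atTop, Real.log (f t) / Real.log t ≤ b := by
  filter_upwards [hpos, h, eventually_mul_rpow_le_rpow c hab, eventually_gt_atTop 1]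
    with t hft hle hlt ht
  rw [div_le_iff₀ (Real.log_pos ht), ← Real.log_rpow (one_pos.trans ht)]
  exact Real.log_le_log hft (hle.trans hlt)

theorem frequently_le_log_div_log (hc : 0 < c) (h : ∃ᶠ t in atTop, c * t ^ a ≤ f t)
    (hba : b < a) : ∃ᶠ t in atTop, b ≤ Real.log (f t) / Real.log t := by
  refine (h.and_eventually ((eventually_mul_rpow_le_rpow c⁻¹ hba).and
    (eventually_gt_atTop 1))).mono fun t ⟨hle, hlt, ht⟩ => ?_
  have ht0 := one_pos.trans ht
  rw [inv_mul_le_iff₀ hc] at hlt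
  rw [le_div_iff₀ (Real.log_pos ht), ← Real.log_rpow ht0]
  exact Real.log_le_log (Real.rpow_pos_of_pos ht0 b) (hlt.trans hle)

end GrowthExponent

section Alpha

variable {n : ℕ} {Λ : LatticeSpace n} {r : ℝ}

theorem norm_le_eNorm (v : Fin n → ℝ) : ‖v‖ ≤ eNorm v :=
  (pi_norm_le_iff_of_nonneg (norm_nonneg _)).2 fun i =>
    PiLp.norm_apply_le ((WithLp.equiv 2 (Fin n → ℝ)).symm v) i

theorem eNorm_le_sqrt_mul_norm (v : Fin n → ℝ) : eNorm v ≤ √n * ‖v‖ := by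
  have hsum : ∑ i, ‖v i‖ ^ 2 ≤ n * ‖v‖ ^ 2 := by
    simpa only [Finset.card_univ, Fintype.card_fin, nsmul_eq_mul] using
      Finset.sum_le_card_nsmul Finset.univ (fun i => ‖v i‖ ^ 2) (‖v‖ ^ 2)
      fun i _ => by gcongr; exact norm_le_pi_norm v i
  calc eNorm v = √(∑ i, ‖v i‖ ^ 2) := EuclideanSpace.norm_eq _
    _ ≤ √(n * ‖v‖ ^ 2) := Real.sqrt_le_sqrt hsum
    _ = √n * ‖v‖ := by rw [Real.sqrt_mul n.cast_nonneg, Real.sqrt_sq (norm_nonneg v)]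

theorem exists_notMem_cuspNhd (Λ : LatticeSpace n) : ∃ r > 0, Λ ∉ cuspNhd n r := by
  obtain ⟨g, rfl⟩ := QuotientGroup.mk_surjective Λ
  obtain ⟨f, -, hf⟩ := exists_continuous_norm_mulVec_le n n
  obtain ⟨D, hD, hfD⟩ : ∃ D > 0, f ((g⁻¹ : SLR n) : Matrix (Fin n) (Fin n) ℝ) ≤ D :=
    ⟨_, by positivity, le_max_left _ 1⟩
  refine ⟨D⁻¹, inv_pos.2 hD, fun h => ?_⟩
  obtain ⟨m, hm, hlt⟩ := mk_mem_cuspNhd.1 h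
  have hvec : realVec m = ((g⁻¹ : SLR n) : Matrix (Fin n) (Fin n) ℝ) *ᵥ vecOf n g m := by
    rw [← vecOf_mul, inv_mul_cancel, vecOf, Matrix.SpecialLinearGroup.coe_one, one_mulVec]
    rfl
  refine lt_irrefl (1 : ℝ) ?_
  calc 1 ≤ ‖realVec m‖ := by rw [norm_realVec]; exact_mod_cast one_le_norm_of_ne_zero hm
    _ ≤ D * ‖vecOf n g m‖ := by rw [hvec]; exact (hf _ _).trans (by gcongr)
    _ < 1 := by rwa [← lt_inv_mul_iff₀ hD, mul_one]

theorem smul_mem_cuspNhd {g : SLR n} {D : ℝ} (hD : 0 < D)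
    (hg : ∀ v, ‖(g : Matrix (Fin n) (Fin n) ℝ) *ᵥ v‖ ≤ D * ‖v‖) (hΛ : Λ ∈ cuspNhd n r) :
    g • Λ ∈ cuspNhd n (D * r) := by
  obtain ⟨h, rfl, m, hm, hlt⟩ := hΛ
  refine ⟨g * h, rfl, m, hm, ?_⟩
  rw [vecOf_mul]
  exact (hg _).trans_lt (by gcongr)

theorem exists_mem_cuspNhd (hn : n ≠ 0) (Λ : LatticeSpace n) : ∃ r, Λ ∈ cuspNhd n r := by
  have := NeZero.mk hn
  obtain ⟨g, rfl⟩ := QuotientGroup.mk_surjective Λ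
  exact ⟨_, g, rfl, Pi.single 0 1, by simp, lt_add_one _⟩

theorem alpha1_le_of_notMem_cuspNhd (hn : n ≠ 0) (hr : 0 < r) (hΛ : Λ ∉ cuspNhd n r) :
    alpha1 n Λ ≤ 1 / r := by
  obtain ⟨_, g, hg, m, hm, -⟩ := exists_mem_cuspNhd hn Λ
  refine csSup_le ⟨_, g, hg, m, hm, rfl⟩ ?_
  rintro _ ⟨g, hg, m, hm, rfl⟩
  have hle : r ≤ ‖vecOf n g m‖ := not_lt.1 fun hlt => hΛ ⟨g, hg, m, hm, hlt⟩
  exact one_div_le_one_div_of_le hr (hle.trans (norm_le_eNorm _))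

theorem le_alpha1_of_mem_cuspNhd (hΛ : Λ ∈ cuspNhd n r) : 1 / (√n * r) ≤ alpha1 n Λ := by
  obtain ⟨δ, hδ, hΛδ⟩ := exists_notMem_cuspNhd Λ
  have hpos {g : SLR n} (hg : (g : LatticeSpace n) = Λ) {m : Fin n → ℤ} (hm : m ≠ 0) :
      δ ≤ eNorm (vecOf n g m) :=
    (not_lt.1 fun hlt => hΛδ ⟨g, hg, m, hm, hlt⟩).trans (norm_le_eNorm _)
  obtain ⟨g, hg, m, hm, hlt⟩ := hΛ
  have hle : eNorm (vecOf n g m) ≤ √n * r := (eNorm_le_sqrt_mul_norm _).trans (by gcongr)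
  refine (one_div_le_one_div_of_le (hδ.trans_le (hpos hg hm)) hle).trans
    (le_csSup ⟨1 / δ, ?_⟩ ⟨g, hg, m, hm, rfl⟩)
  rintro _ ⟨g', hg', m', hm', rfl⟩
  exact one_div_le_one_div_of_le hδ (hpos hg' hm')

theorem pos_of_mem_cuspNhd (hΛ : Λ ∈ cuspNhd n r) : 0 < r := by
  obtain ⟨_, _, _, _, hlt⟩ := hΛ
  exact (norm_nonneg _).trans_lt hlt

theorem alpha1_pos (hn : n ≠ 0) (Λ : LatticeSpace n) : 0 < alpha1 n Λ := by
  obtain ⟨r, hr⟩ := exists_mem_cuspNhd hn Λ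
  have := pos_of_mem_cuspNhd hr
  have : 0 < (n : ℝ) := by positivity
  exact lt_of_lt_of_le (by positivity) (le_alpha1_of_mem_cuspNhd hr)

end Alpha

section OneParameter

variable {n : ℕ} {u : ℝ → SLR n} {Λ : LatticeSpace n} {t₀ s : ℝ}

theorem apply_zero_of_forall_add {M G : Type*} [AddZeroClass M] [Group G] {u : M → G}
    (hu : ∀ s t, u (s + t) = u s * u t) : u 0 = 1 := by
  simpa using hu 0 0

theorem apply_natCast_mul_of_forall_add {R G : Type*} [Semiring R] [Group G] {u : R → G}
    (hu : ∀ s t, u (s + t) = u s * u t) (k : ℕ) (t : R) : u (k * t) = u t ^ k := by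
  induction k with
  | zero => simp [apply_zero_of_forall_add hu]
  | succ k ih => rw [Nat.cast_succ, add_one_mul, hu, ih, pow_succ]

theorem exists_pos_apply_ne_one {M G : Type*} [AddGroup M] [LinearOrder M] [AddLeftMono M] [Group G]
    {u : M → G} (hu : ∀ s t, u (s + t) = u s * u t) (hne : ∃ t, u t ≠ 1) :
    ∃ t > 0, u t ≠ 1 := by
  obtain ⟨t, ht⟩ := hne
  have hneg : u (-t) * u t = 1 := by rw [← hu, neg_add_cancel, apply_zero_of_forall_add hu]
  rcases lt_trichotomy t 0 with hlt | rfl | hgt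
  · exact ⟨-t, neg_pos.2 hlt, fun h => ht (by simpa [h] using hneg)⟩
  · exact absurd (apply_zero_of_forall_add hu) ht
  · exact ⟨t, hgt, ht⟩

theorem exists_norm_mulVec_le_of_continuous
    (hu : Continuous fun t => (u t : Matrix (Fin n) (Fin n) ℝ)) {K : Set ℝ} (hK : IsCompact K) :
    ∃ D > 0, ∀ t ∈ K, ∀ v, ‖(u t : Matrix (Fin n) (Fin n) ℝ) *ᵥ v‖ ≤ D * ‖v‖ := by
  obtain ⟨f, hf, hle⟩ := exists_continuous_norm_mulVec_le n n
  obtain ⟨D, hD⟩ := hK.bddAbove_image (hf.comp hu).continuousOn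
  refine ⟨max D 1, by positivity, fun t ht v => (hle _ v).trans ?_⟩
  gcongr
  exact (hD ⟨t, ht, rfl⟩).trans (le_max_left _ _)

theorem eventually_alpha1_smul_le (hn : n ≠ 0) (hu : ∀ s t : ℝ, u (s + t) = u s * u t)
    (hu_cont : Continuous fun t => (u t : Matrix (Fin n) (Fin n) ℝ)) (ht₀ : 0 < t₀) (hs : s ≤ 0)
    (h : ¬HasShortLatticeVectors (u t₀) s Λ) :
    ∃ c, ∀ᶠ t in atTop, alpha1 n (u t • Λ) ≤ c * t ^ (-s) := by
  obtain ⟨D, hD, hDu⟩ :=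
    exists_norm_mulVec_le_of_continuous hu_cont (isCompact_Icc (a := -t₀) (b := 0))
  have hev : ∀ᶠ k : ℕ in atTop, u t₀ ^ k • Λ ∉ cuspNhd n ((k : ℝ) ^ s) := by
    simpa using not_frequently.1 (not_exists.1 h 1)
  have hfloor : Tendsto (fun t : ℝ => ⌊t / t₀⌋₊) atTop atTop :=
    tendsto_nat_floor_atTop.comp (tendsto_id.atTop_div_const ht₀)
  refine ⟨D * t₀ ^ s, ?_⟩
  filter_upwards [hfloor.eventually hev, hfloor.eventually (eventually_ge_atTop 1),
    eventually_gt_atTop 0] with t hcusp hk ht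
  set k := ⌊t / t₀⌋₊
  have hk0 : (0 : ℝ) < k := by exact_mod_cast hk
  have hkle : (k : ℝ) ≤ t / t₀ := Nat.floor_le (by positivity)
  have hmem : k * t₀ - t ∈ Set.Icc (-t₀) 0 := by
    have hlek : t / t₀ < k + 1 := Nat.lt_floor_add_one _
    rw [le_div_iff₀ ht₀] at hkle
    rw [div_lt_iff₀ ht₀] at hlek
    constructor <;> linarith
  have hsample : u t₀ ^ k = u (k * t₀ - t) * u t := by
    rw [← hu, sub_add_cancel, apply_natCast_mul_of_forall_add hu]
  have hnot : u t • Λ ∉ cuspNhd n ((k : ℝ) ^ s / D) := fun hΛ => hcusp <| by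
    simpa [hsample, mul_smul, mul_div_cancel₀ _ hD.ne'] using
      smul_mem_cuspNhd hD (hDu _ hmem) hΛ
  calc alpha1 n (u t • Λ) ≤ 1 / ((k : ℝ) ^ s / D) :=
        alpha1_le_of_notMem_cuspNhd hn (by positivity) hnot
    _ = D * (k : ℝ) ^ (-s) := by rw [one_div_div, Real.rpow_neg hk0.le, div_eq_mul_inv]
    _ ≤ D * (t / t₀) ^ (-s) := by gcongr; linarith
    _ = D * t₀ ^ s * t ^ (-s) := by
        rw [Real.div_rpow ht.le ht₀.le, Real.rpow_neg ht₀.le, div_inv_eq_mul]; ring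

theorem frequently_le_alpha1_smul (hn : n ≠ 0) (hu : ∀ s t : ℝ, u (s + t) = u s * u t)
    (ht₀ : 0 < t₀) (h : HasShortLatticeVectors (u t₀) s Λ) :
    ∃ c > 0, ∃ᶠ t in atTop, c * t ^ (-s) ≤ alpha1 n (u t • Λ) := by
  obtain ⟨C, hC⟩ := h
  have htend : Tendsto (fun k : ℕ => (k : ℝ) * t₀) atTop atTop :=
    tendsto_natCast_atTop_atTop.atTop_mul_const ht₀
  have hC0 : (0 : ℝ) < C := by
    obtain ⟨k, hk⟩ := hC.exists
    exact pos_of_mul_pos_left (pos_of_mem_cuspNhd hk) (by positivity)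
  refine ⟨(√n * C * t₀ ^ (-s))⁻¹, by positivity, htend.frequently ?_⟩
  refine (hC.and_eventually (eventually_gt_atTop 0)).mono fun k ⟨hk, hk0⟩ => ?_
  rw [← apply_natCast_mul_of_forall_add hu] at hk
  refine le_of_eq_of_le ?_ (le_alpha1_of_mem_cuspNhd hk)
  rw [Real.mul_rpow k.cast_nonneg ht₀.le, Real.rpow_neg k.cast_nonneg]
  field_simp

theorem limsup_log_alpha1_smul_eq (hn : n ≠ 0) (hu : ∀ s t : ℝ, u (s + t) = u s * u t)
    (hu_cont : Continuous fun t => (u t : Matrix (Fin n) (Fin n) ℝ)) (ht₀ : 0 < t₀) (hs : s < 0)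
    (hlt : ∀ q : ℚ, (q : ℝ) < s → ¬HasShortLatticeVectors (u t₀) q Λ)
    (hgt : ∀ q : ℚ, s < q → (q : ℝ) ≤ 0 → HasShortLatticeVectors (u t₀) q Λ) :
    limsup (fun t : ℝ => Real.log (alpha1 n (u t • Λ)) / Real.log t) atTop = -s := by
  refine limsup_eq_of_eventually_le_of_frequently_ge (fun b hb => ?_) fun b hb => ?_
  · obtain ⟨q, hbq, hqs⟩ := exists_rat_btwn (neg_lt.1 hb)
    obtain ⟨c, hc⟩ :=
      eventually_alpha1_smul_le hn hu hu_cont ht₀ (hqs.trans hs).le (hlt q hqs)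
    exact eventually_log_div_log_le (.of_forall fun t => alpha1_pos hn _) hc (neg_lt.1 hbq)
  · obtain ⟨q, hsq, hq⟩ := exists_rat_btwn (lt_min (lt_neg.1 hb) hs)
    obtain ⟨c, hc, h⟩ := frequently_le_alpha1_smul hn hu ht₀
      (hgt q hsq (hq.trans_le (min_le_right _ _)).le)
    exact frequently_le_log_div_log hc h (lt_neg.1 (hq.trans_le (min_le_left _ _)))

end OneParameter

theorem two_le_of_SLR_ne_one {n : ℕ} {g : SLR n} (hg : g ≠ 1) : 2 ≤ n := by
  by_contra! hn
  have := Fin.subsingleton_iff_le_one.2 (Nat.le_of_lt_succ hn)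
  exact hg (Subsingleton.elim g 1)

theorem quasiMeasurePreserving_smul_of_forall_measure_preimage_eq {n : ℕ}
    {μ : Measure (LatticeSpace n)}
    (hinv : ∀ (g : SLR n) (s : Set (LatticeSpace n)), μ ((fun x => g • x) ⁻¹' s) = μ s)
    (g : SLR n) : Measure.QuasiMeasurePreserving (g • ·) μ μ :=
  ⟨(continuous_const_smul g).measurable, Measure.AbsolutelyContinuous.mk fun s hs h0 => by
    rw [Measure.map_apply (continuous_const_smul g).measurable hs, hinv, h0]⟩

theorem unipotent_logarithm_law_general (n : ℕ) (μ : Measure (LatticeSpace n)) [SFinite μ]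
    (hμ : ∀ g : SLR n, Measure.QuasiMeasurePreserving (g • ·) μ μ)
    (u : ℝ → SLR n) (hu_hom : ∀ s t : ℝ, u (s + t) = u s * u t)
    (hu_cont : Continuous fun t => (u t : Matrix (Fin n) (Fin n) ℝ))
    (hu_unip : ∀ t, IsNilpotent ((u t : Matrix (Fin n) (Fin n) ℝ) - 1))
    (hu_ne : ∃ t, u t ≠ 1) :
    ∀ᵐ Λ ∂μ, Filter.limsup
        (fun t : ℝ => Real.log (alpha1 n (u t • Λ)) / Real.log t) atTop = 1 / (n : ℝ) := by
  obtain ⟨t₀, ht₀, hne⟩ := exists_pos_apply_ne_one hu_hom hu_ne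
  have hn : 2 ≤ n := two_le_of_SLR_ne_one hne
  have hn0 : n ≠ 0 := by omega
  have hlt : ∀ᵐ Λ ∂μ, ∀ q : ℚ, (q : ℝ) < -1 / n → ¬HasShortLatticeVectors (u t₀) q Λ :=
    ae_all_iff.2 fun q => eventually_imp_distrib_left.2
      (ae_not_hasShortLatticeVectors hn0 hμ (hu_unip t₀))
  have hgt : ∀ᵐ Λ ∂μ, ∀ q : ℚ, -1 / (n : ℝ) < q → (q : ℝ) ≤ 0 →
      HasShortLatticeVectors (u t₀) q Λ :=
    ae_all_iff.2 fun q => eventually_imp_distrib_left.2 fun hq => eventually_imp_distrib_left.2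
      (ae_hasShortLatticeVectors hn hμ (hu_unip t₀) hne hq)
  have hs : -1 / (n : ℝ) < 0 := div_neg_of_neg_of_pos neg_one_lt_zero (by positivity)
  filter_upwards [hlt, hgt] with Λ hΛlt hΛgt
  rw [limsup_log_alpha1_smul_eq hn0 hu_hom hu_cont ht₀ hs hΛlt hΛgt, neg_div, neg_neg]

/-- **Logarithm law for unipotent flows.** For a nontrivial one-parameter unipotent subgroup
`{u_t}` of `SL(n,ℝ)`, for almost every unimodular lattice `Λ`,
`limsup_{t→∞} log α₁(u_t Λ)/log t = 1/n`. -/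
theorem unipotent_logarithm_law (n : ℕ) (hn : 2 ≤ n)
    (μ : Measure (LatticeSpace n)) [IsProbabilityMeasure μ]
    (hinv : ∀ (g : SLR n) (s : Set (LatticeSpace n)), μ ((fun x => g • x) ⁻¹' s) = μ s)
    (u : ℝ → SLR n) (hu_hom : ∀ s t : ℝ, u (s + t) = u s * u t)
    (hu_cont : Continuous fun t => (u t : Matrix (Fin n) (Fin n) ℝ))
    (hu_unip : ∀ t, IsNilpotent ((u t : Matrix (Fin n) (Fin n) ℝ) - 1))
    (hu_ne : ∃ t, u t ≠ 1) :
    ∀ᵐ Λ ∂μ, Filter.limsup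
        (fun t : ℝ => Real.log (alpha1 n (u t • Λ)) / Real.log t) atTop = 1 / (n : ℝ) :=
  unipotent_logarithm_law_general n μ
    (quasiMeasurePreserving_smul_of_forall_measure_preimage_eq hinv) u hu_hom hu_cont hu_unip hu_ne
end
end

section
/- Let s be an irrational real number with approximation exponent μ(s) = sup{ν : |s - p/q| < q^{-ν} has infinitely many rational solutions p/q}. Let Λ_s = [[1,0],[s,1]]·ℤ² and h_t = [[1,t],[0,1]]. Then limsup_{|t|→∞} log α₁(h_t Λ_s)/log|t| = 1 - 1/μ(s). -/
open MeasureTheory Filter Matrix Real ENNReal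

noncomputable section

/-- The horocycle matrix `h_t = [[1,t],[0,1]]`. -/
def hMat (t : ℝ) : SLR 2 := ⟨!![1, t; 0, 1], by simp [Matrix.det_fin_two_of]⟩

/-- The matrix `[[1,0],[s,1]]`, so that `gMat s · ℤ² = Λ_s = {(m, sm+n)}`. -/
def gMat (s : ℝ) : SLR 2 := ⟨!![1, 0; s, 1], by simp [Matrix.det_fin_two_of]⟩

/-- The point `Λ_s` of the space of lattices. -/
def LambdaS (s : ℝ) : LatticeSpace 2 := QuotientGroup.mk (gMat s)

/-- The approximation exponent `μ(s)`, valued in `[0,∞]`: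
the sup of all `ν` such that `|s - p/q| < q^{-ν}` has infinitely many rational solutions. -/
def approxExp (s : ℝ) : ℝ≥0∞ :=
  ⨆ (ν : ℝ) (_ : {pq : ℤ × ℕ+ |
    |s - (pq.1 : ℝ) / ((pq.2 : ℕ) : ℝ)| < ((pq.2 : ℕ) : ℝ) ^ (-ν)}.Infinite),
    ENNReal.ofReal ν

/-!
A pair `(q, p)` gives the vector `(q + ty, y)` of `h_t Λ_s`, where `y = sq - p`. Its length is at
least `|y|` and at least `|q| / (1 + |t|)`, so a lower bound `|y| ≥ c |q| ^ (1 - ν)` for all pairs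
forces `α₁(h_t Λ_s) ≪ |t| ^ (1 - 1/ν)`. Conversely, at time `t = -q/y` the vector is `(0, y)`, and
`|y| < q ^ (1 - ν)` says that `q ≤ |t| ^ (1/ν)`, hence `1 / |y| = |t| / q ≥ |t| ^ (1 - 1/ν)`.
The first situation occurs for every `ν > μ(s)`, the second for `ν` arbitrarily close to `μ(s)`.
-/

open Bornology Asymptotics Topology

section UnimodularLattice

variable {n : ℕ}

theorem exists_vecOf_eq_of_mk_eq {g g' : SLR n}
    (h : (QuotientGroup.mk g' : LatticeSpace n) = QuotientGroup.mk g)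
    {m : Fin n → ℤ} (hm : m ≠ 0) :
    ∃ m' : Fin n → ℤ, m' ≠ 0 ∧ vecOf n g' m = vecOf n g m' := by
  obtain ⟨γ, hγ⟩ := QuotientGroup.eq.1 h.symm
  have hg' : g' = g * Matrix.SpecialLinearGroup.map (Int.castRingHom ℝ) γ := by
    rw [hγ, mul_inv_cancel_left]
  have hcast : (fun i => (((γ : Matrix (Fin n) (Fin n) ℤ) *ᵥ m) i : ℝ)) =
      (γ : Matrix (Fin n) (Fin n) ℤ).map (Int.castRingHom ℝ) *ᵥ fun i => (m i : ℝ) := by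
    ext i
    simp [Matrix.mulVec, dotProduct]
  refine ⟨(γ : Matrix (Fin n) (Fin n) ℤ) *ᵥ m,
    fun h0 => hm (Matrix.eq_zero_of_mulVec_eq_zero (by simp) h0), ?_⟩
  rw [vecOf, vecOf, hcast, Matrix.mulVec_mulVec, hg']
  rfl

variable (g : SLR n)

theorem alpha1_mk : alpha1 n (QuotientGroup.mk g) =
    ⨆ m : {m : Fin n → ℤ // m ≠ 0}, 1 / eNorm (vecOf n g m) := by
  refine congrArg sSup (Set.ext fun r => ⟨?_, ?_⟩)
  · rintro ⟨g', hg', m, hm, rfl⟩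
    obtain ⟨m', hm', h⟩ := exists_vecOf_eq_of_mk_eq hg' hm
    exact ⟨⟨m', hm'⟩, by rw [h]⟩
  · rintro ⟨⟨m, hm⟩, rfl⟩
    exact ⟨g, rfl, m, hm, rfl⟩

theorem abs_apply_le_eNorm (v : Fin n → ℝ) (i : Fin n) : |v i| ≤ eNorm v :=
  PiLp.norm_apply_le (WithLp.toLp 2 v) i

theorem one_le_abs_intCast {k : ℤ} (hk : k ≠ 0) : (1 : ℝ) ≤ |(k : ℝ)| := by
  exact_mod_cast Int.one_le_abs hk

theorem exists_pos_le_eNorm_vecOf :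
    ∃ c > 0, ∀ m : Fin n → ℤ, m ≠ 0 → c ≤ eNorm (vecOf n g m) := by
  have hker : LinearMap.ker (Matrix.toEuclideanLin (g : Matrix (Fin n) (Fin n) ℝ)) = ⊥ := by
    refine LinearMap.ker_eq_bot'.2 fun v hv => ?_
    have hgv : (g : Matrix (Fin n) (Fin n) ℝ) *ᵥ v.ofLp = 0 := congrArg WithLp.ofLp hv
    exact WithLp.ofLp_injective 2 (Matrix.eq_zero_of_mulVec_eq_zero (by simp) hgv)
  obtain ⟨K, hK, hanti⟩ := LinearMap.exists_antilipschitzWith _ hker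
  refine ⟨(K : ℝ)⁻¹, by positivity, fun m hm => ?_⟩
  obtain ⟨i, hi⟩ := Function.ne_iff.1 hm
  rw [inv_le_iff_one_le_mul₀' (by exact_mod_cast hK)]
  calc (1 : ℝ) ≤ |(m i : ℝ)| := one_le_abs_intCast hi
    _ ≤ eNorm fun i => (m i : ℝ) := abs_apply_le_eNorm (fun i => (m i : ℝ)) i
    _ ≤ K * eNorm (vecOf n g m) :=
      hanti.le_mul_norm (map_zero _) (WithLp.toLp 2 fun i => (m i : ℝ))

theorem eNorm_vecOf_pos {m : Fin n → ℤ} (hm : m ≠ 0) : 0 < eNorm (vecOf n g m) := by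
  obtain ⟨c, hc, h⟩ := exists_pos_le_eNorm_vecOf g
  exact hc.trans_le (h m hm)

theorem one_div_eNorm_vecOf_le_alpha1 {m : Fin n → ℤ} (hm : m ≠ 0) :
    1 / eNorm (vecOf n g m) ≤ alpha1 n (QuotientGroup.mk g) := by
  obtain ⟨c, hc, h⟩ := exists_pos_le_eNorm_vecOf g
  rw [alpha1_mk]
  refine le_ciSup (f := fun m : {m : Fin n → ℤ // m ≠ 0} => 1 / eNorm (vecOf n g m))
    ⟨1 / c, ?_⟩ ⟨m, hm⟩
  rintro _ ⟨m', rfl⟩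
  exact one_div_le_one_div_of_le hc (h m' m'.2)

theorem alpha1_mk_le {C : ℝ} (hC : 0 ≤ C)
    (h : ∀ m : Fin n → ℤ, m ≠ 0 → 1 / eNorm (vecOf n g m) ≤ C) :
    alpha1 n (QuotientGroup.mk g) ≤ C := by
  rw [alpha1_mk]
  exact Real.iSup_le (fun m => h m m.2) hC

theorem alpha1_pos_s12 [NeZero n] : 0 < alpha1 n (QuotientGroup.mk g) :=
  (one_div_pos.2 (eNorm_vecOf_pos g one_ne_zero)).trans_le
    (one_div_eNorm_vecOf_le_alpha1 g one_ne_zero)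

end UnimodularLattice

section LogGrowth

variable {ι : Type*} {l : Filter ι} {f T : ι → ℝ} {κ : ℝ}

theorem exists_tendsto_eventually_log_div_log_le (hT : Tendsto T l atTop)
    (hf : ∀ᶠ i in l, 0 < f i) (hfT : f =O[l] fun i => T i ^ κ) :
    ∃ u : ι → ℝ, Tendsto u l (𝓝 κ) ∧ ∀ᶠ i in l, Real.log (f i) / Real.log (T i) ≤ u i := by
  obtain ⟨C, hC, hbound⟩ := hfT.exists_pos
  refine ⟨fun i => Real.log C / Real.log (T i) + κ, ?_, ?_⟩
  · simpa using ((Real.tendsto_log_atTop.comp hT).const_div_atTop (Real.log C)).add_const κ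
  · filter_upwards [hf, hbound.bound, hT.eventually_gt_atTop 1] with i hfi hi hTi
    have hTi0 : 0 < T i := one_pos.trans hTi
    rw [Real.norm_of_nonneg hfi.le, Real.norm_of_nonneg (by positivity)] at hi
    have hlog := Real.log_le_log hfi hi
    rw [Real.log_mul hC.ne' (by positivity), Real.log_rpow hTi0] at hlog
    have hlogT : 0 < Real.log (T i) := Real.log_pos hTi
    rwa [div_le_iff₀ hlogT, add_mul, div_mul_cancel₀ _ hlogT.ne']

theorem isBoundedUnder_log_div_log (hT : Tendsto T l atTop) (hf : ∀ᶠ i in l, 0 < f i)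
    (hfT : f =O[l] fun i => T i ^ κ) :
    IsBoundedUnder (· ≤ ·) l fun i => Real.log (f i) / Real.log (T i) := by
  obtain ⟨u, hu, hle⟩ := exists_tendsto_eventually_log_div_log_le hT hf hfT
  exact hu.isBoundedUnder_le.mono_le hle

theorem limsup_log_div_log_le [l.NeBot] (hT : Tendsto T l atTop) (hf : ∀ᶠ i in l, 0 < f i)
    (hfT : f =O[l] fun i => T i ^ κ)
    (hcob : IsCoboundedUnder (· ≤ ·) l fun i => Real.log (f i) / Real.log (T i)) :
    limsup (fun i => Real.log (f i) / Real.log (T i)) l ≤ κ := by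
  obtain ⟨u, hu, hle⟩ := exists_tendsto_eventually_log_div_log_le hT hf hfT
  exact (limsup_le_limsup hle hcob hu.isBoundedUnder_le).trans_eq hu.limsup_eq

theorem frequently_le_log_div_log_s12 (hT : Tendsto T l atTop) (hfT : ∃ᶠ i in l, T i ^ κ ≤ f i) :
    ∃ᶠ i in l, κ ≤ Real.log (f i) / Real.log (T i) := by
  refine (hfT.and_eventually (hT.eventually_gt_atTop 1)).mono fun i ⟨hi, hTi⟩ => ?_
  have hTi0 : 0 < T i := one_pos.trans hTi
  rw [le_div_iff₀ (Real.log_pos hTi), ← Real.log_rpow hTi0]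
  exact Real.log_le_log (by positivity) hi

end LogGrowth

theorem one_div_le_rpow_mul_rpow {c k r T ν : ℝ} (hc : 0 < c) (hk : 0 < k) (hT : 0 ≤ T)
    (hν : 1 ≤ ν) (hkr : k ≤ T * r) (hcr : c * k ^ (1 - ν) ≤ r) :
    1 / r ≤ c ^ (-ν⁻¹) * T ^ (1 - ν⁻¹) := by
  have hν0 : ν ≠ 0 := by positivity
  have hr : 0 < r := lt_of_lt_of_le (by positivity) hcr
  have hpow : c ≤ r ^ ν * T ^ (ν - 1) :=
    calc c = c * k ^ (1 - ν) * k ^ (ν - 1) := by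
          rw [mul_assoc, ← Real.rpow_add hk]
          simp
      _ ≤ r * (T * r) ^ (ν - 1) := by gcongr
      _ = r ^ ν * T ^ (ν - 1) := by
          rw [Real.mul_rpow hT hr.le, Real.rpow_sub_one hr.ne']
          field_simp
  have hroot : c ^ ν⁻¹ ≤ r * T ^ (1 - ν⁻¹) :=
    calc c ^ ν⁻¹ ≤ (r ^ ν * T ^ (ν - 1)) ^ ν⁻¹ := by gcongr
      _ = r * T ^ (1 - ν⁻¹) := by
          rw [Real.mul_rpow (by positivity) (by positivity), Real.rpow_rpow_inv hr.le hν0,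
            ← Real.rpow_mul hT, sub_mul, mul_inv_cancel₀ hν0, one_mul]
  rw [Real.rpow_neg hc.le, div_le_iff₀ hr, inv_mul_eq_div, div_mul_eq_mul_div,
    le_div_iff₀ (by positivity), one_mul, mul_comm]
  exact hroot

section Approximation

variable {s ν : ℝ}

/-- The pairs `(p, q)` with `|s - p / q| < q ^ (-ν)` whose infinitude is tested in `approxExp`.
The fractions need not be in lowest terms. -/
def approxSet (s ν : ℝ) : Set (ℤ × ℕ+) :=
  {pq : ℤ × ℕ+ | |s - (pq.1 : ℝ) / ((pq.2 : ℕ) : ℝ)| < ((pq.2 : ℕ) : ℝ) ^ (-ν)}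

theorem mem_approxSet {p : ℤ} {q : ℕ+} :
    (p, q) ∈ approxSet s ν ↔ |s * (q : ℕ) - p| < ((q : ℕ) : ℝ) ^ (1 - ν) := by
  have hq : (0 : ℝ) < (q : ℕ) := by exact_mod_cast q.pos
  have hsq : s - p / (q : ℕ) = (s * (q : ℕ) - p) / (q : ℕ) := by field_simp
  change |s - p / (q : ℕ)| < ((q : ℕ) : ℝ) ^ (-ν) ↔ _
  rw [hsq, abs_div, abs_of_pos hq, div_lt_iff₀ hq, sub_eq_neg_add 1 ν, Real.rpow_add_one hq.ne']

theorem infinite_approxSet_one (s : ℝ) : (approxSet s 1).Infinite := by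
  refine Set.infinite_of_injective_forall_mem (f := fun q : ℕ+ => (⌊s * (q : ℕ)⌋, q))
    (fun _ _ h => congrArg Prod.snd h) fun q => ?_
  rw [mem_approxSet, sub_self, Real.rpow_zero, Int.self_sub_floor, Int.abs_fract]
  exact Int.fract_lt_one _

theorem tendsto_denominator_approxSet (s ν : ℝ) :
    Tendsto (fun a : approxSet s ν => (a.1.2 : ℕ)) cofinite atTop := by
  rw [← Nat.cofinite_eq_atTop]
  refine .cofinite_of_finite_preimage_singleton fun N => ?_
  set r : ℝ := (N : ℝ) ^ (1 - ν)
  have hfin : ((Int.cast : ℤ → ℝ) ⁻¹' Metric.closedBall (s * N) r).Finite := by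
    rw [Real.closedBall_eq_Icc, Int.preimage_Icc]
    exact Set.finite_Icc _ _
  refine Set.Finite.of_injOn (f := fun a : approxSet s ν => a.1.1) ?_ ?_ hfin
  · rintro ⟨⟨p, q⟩, ha⟩ rfl
    rw [Set.mem_preimage, Metric.mem_closedBall', Real.dist_eq]
    exact (mem_approxSet.1 ha).le
  · rintro ⟨⟨p, q⟩, _⟩ hq ⟨⟨p', q'⟩, _⟩ hq' h
    exact Subtype.ext (Prod.ext h (PNat.coe_injective (hq.trans hq'.symm)))

theorem abs_irrational_mul_sub_pos (hs : Irrational s) (p : ℤ) (q : ℕ+) :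
    0 < |s * (q : ℕ) - p| :=
  abs_pos.2 ((hs.mul_natCast q.ne_zero).sub_intCast p).ne_zero

theorem exists_mul_rpow_le_abs_sub (hs : Irrational s) (hfin : (approxSet s ν).Finite) :
    ∃ c > 0, c ≤ 1 ∧ ∀ (p : ℤ) (q : ℕ+), c * ((q : ℕ) : ℝ) ^ (1 - ν) ≤ |s * (q : ℕ) - p| := by
  have hsmall : ∀ a ∈ approxSet s ν, ∀ᶠ c : ℝ in 𝓝[>] 0,
      c * ((a.2 : ℕ) : ℝ) ^ (1 - ν) ≤ |s * (a.2 : ℕ) - a.1| := by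
    rintro ⟨p, q⟩ -
    have hpos : 0 < |s * (q : ℕ) - p| / ((q : ℕ) : ℝ) ^ (1 - ν) :=
      div_pos (abs_irrational_mul_sub_pos hs p q) (by positivity)
    filter_upwards [Ioc_mem_nhdsGT hpos] with c hc
    exact (le_div_iff₀ (by positivity)).1 hc.2
  obtain ⟨c, hc, hc01⟩ := ((hfin.eventually_all.2 hsmall).and (Ioc_mem_nhdsGT one_pos)).exists
  refine ⟨c, hc01.1, hc01.2, fun p q => ?_⟩
  by_cases hpq : (p, q) ∈ approxSet s ν
  · exact hc _ hpq
  · rw [mem_approxSet, not_lt] at hpq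
    exact (mul_le_of_le_one_left (by positivity) hc01.2).trans hpq

theorem apply_one_ne_zero {m : Fin 2 → ℤ} (hm : m ≠ 0) (h0 : m 0 = 0) : m 1 ≠ 0 :=
  fun h1 => hm (by ext i; fin_cases i <;> simp [h0, h1])

theorem exists_mul_max_rpow_le_abs_add (hs : Irrational s) (hfin : (approxSet s ν).Finite) :
    ∃ c > 0, ∀ m : Fin 2 → ℤ, m ≠ 0 →
      c * max |(m 0 : ℝ)| 1 ^ (1 - ν) ≤ |s * m 0 + m 1| := by
  obtain ⟨c, hc, hc1, h⟩ := exists_mul_rpow_le_abs_sub hs hfin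
  refine ⟨c, hc, fun m hm => ?_⟩
  rcases eq_or_ne (m 0) 0 with h0 | h0
  · simpa [h0] using hc1.trans (one_le_abs_intCast (apply_one_ne_zero hm h0))
  rw [max_eq_left (one_le_abs_intCast h0)]
  have hq : (((m 0).natAbs : ℕ) : ℝ) = |(m 0 : ℝ)| := by rw [Nat.cast_natAbs, Int.cast_abs]
  set q : ℕ+ := ⟨(m 0).natAbs, Int.natAbs_pos.2 h0⟩
  rcases le_total 0 (m 0) with hsign | hsign
  · have habs : |(m 0 : ℝ)| = m 0 := abs_of_nonneg (by exact_mod_cast hsign)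
    simpa [q, hq, habs] using h (-m 1) q
  · have habs : |(m 0 : ℝ)| = -m 0 := abs_of_nonpos (by exact_mod_cast hsign)
    rw [← abs_neg (s * m 0 + m 1), neg_add']
    simpa [q, hq, habs] using h (m 1) q

end Approximation

section Horocycle

variable {s ν : ℝ}

/-- The value `α₁(h_t Λ_s)`, measuring how far the horocycle orbit of `Λ_s` is in the cusp at
time `t`. -/
def horocycleHeight (s t : ℝ) : ℝ := alpha1 2 (QuotientGroup.mk (hMat t * gMat s))

/-- The growth exponent of `α₁` along the horocycle orbit of `Λ_s`, as `|t| → ∞`. -/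
def horocycleExponent (s : ℝ) : ℝ :=
  limsup (fun t => Real.log (horocycleHeight s t) / Real.log |t|) (cobounded ℝ)

theorem vecOf_hMat_mul_gMat (s t : ℝ) (m : Fin 2 → ℤ) :
    vecOf 2 (hMat t * gMat s) m = ![m 0 + t * (s * m 0 + m 1), s * m 0 + m 1] := by
  rw [vecOf, Matrix.SpecialLinearGroup.coe_mul, ← Matrix.mulVec_mulVec]
  ext i
  fin_cases i <;> simp [hMat, gMat, Matrix.mulVec, dotProduct]

theorem eNorm_zero_cons (y : ℝ) : eNorm ![0, y] = |y| := by
  simp [eNorm, EuclideanSpace.norm_eq, Real.sqrt_sq_eq_abs]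

theorem abs_mul_add_le_eNorm_vecOf (s t : ℝ) (m : Fin 2 → ℤ) :
    |s * m 0 + m 1| ≤ eNorm (vecOf 2 (hMat t * gMat s) m) := by
  simpa [vecOf_hMat_mul_gMat] using abs_apply_le_eNorm (vecOf 2 (hMat t * gMat s) m) 1

theorem max_abs_one_le_mul_eNorm_vecOf (s t : ℝ) {m : Fin 2 → ℤ} (hm : m ≠ 0) :
    max |(m 0 : ℝ)| 1 ≤ (1 + |t|) * eNorm (vecOf 2 (hMat t * gMat s) m) := by
  have hx : |m 0 + t * (s * m 0 + m 1)| ≤ eNorm (vecOf 2 (hMat t * gMat s) m) := by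
    simpa [vecOf_hMat_mul_gMat] using abs_apply_le_eNorm (vecOf 2 (hMat t * gMat s) m) 0
  have hy := abs_mul_add_le_eNorm_vecOf s t m
  set r := eNorm (vecOf 2 (hMat t * gMat s) m)
  have hm0 : |(m 0 : ℝ)| ≤ (1 + |t|) * r :=
    calc |(m 0 : ℝ)| = |m 0 + t * (s * m 0 + m 1) - t * (s * m 0 + m 1)| := by
          rw [add_sub_cancel_right]
      _ ≤ |m 0 + t * (s * m 0 + m 1)| + |t| * |s * m 0 + m 1| := by
          rw [← abs_mul]
          exact abs_sub _ _
      _ ≤ r + |t| * r := by gcongr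
      _ = (1 + |t|) * r := by ring
  refine max_le hm0 ?_
  by_cases h0 : m 0 = 0
  · have hr : 1 ≤ r :=
      (one_le_abs_intCast (apply_one_ne_zero hm h0)).trans (by simpa [h0] using hy)
    exact one_le_mul_of_one_le_of_one_le (by simp) hr
  · exact (one_le_abs_intCast h0).trans hm0

theorem horocycleHeight_pos (s t : ℝ) : 0 < horocycleHeight s t :=
  alpha1_pos_s12 _

theorem horocycleHeight_le_one_add_abs (s t : ℝ) : horocycleHeight s t ≤ 1 + |t| :=
  alpha1_mk_le _ (by positivity) fun m hm => by
    rw [div_le_iff₀ (eNorm_vecOf_pos _ hm)]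
    exact (le_max_right _ _).trans (max_abs_one_le_mul_eNorm_vecOf s t hm)

theorem exists_horocycleHeight_le (hs : Irrational s) (hν : 1 ≤ ν)
    (hfin : (approxSet s ν).Finite) :
    ∃ C, ∀ t, horocycleHeight s t ≤ C * (1 + |t|) ^ (1 - ν⁻¹) := by
  obtain ⟨c, hc, h⟩ := exists_mul_max_rpow_le_abs_add hs hfin
  refine ⟨c ^ (-ν⁻¹), fun t => alpha1_mk_le _ (by positivity) fun m hm => ?_⟩
  exact one_div_le_rpow_mul_rpow hc (by positivity) (by positivity) hν
    (max_abs_one_le_mul_eNorm_vecOf s t hm) ((h m hm).trans (abs_mul_add_le_eNorm_vecOf s t m))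

theorem isBigO_horocycleHeight {κ C : ℝ} (hκ : 0 ≤ κ)
    (h : ∀ t, horocycleHeight s t ≤ C * (1 + |t|) ^ κ) :
    horocycleHeight s =O[cobounded ℝ] fun t => |t| ^ κ := by
  have hone : (fun _ : ℝ => (1 : ℝ)) =O[cobounded ℝ] fun t => |t| :=
    (isLittleO_const_id_cobounded (1 : ℝ)).isBigO.abs_right
  have hadd : (fun t : ℝ => 1 + |t|) =O[cobounded ℝ] fun t => |t| := hone.add (isBigO_refl _ _)
  refine IsBigO.trans (.of_bound C (.of_forall fun t => ?_))
    (hadd.rpow hκ (.of_forall fun _ => abs_nonneg _))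
  rw [Real.norm_of_nonneg (horocycleHeight_pos s t).le, Real.norm_of_nonneg (by positivity)]
  exact h t

theorem isBigO_horocycleHeight_one (s : ℝ) :
    horocycleHeight s =O[cobounded ℝ] fun t => |t| ^ (1 : ℝ) :=
  isBigO_horocycleHeight (C := 1) zero_le_one (by simpa using horocycleHeight_le_one_add_abs s)

/-- The time at which the horocycle flow brings the vector `(q, sq - p)` of `Λ_s` to the vertical
axis. -/
def horocycleTime (s : ℝ) (a : ℤ × ℕ+) : ℝ := -((a.2 : ℕ) / (s * (a.2 : ℕ) - a.1))

theorem abs_horocycleTime (s : ℝ) (p : ℤ) (q : ℕ+) :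
    |horocycleTime s (p, q)| = (q : ℕ) / |s * (q : ℕ) - p| := by
  rw [horocycleTime, abs_neg, abs_div, Nat.abs_cast]

theorem one_div_le_horocycleHeight_horocycleTime (hs : Irrational s) (p : ℤ) (q : ℕ+) :
    1 / |s * (q : ℕ) - p| ≤ horocycleHeight s (horocycleTime s (p, q)) := by
  have hy : s * (q : ℕ) - p ≠ 0 := abs_pos.1 (abs_irrational_mul_sub_pos hs p q)
  have hm : ![((q : ℕ) : ℤ), -p] ≠ 0 := fun h => by simpa using congrFun h 0
  have hvec : vecOf 2 (hMat (horocycleTime s (p, q)) * gMat s) ![((q : ℕ) : ℤ), -p] =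
      ![0, s * (q : ℕ) - p] := by
    simp [vecOf_hMat_mul_gMat, horocycleTime, ← sub_eq_add_neg, hy]
  rw [← eNorm_zero_cons, ← hvec]
  exact one_div_eNorm_vecOf_le_alpha1 _ hm

theorem rpow_lt_abs_horocycleTime (hs : Irrational s) {p : ℤ} {q : ℕ+}
    (h : (p, q) ∈ approxSet s ν) : ((q : ℕ) : ℝ) ^ ν < |horocycleTime s (p, q)| := by
  have hq : (0 : ℝ) < (q : ℕ) := by exact_mod_cast q.pos
  rw [abs_horocycleTime, lt_div_iff₀ (abs_irrational_mul_sub_pos hs p q)]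
  calc ((q : ℕ) : ℝ) ^ ν * |s * (q : ℕ) - p|
      < ((q : ℕ) : ℝ) ^ ν * ((q : ℕ) : ℝ) ^ (1 - ν) := by
        gcongr
        exact mem_approxSet.1 h
    _ = (q : ℕ) := by
        rw [← Real.rpow_add hq, add_sub_cancel, Real.rpow_one]

theorem tendsto_horocycleTime (hs : Irrational s) (hν : 0 < ν) :
    Tendsto (fun a : approxSet s ν => horocycleTime s a) cofinite (cobounded ℝ) := by
  rw [← tendsto_norm_atTop_iff_cobounded]
  refine tendsto_atTop_mono (fun a => (rpow_lt_abs_horocycleTime hs a.2).le) ?_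
  exact (tendsto_rpow_atTop hν).comp
    (tendsto_natCast_atTop_atTop.comp (tendsto_denominator_approxSet s ν))

theorem rpow_le_horocycleHeight_horocycleTime (hs : Irrational s) (hν : 0 < ν) {p : ℤ} {q : ℕ+}
    (h : (p, q) ∈ approxSet s ν) :
    |horocycleTime s (p, q)| ^ (1 - ν⁻¹) ≤ horocycleHeight s (horocycleTime s (p, q)) := by
  set t := horocycleTime s (p, q) with ht
  have hq : (0 : ℝ) < (q : ℕ) := by exact_mod_cast q.pos
  have hqt : ((q : ℕ) : ℝ) ^ ν < |t| := rpow_lt_abs_horocycleTime hs h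
  have ht0 : 0 < |t| := (by positivity : (0 : ℝ) < ((q : ℕ) : ℝ) ^ ν).trans hqt
  have hroot : ((q : ℕ) : ℝ) ≤ |t| ^ ν⁻¹ :=
    (Real.le_rpow_inv_iff_of_pos hq.le ht0.le hν).2 hqt.le
  calc |t| ^ (1 - ν⁻¹) = |t| / |t| ^ ν⁻¹ := by rw [Real.rpow_sub ht0, Real.rpow_one]
    _ ≤ |t| / (q : ℕ) := by gcongr
    _ = 1 / |s * (q : ℕ) - p| := by rw [ht, abs_horocycleTime]; field_simp
    _ ≤ horocycleHeight s t := one_div_le_horocycleHeight_horocycleTime hs p q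

theorem frequently_rpow_le_horocycleHeight (hs : Irrational s) (hν : 0 < ν)
    (hinf : (approxSet s ν).Infinite) :
    ∃ᶠ t in cobounded ℝ, |t| ^ (1 - ν⁻¹) ≤ horocycleHeight s t := by
  have : Infinite (approxSet s ν) := hinf.to_subtype
  exact (tendsto_horocycleTime hs hν).frequently
    (.of_forall fun a => rpow_le_horocycleHeight_horocycleTime hs hν a.2)

theorem le_horocycleExponent (hs : Irrational s) (hν : 0 < ν) (hinf : (approxSet s ν).Infinite) :
    1 - ν⁻¹ ≤ horocycleExponent s :=
  le_limsup_of_frequently_le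
    (frequently_le_log_div_log_s12 tendsto_norm_cobounded_atTop
      (frequently_rpow_le_horocycleHeight hs hν hinf))
    (isBoundedUnder_log_div_log tendsto_norm_cobounded_atTop
      (.of_forall (horocycleHeight_pos s)) (isBigO_horocycleHeight_one s))

theorem horocycleExponent_le_of_isBigO (hs : Irrational s) {κ : ℝ}
    (h : horocycleHeight s =O[cobounded ℝ] fun t => |t| ^ κ) : horocycleExponent s ≤ κ :=
  limsup_log_div_log_le tendsto_norm_cobounded_atTop (.of_forall (horocycleHeight_pos s)) h
    (.of_frequently_ge (frequently_le_log_div_log_s12 tendsto_norm_cobounded_atTop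
      (frequently_rpow_le_horocycleHeight hs one_pos (infinite_approxSet_one s))))

theorem horocycleExponent_le (hs : Irrational s) (hν : 1 ≤ ν) (hfin : (approxSet s ν).Finite) :
    horocycleExponent s ≤ 1 - ν⁻¹ := by
  obtain ⟨C, hC⟩ := exists_horocycleHeight_le hs hν hfin
  exact horocycleExponent_le_of_isBigO hs
    (isBigO_horocycleHeight (sub_nonneg.2 (inv_le_one_of_one_le₀ hν)) hC)

end Horocycle

section Exponent

variable {s ν : ℝ}

theorem ofReal_le_approxExp (hinf : (approxSet s ν).Infinite) : ENNReal.ofReal ν ≤ approxExp s :=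
  le_iSup₂_of_le ν hinf le_rfl

theorem one_le_approxExp (s : ℝ) : 1 ≤ approxExp s := by
  simpa using ofReal_le_approxExp (infinite_approxSet_one s)

theorem horocycleExponent_le_one_sub_inv_approxExp (hs : Irrational s) (h : approxExp s ≠ ⊤) :
    horocycleExponent s ≤ 1 - (approxExp s).toReal⁻¹ := by
  have hone : 1 ≤ (approxExp s).toReal := by
    simpa using ENNReal.toReal_mono h (one_le_approxExp s)
  have hlim : Tendsto (fun ν : ℝ => 1 - ν⁻¹) (𝓝[>] (approxExp s).toReal)
      (𝓝 (1 - (approxExp s).toReal⁻¹)) :=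
    ((tendsto_inv₀ (by positivity)).const_sub 1).mono_left nhdsWithin_le_nhds
  refine ge_of_tendsto hlim (eventually_nhdsWithin_of_forall fun ν (hν : _ < ν) => ?_)
  have hfin : (approxSet s ν).Finite := by
    by_contra hinf
    exact hν.not_ge ((ENNReal.ofReal_le_iff_le_toReal h).1 (ofReal_le_approxExp hinf))
  exact horocycleExponent_le hs (hone.trans hν.le) hfin

theorem ofReal_horocycleExponent_le (hs : Irrational s) :
    ENNReal.ofReal (horocycleExponent s) ≤ 1 - (approxExp s)⁻¹ := by
  by_cases h : approxExp s = ⊤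
  · simpa [h] using horocycleExponent_le_of_isBigO hs (isBigO_horocycleHeight_one s)
  · have hpos : 0 < (approxExp s).toReal :=
      ENNReal.toReal_pos (one_pos.trans_le (one_le_approxExp s)).ne' h
    calc ENNReal.ofReal (horocycleExponent s)
        ≤ ENNReal.ofReal (1 - (approxExp s).toReal⁻¹) :=
          ENNReal.ofReal_le_ofReal (horocycleExponent_le_one_sub_inv_approxExp hs h)
      _ = 1 - (approxExp s)⁻¹ := by
          rw [ENNReal.ofReal_sub _ (by positivity), ENNReal.ofReal_one,
            ENNReal.ofReal_inv_of_pos hpos, ENNReal.ofReal_toReal h]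

theorem one_sub_inv_approxExp_le (hs : Irrational s) :
    1 - (approxExp s)⁻¹ ≤ ENNReal.ofReal (horocycleExponent s) := by
  rw [tsub_le_iff_tsub_le, ENNReal.le_inv_iff_le_inv]
  refine iSup₂_le fun ν hinf => ?_
  rcases le_or_gt ν 0 with hν | hν
  · simp [ENNReal.ofReal_of_nonpos hν]
  rw [ENNReal.le_inv_iff_le_inv, ← ENNReal.ofReal_inv_of_pos hν, ← tsub_le_iff_tsub_le,
    ← ENNReal.ofReal_one, ← ENNReal.ofReal_sub _ (by positivity)]
  exact ENNReal.ofReal_le_ofReal (le_horocycleExponent hs hν hinf)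

end Exponent

/-- For irrational `s`, `limsup_{|t|→∞} log α₁(h_t Λ_s)/log|t| = 1 - 1/μ(s)`
(interpreted as `1` when `μ(s) = ∞`). -/
theorem horocycle_diophantine (s : ℝ) (hs : Irrational s) :
    ENNReal.ofReal (Filter.limsup
        (fun t : ℝ => Real.log (alpha1 2 (QuotientGroup.mk (hMat t * gMat s))) / Real.log |t|)
        (Filter.comap (fun t : ℝ => |t|) atTop)) = 1 - (approxExp s)⁻¹ := by
  have hfilter : comap (fun t : ℝ => |t|) atTop = cobounded ℝ := comap_norm_atTop
  rw [hfilter]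
  exact (ofReal_horocycleExponent_le hs).antisymm (one_sub_inv_approxExp_le hs)
end
end
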